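/- arXiv:1101.0182 — 2 statements merged into one kernel-verified Lean document; each statement's English description precedes it below -/
import Mathlib

section
/- There exists an absolute constant K such that the following holds. If p = p(n) > K·log(n)/n, then as n → ∞ through even integers, the randomly colored random graph G_{n,p,n} (with exactly n colors) contains a rainbow Hamilton cycle with high probability. -/
open MeasureTheory Filter

/-- The Bernoulli measure on `Bool` with success probability `p` (clamped into `[0,1]`;
for `0 ≤ p ≤ 1` this is the genuine Bernoulli measure). -/
noncomputable def bernoulliM (p : ℝ) : Measure Bool :=
  (PMF.bernoulli (min (Real.toNNReal p) 1) (min_le_right _ _)).toMeasure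

instance (p : ℝ) : IsProbabilityMeasure (bernoulliM p) := by
  unfold bernoulliM; infer_instance

/-- The uniform probability measure on a finite set (zero measure if the set is empty). -/
noncomputable def uniformOn {α : Type*} [MeasurableSpace α] (s : Finset α) : Measure α :=
  if h : s.Nonempty then (PMF.uniformOfFinset s h).toMeasure else 0

instance {α : Type*} [MeasurableSpace α] (s : Finset α) : SigmaFinite (uniformOn s) := by
  unfold uniformOn
  split
  · infer_instance
  · infer_instance

/-- The Erdős–Rényi random graph `G_{n,p}`: each unordered pair of vertices of `Fin n`
is independently present with probability `p`. -/
noncomputable def gnp (n : ℕ) (p : ℝ) : Measure (Sym2 (Fin n) → Bool) :=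
  Measure.pi fun _ => bernoulliM p

/-- Independent uniformly random colors from `Fin κ` on each potential edge. -/
noncomputable def colorM (n κ : ℕ) : Measure (Sym2 (Fin n) → Fin κ) :=
  Measure.pi fun _ => uniformOn (Finset.univ : Finset (Fin κ))

/-- The randomly colored random graph `G_{n,p,κ}`. -/
noncomputable def coloredGnp (n κ : ℕ) (p : ℝ) :
    Measure ((Sym2 (Fin n) → Bool) × (Sym2 (Fin n) → Fin κ)) :=
  (gnp n p).prod (colorM n κ)

/-- `ω, c` admit a rainbow Hamilton cycle: a cyclic ordering `f` of all `n` vertices such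
that each consecutive edge is present in `ω` and the colors of the `n` cycle edges are
pairwise distinct. -/
def IsRainbowHamCycle {n κ : ℕ} (ω : Sym2 (Fin n) → Bool) (c : Sym2 (Fin n) → Fin κ) : Prop :=
  ∃ f : ZMod n → Fin n, Function.Bijective f ∧
    (∀ i : ZMod n, ω s(f i, f (i + 1)) = true) ∧
    Function.Injective fun i : ZMod n => c s(f i, f (i + 1))

/-!
Write a rainbow Hamilton cycle as a set of colored edges. Counting cyclic orders and colorings
shows that a uniformly random such set contains a given set `G` of colored edges with probability
at most `q ^ #G`, where `q = 36 / (n * κ)`. Hence every cover of the family of rainbow Hamilton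
cycles costs at least `1`, in the sense of Talagrand's expectation threshold.

Park and Pham's minimum fragments then show that a random set containing every colored edge
independently with probability `O(q * log n)` contains a rainbow Hamilton cycle with high
probability: exposing a random set `W`, the minimal remainders `S \ W` of more than half the
maximal size cost little on average, because such a remainder `T` is a subset of a set determined
by `W ∪ T`. The remaining small ones still cost almost `1`, and one iterates.

In that random set an edge may be present in several colors. Since a rainbow cycle uses each edge
in only one color, replacing these independent copies, edge by edge, by a single uniformly colored
edge present with probability `p = κ * O(q * log n) = O(log n / n)` can only increase the
probability of success (McDiarmid's coupling), and the result of the replacement is `G_{n,p,κ}`.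
-/

section RandomSubset

open Finset

variable {α : Type*} [DecidableEq α]

/-- The probability that a random subset of `s`, containing each element independently with
probability `w`, equals `W ⊆ s`. -/
noncomputable def subsetWeight (s : Finset α) (w : ℝ) (W : Finset α) : ℝ :=
  w ^ #W * (1 - w) ^ #(s \ W)

/-- The expectation of `f W` over a random subset `W` of `s` that contains each element
independently with probability `w`. -/
noncomputable def subsetExpect (s : Finset α) (w : ℝ) (f : Finset α → ℝ) : ℝ :=
  ∑ W ∈ s.powerset, subsetWeight s w W * f W

lemma subsetWeight_nonneg (s : Finset α) {w : ℝ} (hw0 : 0 ≤ w) (hw1 : w ≤ 1) (W : Finset α) :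
    0 ≤ subsetWeight s w W :=
  mul_nonneg (pow_nonneg hw0 _) (pow_nonneg (sub_nonneg.2 hw1) _)

lemma subsetExpect_empty (w : ℝ) (f : Finset α → ℝ) : subsetExpect ∅ w f = f ∅ := by
  simp [subsetExpect, subsetWeight]

lemma subsetExpect_insert {x : α} {s : Finset α} (hx : x ∉ s) (w : ℝ) (f : Finset α → ℝ) :
    subsetExpect (insert x s) w f =
      (1 - w) * subsetExpect s w f + w * subsetExpect s w fun W => f (insert x W) := by
  unfold subsetExpect subsetWeight
  rw [sum_powerset_insert hx, mul_sum, mul_sum]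
  congr 1 <;> refine sum_congr rfl fun W hW => ?_ <;>
    have hxW : x ∉ W := fun h => hx (mem_powerset.1 hW h)
  · rw [insert_sdiff_of_notMem _ hxW, card_insert_of_notMem (by simp [hx])]
    ring
  · rw [card_insert_of_notMem hxW, insert_sdiff_insert, sdiff_insert_of_notMem hx]
    ring

lemma subsetExpect_add (s : Finset α) (w : ℝ) (f g : Finset α → ℝ) :
    subsetExpect s w (fun W => f W + g W) = subsetExpect s w f + subsetExpect s w g := by
  simp only [subsetExpect, mul_add, sum_add_distrib]

lemma subsetExpect_const_mul (s : Finset α) (w c : ℝ) (f : Finset α → ℝ) :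
    subsetExpect s w (fun W => c * f W) = c * subsetExpect s w f := by
  simp only [subsetExpect, mul_sum, mul_left_comm]

lemma subsetExpect_sum {ι : Type*} (t : Finset ι) (s : Finset α) (w : ℝ)
    (f : ι → Finset α → ℝ) :
    subsetExpect s w (fun W => ∑ i ∈ t, f i W) = ∑ i ∈ t, subsetExpect s w (f i) := by
  simp only [subsetExpect, mul_sum]
  exact sum_comm

lemma subsetExpect_mono {s : Finset α} {w : ℝ} (hw0 : 0 ≤ w) (hw1 : w ≤ 1)
    {f g : Finset α → ℝ} (h : ∀ W ⊆ s, f W ≤ g W) : subsetExpect s w f ≤ subsetExpect s w g :=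
  sum_le_sum fun W hW =>
    mul_le_mul_of_nonneg_left (h W (mem_powerset.1 hW)) (subsetWeight_nonneg s hw0 hw1 W)

lemma subsetExpect_const (s : Finset α) (w c : ℝ) : subsetExpect s w (fun _ => c) = c := by
  induction s using Finset.induction_on with
  | empty => exact subsetExpect_empty w _
  | insert x s hx ih => rw [subsetExpect_insert hx, ih]; ring

lemma subsetExpect_sum_mem (s : Finset α) (w : ℝ) (g : α → ℝ) :
    subsetExpect s w (fun W => ∑ x ∈ W, g x) = w * ∑ x ∈ s, g x := by
  induction s using Finset.induction_on with
  | empty => simp [subsetExpect_empty]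
  | insert x s hx ih =>
    have hsum : subsetExpect s w (fun W => ∑ y ∈ insert x W, g y) =
        subsetExpect s w fun W => g x + ∑ y ∈ W, g y :=
      sum_congr rfl fun W hW => by
        dsimp only
        rw [sum_insert fun h => hx (mem_powerset.1 hW h)]
    rw [subsetExpect_insert hx, hsum, subsetExpect_add, subsetExpect_const, ih, sum_insert hx]
    ring

lemma subsetExpect_union (s : Finset α) (w v : ℝ) (f : Finset α → ℝ) :
    subsetExpect s w (fun W => subsetExpect s v fun V => f (W ∪ V)) =
      subsetExpect s (w + v - w * v) f := by
  induction s using Finset.induction_on generalizing f with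
  | empty => simp [subsetExpect_empty]
  | insert x s hx ih =>
    simp only [subsetExpect_insert hx, subsetExpect_add, subsetExpect_const_mul, union_insert,
      insert_union, insert_idem, ih, ih fun W => f (insert x W)]
    ring

lemma subsetExpect_mono_prob (s : Finset α) {w w' : ℝ} (hw0 : 0 ≤ w) (hww' : w ≤ w')
    (hw'1 : w' ≤ 1) {f : Finset α → ℝ} (hf : Monotone f) :
    subsetExpect s w f ≤ subsetExpect s w' f := by
  obtain rfl | hlt := hww'.eq_or_lt
  · rfl
  have hpos : 0 < 1 - w := by linarith
  set v := (w' - w) / (1 - w) with hv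
  have hv0 : 0 ≤ v := div_nonneg (by linarith) hpos.le
  have hv1 : v ≤ 1 := (div_le_one hpos).2 (by linarith)
  have hw' : w' = w + v - w * v := by rw [hv]; field_simp; ring
  rw [hw', ← subsetExpect_union]
  refine subsetExpect_mono hw0 (hww'.trans hw'1) fun W _ => ?_
  calc f W = subsetExpect s v fun _ => f W := (subsetExpect_const s v _).symm
    _ ≤ subsetExpect s v fun V => f (W ∪ V) :=
      subsetExpect_mono hv0 hv1 fun V _ => hf subset_union_left

lemma subsetExpect_disjoint_union {s t : Finset α} (h : Disjoint s t) (w : ℝ)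
    (f : Finset α → ℝ) :
    subsetExpect (s ∪ t) w f =
      subsetExpect t w fun W => subsetExpect s w fun V => f (W ∪ V) := by
  induction t using Finset.induction_on generalizing f with
  | empty => simp [subsetExpect_empty]
  | insert x t hx ih =>
    rw [disjoint_insert_right] at h
    rw [union_insert, subsetExpect_insert (by simp [hx, h.1]), subsetExpect_insert hx,
      ih h.2, ih h.2]
    simp only [insert_union]

end RandomSubset

section ParkPham

open Finset

variable {α : Type*}

open Classical in
/-- The indicator function of the family of sets containing a member of `H`. -/
noncomputable def upIndicator (H : Finset (Finset α)) (W : Finset α) : ℝ :=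
  if ∃ S ∈ H, S ⊆ W then 1 else 0

lemma upIndicator_nonneg (H : Finset (Finset α)) (W : Finset α) : 0 ≤ upIndicator H W := by
  unfold upIndicator; positivity

lemma upIndicator_eq_one {H : Finset (Finset α)} {S W : Finset α} (hS : S ∈ H) (hSW : S ⊆ W) :
    upIndicator H W = 1 :=
  if_pos ⟨S, hS, hSW⟩

lemma upIndicator_le_upIndicator {H H' : Finset (Finset α)} {W W' : Finset α}
    (h : ∀ S ∈ H, S ⊆ W → ∃ S' ∈ H', S' ⊆ W') : upIndicator H W ≤ upIndicator H' W' := by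
  by_cases hW : ∃ S ∈ H, S ⊆ W
  · obtain ⟨S, hS, hSW⟩ := hW
    obtain ⟨S', hS', hSW'⟩ := h S hS hSW
    rw [upIndicator_eq_one hS hSW, upIndicator_eq_one hS' hSW']
  · exact (if_neg hW).trans_le (upIndicator_nonneg H' W')

lemma upIndicator_monotone (H : Finset (Finset α)) : Monotone (upIndicator H) :=
  fun _ _ hWW' => upIndicator_le_upIndicator fun S hS hSW => ⟨S, hS, hSW.trans hWW'⟩

/-- Every cover `𝒢` of `H`, meaning that each member of `H` contains a member of `𝒢`, has cost
`∑ T ∈ 𝒢, q ^ #T` at least `a`. -/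
def CoverCostAtLeast (q : ℝ) (H : Finset (Finset α)) (a : ℝ) : Prop :=
  ∀ 𝒢 : Finset (Finset α), (∀ S ∈ H, ∃ T ∈ 𝒢, T ⊆ S) → a ≤ ∑ T ∈ 𝒢, q ^ #T

open Classical in
/-- A choice of a member of `H` contained in `Z`, with junk value `∅` if there is none. -/
noncomputable def chosenMember (H : Finset (Finset α)) (Z : Finset α) : Finset α :=
  if h : ∃ S ∈ H, S ⊆ Z then h.choose else ∅

lemma card_chosenMember_le {H : Finset (Finset α)} {l : ℕ} (hH : ∀ S ∈ H, #S ≤ l)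
    (Z : Finset α) : #(chosenMember H Z) ≤ l := by
  unfold chosenMember
  split_ifs with h
  · exact hH _ h.choose_spec.1
  · exact Nat.zero_le l

lemma sum_le_sum_of_injOn {ι κ : Type*} {s : Finset ι} {t : Finset κ} {f : ι → ℝ} {g : κ → ℝ}
    (e : ι → κ) (hmaps : ∀ i ∈ s, e i ∈ t) (hinj : Set.InjOn e s)
    (hle : ∀ i ∈ s, f i ≤ g (e i)) (hg : ∀ k ∈ t, 0 ≤ g k) : ∑ i ∈ s, f i ≤ ∑ k ∈ t, g k := by
  classical
  calc ∑ i ∈ s, f i ≤ ∑ i ∈ s, g (e i) := sum_le_sum hle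
    _ = ∑ k ∈ s.image e, g k := (sum_image hinj).symm
    _ ≤ ∑ k ∈ t, g k :=
      sum_le_sum_of_subset_of_nonneg (image_subset_iff.2 hmaps) fun k hk _ => hg k hk

lemma sum_powerset_pos_card_pow (S : Finset α) (r : ℝ) :
    ∑ T ∈ S.powerset with 0 < #T, r ^ #T = (1 + r) ^ #S - 1 := by
  classical
  have hne : {T ∈ S.powerset | 0 < #T} = S.powerset.erase ∅ := by
    ext T; simp [card_pos, nonempty_iff_ne_empty, and_comm]
  have hall : ∑ T ∈ S.powerset, r ^ #T = (1 + r) ^ #S := by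
    simpa [add_comm] using sum_pow_mul_eq_add_pow r 1 S
  rw [hne, sum_erase_eq_sub (empty_mem_powerset S), hall]
  simp

lemma sum_powerset_lt_card_pow_le {S : Finset α} {s : ℕ} (hS : #S ≤ 2 * s) {r : ℝ} (hr0 : 0 ≤ r)
    (hr1 : r ≤ 1) : ∑ T ∈ S.powerset with s < #T, r ^ #T ≤ (4 * r) ^ s :=
  calc ∑ T ∈ S.powerset with s < #T, r ^ #T
      ≤ ∑ T ∈ S.powerset with s < #T, r ^ s :=
        sum_le_sum fun _ hT => pow_le_pow_of_le_one hr0 hr1 (mem_filter.1 hT).2.le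
    _ ≤ ∑ _ ∈ S.powerset, r ^ s :=
        sum_le_sum_of_subset_of_nonneg (filter_subset _ _) fun _ _ _ => pow_nonneg hr0 s
    _ = 2 ^ #S * r ^ s := by rw [sum_const, card_powerset, nsmul_eq_mul]; norm_cast
    _ ≤ 2 ^ (2 * s) * r ^ s := by gcongr; norm_num
    _ = (4 * r) ^ s := by rw [pow_mul, ← mul_pow]; norm_num

variable [DecidableEq α]

/-- An indexed family of sets is `q`-spread if a uniformly random member of it contains any
given set `G` with probability at most `q ^ #G`. -/
def IsSpread {ι : Type*} [Fintype ι] (q : ℝ) (F : ι → Finset α) : Prop :=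
  ∀ G : Finset α, (#{i | G ⊆ F i} : ℝ) ≤ q ^ #G * Fintype.card ι

lemma IsSpread.coverCostAtLeast_one {ι : Type*} [Fintype ι] [Nonempty ι] {q : ℝ}
    {F : ι → Finset α} (hF : IsSpread q F) : CoverCostAtLeast q (univ.image F) 1 := by
  classical
  intro 𝒢 h𝒢
  have hcover : (univ : Finset ι) ⊆ 𝒢.biUnion fun G => {i | G ⊆ F i} := fun i _ => by
    simpa using h𝒢 (F i) (mem_image_of_mem F (mem_univ i))
  have hcard : (0 : ℝ) < Fintype.card ι := mod_cast Fintype.card_pos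
  refine le_of_mul_le_mul_right ?_ hcard
  calc 1 * (Fintype.card ι : ℝ) ≤ ∑ G ∈ 𝒢, (#{i | G ⊆ F i} : ℝ) := by
        rw [one_mul, ← card_univ]
        exact_mod_cast (card_le_card hcover).trans card_biUnion_le
    _ ≤ ∑ G ∈ 𝒢, q ^ #G * Fintype.card ι := sum_le_sum fun G _ => hF G
    _ = (∑ G ∈ 𝒢, q ^ #G) * Fintype.card ι := (sum_mul ..).symm

open Classical in
/-- The minimal fragments of `H` relative to `W`: the inclusion-minimal sets among the
remainders `S \ W` of the members `S` of `H`. -/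
noncomputable def minFragments (H : Finset (Finset α)) (W : Finset α) : Finset (Finset α) :=
  {T ∈ H.image (· \ W) | Minimal (· ∈ H.image (· \ W)) T}

lemma mem_minFragments {H : Finset (Finset α)} {W T : Finset α} :
    T ∈ minFragments H W ↔ Minimal (· ∈ H.image (· \ W)) T := by
  simp only [minFragments, mem_filter, and_iff_right_iff_imp]
  exact Minimal.prop

lemma exists_sdiff_eq_of_mem_minFragments {H : Finset (Finset α)} {W T : Finset α}
    (hT : T ∈ minFragments H W) : ∃ S ∈ H, S \ W = T :=
  mem_image.1 (mem_minFragments.1 hT).prop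

lemma disjoint_of_mem_minFragments {H : Finset (Finset α)} {W T : Finset α}
    (hT : T ∈ minFragments H W) : Disjoint W T := by
  obtain ⟨S, -, rfl⟩ := exists_sdiff_eq_of_mem_minFragments hT
  exact disjoint_sdiff

lemma exists_minFragment_subset {H : Finset (Finset α)} (W : Finset α) {S : Finset α}
    (hS : S ∈ H) : ∃ T ∈ minFragments H W, T ⊆ S := by
  obtain ⟨T, hTS, hT⟩ :=
    (H.image (· \ W)).finite_toSet.exists_le_minimal (mem_image_of_mem (· \ W) hS)
  exact ⟨T, mem_minFragments.2 hT, hTS.trans sdiff_subset⟩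

-- Knowing `W ∪ T` alone thus confines `T` to a set that does not depend on `W`.
lemma subset_chosenMember_of_mem_minFragments {H : Finset (Finset α)} {W T : Finset α}
    (hT : T ∈ minFragments H W) : T ⊆ chosenMember H (W ∪ T) := by
  have hex : ∃ S ∈ H, S ⊆ W ∪ T := by
    obtain ⟨S, hS, hST⟩ := exists_sdiff_eq_of_mem_minFragments hT
    exact ⟨S, hS, sdiff_le_iff.1 hST.subset⟩
  rw [chosenMember, dif_pos hex]
  obtain ⟨hmem, hsub⟩ := hex.choose_spec
  exact ((mem_minFragments.1 hT).le_of_le (mem_image_of_mem _ hmem) (sdiff_le_iff.2 hsub)).trans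
    sdiff_subset

lemma upIndicator_filter_minFragments_le (H : Finset (Finset α)) (W V : Finset α)
    (P : Finset α → Prop) [DecidablePred P] :
    upIndicator {T ∈ minFragments H W | P T} V ≤ upIndicator H (W ∪ V) := by
  refine upIndicator_le_upIndicator fun T hT hTV => ?_
  obtain ⟨S, hS, rfl⟩ := exists_sdiff_eq_of_mem_minFragments (mem_filter.1 hT).1
  exact ⟨S, hS, sdiff_le_iff.1 hTV⟩

lemma CoverCostAtLeast.small_minFragments {q a : ℝ} {H : Finset (Finset α)} (hq : 0 ≤ q)
    (ha : CoverCostAtLeast q H a) (W : Finset α) (s : ℕ) :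
    CoverCostAtLeast q {T ∈ minFragments H W | #T ≤ s}
      (a - ∑ T ∈ minFragments H W with s < #T, q ^ #T) := by
  intro 𝒢 h𝒢
  have hcover : ∀ S ∈ H, ∃ T ∈ {T ∈ minFragments H W | s < #T} ∪ 𝒢, T ⊆ S := by
    intro S hS
    obtain ⟨T, hT, hTS⟩ := exists_minFragment_subset W hS
    rcases le_or_gt #T s with hsmall | hlarge
    · obtain ⟨T', hT', hTT'⟩ := h𝒢 T (mem_filter.2 ⟨hT, hsmall⟩)
      exact ⟨T', mem_union_right _ hT', hTT'.trans hTS⟩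
    · exact ⟨T, mem_union_left _ (mem_filter.2 ⟨hT, hlarge⟩), hTS⟩
  have hinter : 0 ≤ ∑ T ∈ {T ∈ minFragments H W | s < #T} ∩ 𝒢, q ^ #T :=
    sum_nonneg fun _ _ => pow_nonneg hq _
  linarith [ha _ hcover, sum_union_inter (s₁ := {T ∈ minFragments H W | s < #T}) (s₂ := 𝒢)
    (f := fun T => q ^ #T)]

lemma subsetWeight_mul_pow_le {s W T : Finset α} {q w : ℝ} (hq : 0 ≤ q) (hw : 0 < w)
    (hw1 : w ≤ 1) (hWT : Disjoint W T) :
    subsetWeight s w W * q ^ #T ≤ subsetWeight s w (W ∪ T) * (q / w) ^ #T := by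
  have hmono : (1 - w) ^ #(s \ W) ≤ (1 - w) ^ #(s \ (W ∪ T)) :=
    pow_le_pow_of_le_one (by linarith) (by linarith)
      (card_le_card (sdiff_subset_sdiff le_rfl subset_union_left))
  calc subsetWeight s w W * q ^ #T = w ^ #W * q ^ #T * (1 - w) ^ #(s \ W) := by
        unfold subsetWeight; ring
    _ ≤ w ^ #W * q ^ #T * (1 - w) ^ #(s \ (W ∪ T)) := by gcongr
    _ = subsetWeight s w (W ∪ T) * (q / w) ^ #T := by
        rw [subsetWeight, card_union_of_disjoint hWT, pow_add, div_pow]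
        field_simp

variable [Fintype α]

-- A pair `(W, T)` of a set and a fragment is recovered from `(W ∪ T, T)`, so the sum over `W`
-- is bounded by a sum over `Z = W ∪ T`, where `T` ranges over subsets of `chosenMember H Z`.
lemma subsetExpect_sum_large_minFragments_le {H : Finset (Finset α)} {l s : ℕ}
    (hH : ∀ S ∈ H, #S ≤ l) {q w B : ℝ} (hq : 0 ≤ q) (hw : 0 < w) (hw1 : w ≤ 1)
    (hB : ∀ S : Finset α, #S ≤ l → ∑ T ∈ S.powerset with s < #T, (q / w) ^ #T ≤ B) :
    subsetExpect univ w (fun W => ∑ T ∈ minFragments H W with s < #T, q ^ #T) ≤ B := by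
  calc subsetExpect univ w (fun W => ∑ T ∈ minFragments H W with s < #T, q ^ #T)
      = ∑ P ∈ (univ : Finset α).powerset.sigma fun W => {T ∈ minFragments H W | s < #T},
          subsetWeight univ w P.1 * q ^ #P.2 := by
        simp only [subsetExpect, mul_sum, sum_sigma]
    _ ≤ ∑ P ∈ (univ : Finset α).powerset.sigma
            fun Z => {T ∈ (chosenMember H Z).powerset | s < #T},
          subsetWeight univ w P.1 * (q / w) ^ #P.2 := by
        refine sum_le_sum_of_injOn (fun P => ⟨P.1 ∪ P.2, P.2⟩) ?maps ?inj ?le ?nonneg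
        case maps =>
          rintro ⟨W, T⟩ hP
          simp only [mem_sigma, mem_filter, mem_powerset, subset_univ, true_and] at hP ⊢
          exact ⟨subset_chosenMember_of_mem_minFragments hP.1, hP.2⟩
        case inj =>
          rintro ⟨W, T⟩ hP ⟨W', T'⟩ hP' heq
          simp only [mem_coe, mem_sigma, mem_filter, Sigma.mk.injEq, heq_eq_eq] at hP hP' heq
          obtain ⟨hunion, rfl⟩ := heq
          rw [← union_sdiff_cancel_right (disjoint_of_mem_minFragments hP.2.1), hunion,
            union_sdiff_cancel_right (disjoint_of_mem_minFragments hP'.2.1)]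
        case le =>
          rintro ⟨W, T⟩ hP
          simp only [mem_sigma, mem_filter] at hP
          exact subsetWeight_mul_pow_le hq hw hw1 (disjoint_of_mem_minFragments hP.2.1)
        case nonneg =>
          exact fun P _ => mul_nonneg (subsetWeight_nonneg _ hw.le hw1 _)
            (pow_nonneg (div_nonneg hq hw.le) _)
    _ = subsetExpect univ w fun Z => ∑ T ∈ (chosenMember H Z).powerset with s < #T,
          (q / w) ^ #T := by
        simp only [subsetExpect, mul_sum, sum_sigma]
    _ ≤ subsetExpect univ w fun _ => B :=
        subsetExpect_mono hw.le hw1 fun Z _ => hB _ (card_chosenMember_le hH Z)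
    _ = B := subsetExpect_const ..

/-- The conclusion of the Park–Pham theorem on the ground set `α`, with an error term: if `H`
consists of sets of size at most `l` and every cover of `H` costs at least `a`, then a random set
of density `w` contains a member of `H` with probability at least `a - ε`. -/
def CapturesBounded (α : Type*) [DecidableEq α] [Fintype α] (q : ℝ) (l : ℕ) (w ε : ℝ) : Prop :=
  ∀ H : Finset (Finset α), (∀ S ∈ H, #S ≤ l) → ∀ a, CoverCostAtLeast q H a →
    a - ε ≤ subsetExpect univ w (upIndicator H)

namespace CapturesBounded

lemma zero (q : ℝ) {w : ℝ} (hw0 : 0 ≤ w) (hw1 : w ≤ 1) : CapturesBounded α q 0 w 0 := by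
  intro H hH a ha
  rw [sub_zero]
  obtain rfl | ⟨S, hS⟩ := H.eq_empty_or_nonempty
  · calc a ≤ 0 := by simpa using ha ∅ (by simp)
      _ = subsetExpect univ w fun _ => 0 := (subsetExpect_const ..).symm
      _ ≤ subsetExpect univ w (upIndicator ∅) :=
        subsetExpect_mono hw0 hw1 fun W _ => upIndicator_nonneg ∅ W
  · have hS0 : S = ∅ := by simpa using hH S hS
    have hone : upIndicator H = fun _ => 1 :=
      funext fun W => upIndicator_eq_one hS (hS0 ▸ empty_subset W)
    rw [hone, subsetExpect_const]
    simpa using ha {∅} (by simp)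

lemma mono {q : ℝ} {l : ℕ} {w w' ε ε' : ℝ} (h : CapturesBounded α q l w ε) (hw0 : 0 ≤ w)
    (hww' : w ≤ w') (hw'1 : w' ≤ 1) (hε : ε ≤ ε') : CapturesBounded α q l w' ε' :=
  fun H hH a ha => by
    linarith [h H hH a ha, subsetExpect_mono_prob univ hw0 hww' hw'1 (upIndicator_monotone H)]

lemma step {l s : ℕ} {q w v B ε : ℝ} (h : CapturesBounded α q s v ε) (hq : 0 ≤ q) (hw : 0 < w)
    (hw1 : w ≤ 1) (hv0 : 0 ≤ v) (hv1 : v ≤ 1)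
    (hB : ∀ S : Finset α, #S ≤ l → ∑ T ∈ S.powerset with s < #T, (q / w) ^ #T ≤ B) :
    CapturesBounded α q l (w + v - w * v) (ε + B) := by
  intro H hH a ha
  let largeCost (W : Finset α) : ℝ := ∑ T ∈ minFragments H W with s < #T, q ^ #T
  have hcapture : ∀ W, (a - ε) + (-1) * largeCost W ≤
      subsetExpect univ v fun V => upIndicator H (W ∪ V) := fun W =>
    calc (a - ε) + (-1) * largeCost W = a - largeCost W - ε := by ring
      _ ≤ subsetExpect univ v (upIndicator {T ∈ minFragments H W | #T ≤ s}) :=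
        h _ (fun T hT => (mem_filter.1 hT).2) _ (ha.small_minFragments hq W s)
      _ ≤ subsetExpect univ v fun V => upIndicator H (W ∪ V) :=
        subsetExpect_mono hv0 hv1 fun V _ => upIndicator_filter_minFragments_le H W V _
  have hlarge : subsetExpect univ w largeCost ≤ B :=
    subsetExpect_sum_large_minFragments_le hH hq hw hw1 hB
  calc a - (ε + B) ≤ (a - ε) + (-1) * subsetExpect univ w largeCost := by linarith
    _ = subsetExpect univ w fun W => (a - ε) + (-1) * largeCost W := by
      rw [subsetExpect_add, subsetExpect_const, subsetExpect_const_mul]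
    _ ≤ subsetExpect univ w fun W => subsetExpect univ v fun V => upIndicator H (W ∪ V) :=
      subsetExpect_mono hw.le hw1 fun W _ => hcapture W
    _ = subsetExpect univ (w + v - w * v) (upIndicator H) := subsetExpect_union ..

lemma base {q : ℝ} (hq : 0 < q) {k : ℕ} (hk : 0 < k) (m : ℕ) (hkq : k * q ≤ 1) :
    CapturesBounded α q m (k * q) ((1 + 1 / (k : ℝ)) ^ m - 1) := by
  have hk' : (0 : ℝ) < k := mod_cast hk
  have hratio : q / (k * q) = 1 / (k : ℝ) := by field_simp
  have hB : ∀ S : Finset α, #S ≤ m → ∑ T ∈ S.powerset with 0 < #T, (q / (k * q)) ^ #T ≤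
      (1 + 1 / (k : ℝ)) ^ m - 1 := by
    intro S hS
    rw [hratio, sum_powerset_pos_card_pow]
    gcongr
    exact le_add_of_nonneg_right (by positivity)
  simpa using (zero q le_rfl zero_le_one).step hq.le (mul_pos hk' hq) hkq le_rfl zero_le_one hB

lemma double {q v ε : ℝ} {s m : ℕ} (h : CapturesBounded α q s v ε) (hq : 0 < q)
    (hv0 : 0 ≤ v) (hv1 : v + 8 * q ≤ 1) (hms : m ≤ s) :
    CapturesBounded α q (2 * s) (v + 8 * q) (ε + (1 / 2) ^ m) := by
  have hB : ∀ S : Finset α, #S ≤ 2 * s →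
      ∑ T ∈ S.powerset with s < #T, (q / (8 * q)) ^ #T ≤ (1 / 2) ^ m := by
    intro S hS
    have hratio : q / (8 * q) = 1 / 8 := by field_simp
    calc ∑ T ∈ S.powerset with s < #T, (q / (8 * q)) ^ #T ≤ (4 * (1 / 8)) ^ s := by
          rw [hratio]; exact sum_powerset_lt_card_pow_le hS (by norm_num) (by norm_num)
      _ = (1 / 2) ^ s := by norm_num
      _ ≤ (1 / 2) ^ m := pow_le_pow_of_le_one (by norm_num) (by norm_num) hms
  have hstep := h.step hq.le (by positivity) (by linarith) hv0 (by linarith) hB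
  have hqv : 0 ≤ 8 * q * v := by positivity
  exact hstep.mono (by nlinarith) (by linarith) hv1 le_rfl

lemma iterate {q : ℝ} (hq : 0 < q) {k : ℕ} (hk : 0 < k) (m j : ℕ)
    (hkq : k * q + 8 * j * q ≤ 1) :
    CapturesBounded α q (m * 2 ^ j) (k * q + 8 * j * q)
      ((1 + 1 / (k : ℝ)) ^ m - 1 + j * (1 / 2) ^ m) := by
  induction j with
  | zero => simpa using base hq hk m (by simpa using hkq)
  | succ j ih =>
    push_cast at hkq ⊢
    have hdouble := (ih (by linarith)).double hq (by positivity) (by linarith)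
      (Nat.le_mul_of_pos_right m (pow_pos two_pos j))
    convert hdouble using 1 <;> ring

end CapturesBounded

end ParkPham

section CyclicOrders

open Finset

lemma eq_of_isChain_of_filter_eq {α : Type*} {r : α → α → Prop} {P : α → Bool}
    (hr : ∀ x y y', r x y → r x y' → y = y' ∨ P y ∧ P y') {l l' : List α} (hl : l.IsChain r)
    (hl' : l'.IsChain r) (hlen : l.length = l'.length)
    (hhead : ∀ x ∈ l.head?, ∀ x' ∈ l'.head?, x = x' ∨ P x ∧ P x')
    (hfilter : l.filter P = l'.filter P) : l = l' := by
  induction l generalizing l' with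
  | nil => exact (List.length_eq_zero_iff.1 hlen.symm).symm
  | cons x t ih =>
    obtain _ | ⟨x', t'⟩ := l'
    · simp at hlen
    obtain rfl : x = x' := by
      obtain heq | ⟨hx, hx'⟩ := hhead x rfl x' rfl
      · exact heq
      · rw [List.filter_cons_of_pos hx, List.filter_cons_of_pos hx'] at hfilter
        exact (List.cons.inj hfilter).1
    have htail : t.filter P = t'.filter P := by
      cases hx : P x <;> simpa [List.filter_cons, hx] using hfilter
    rw [List.isChain_cons] at hl hl'
    rw [ih hl.2 hl'.2 (by simpa using hlen)
      (fun y hy y' hy' => hr x y y' (hl.1 y hy) (hl'.1 y' hy')) htail]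

variable {V : Type*} {n : ℕ} [NeZero n]

/-- The `i`-th arc, from `σ i` to `σ (i + 1)`, of the directed cycle that visits the vertices in
the cyclic order `σ`. -/
def cycleArc (σ : Fin n ≃ V) (i : Fin n) : V × V := (σ i, σ (i + 1))

/-- The `i`-th edge of the cycle that visits the vertices in the cyclic order `σ`. -/
def cycleEdge (σ : Fin n ≃ V) (i : Fin n) : Sym2 V := s(σ i, σ (i + 1))

lemma cycleEdge_injective (hn : 3 ≤ n) (σ : Fin n ≃ V) : Function.Injective (cycleEdge σ) := by
  intro i j hij
  obtain ⟨hi, -⟩ | ⟨hi, hj⟩ := Sym2.eq_iff.1 hij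
  · exact σ.injective hi
  · have htwo : (1 + 1 : Fin n) = 0 := by
      have hwrap : j + (1 + 1) = j := by
        rw [← add_assoc, ← σ.injective hi, σ.injective hj]
      simpa using hwrap
    have hval := congrArg Fin.val htwo
    simp only [Fin.val_add, Fin.val_one', Nat.mod_eq_of_lt (by omega : 1 < n),
      Nat.mod_eq_of_lt (by omega : 1 + 1 < n), Fin.val_zero] at hval
    omega

variable [DecidableEq V]

/-- Whether `y` may follow `x` on a directed cycle through all arcs of `R`: either `(x, y)` is an
arc of `R`, or no arc of `R` starts in `x` or ends in `y`. -/
def FollowsIn (R : Finset (V × V)) (x y : V) : Prop :=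
  (x, y) ∈ R ∨ x ∉ R.image Prod.fst ∧ y ∉ R.image Prod.snd

lemma injOn_fst_of_subset_cycleArc {σ : Fin n ≃ V} {R : Finset (V × V)}
    (hR : R ⊆ univ.image (cycleArc σ)) : Set.InjOn Prod.fst (R : Set (V × V)) := by
  intro a ha b hb hab
  obtain ⟨i, -, rfl⟩ := mem_image.1 (hR ha)
  obtain ⟨j, -, rfl⟩ := mem_image.1 (hR hb)
  rw [σ.injective hab]

lemma injOn_snd_of_subset_cycleArc {σ : Fin n ≃ V} {R : Finset (V × V)}
    (hR : R ⊆ univ.image (cycleArc σ)) : Set.InjOn Prod.snd (R : Set (V × V)) := by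
  intro a ha b hb hab
  obtain ⟨i, -, rfl⟩ := mem_image.1 (hR ha)
  obtain ⟨j, -, rfl⟩ := mem_image.1 (hR hb)
  rw [add_right_cancel (σ.injective hab)]

lemma followsIn_of_subset_cycleArc {σ : Fin n ≃ V} {R : Finset (V × V)}
    (hR : R ⊆ univ.image (cycleArc σ)) (i : Fin n) : FollowsIn R (σ i) (σ (i + 1)) := by
  refine or_iff_not_imp_left.2 fun hi => ⟨fun hfst => hi ?_, fun hsnd => hi ?_⟩
  · obtain ⟨e, he, hei⟩ := mem_image.1 hfst
    obtain ⟨j, -, rfl⟩ := mem_image.1 (hR he)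
    rwa [← σ.injective hei]
  · obtain ⟨e, he, hei⟩ := mem_image.1 hsnd
    obtain ⟨j, -, rfl⟩ := mem_image.1 (hR he)
    rwa [← add_right_cancel (σ.injective hei)]

lemma isChain_followsIn_ofFn {σ : Fin n ≃ V} {R : Finset (V × V)}
    (hR : R ⊆ univ.image (cycleArc σ)) : (List.ofFn σ).IsChain (FollowsIn R) := by
  rw [List.isChain_ofFn]
  intro i hi
  have hsucc : (⟨i + 1, hi⟩ : Fin n) = ⟨i, by omega⟩ + 1 := by
    ext
    simp [Fin.val_add, Nat.mod_eq_of_lt (by omega : 1 < n), Nat.mod_eq_of_lt hi]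
  rw [hsucc]
  exact followsIn_of_subset_cycleArc hR _

lemma FollowsIn.eq_or_notMem {R : Finset (V × V)} (hR : Set.InjOn Prod.fst (R : Set (V × V)))
    (x y y' : V) (hy : FollowsIn R x y) (hy' : FollowsIn R x y') :
    y = y' ∨ y ∉ R.image Prod.snd ∧ y' ∉ R.image Prod.snd := by
  obtain hy | ⟨hx, hy⟩ := hy <;> obtain hy' | ⟨hx', hy'⟩ := hy'
  · exact .inl (congrArg Prod.snd (hR hy hy' rfl))
  · exact absurd (mem_image_of_mem Prod.fst hy) hx'
  · exact absurd (mem_image_of_mem Prod.fst hy') hx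
  · exact .inr ⟨hy, hy'⟩

/-- A code for a cyclic order `σ`, consisting of its first vertex if that lies in `B`, and of the
vertices outside of `B` in the order of `σ`. -/
def avoidingCode (B : Finset V) (σ : Fin n ≃ V) : Option V × List V :=
  (if σ 0 ∈ B then some (σ 0) else none, (List.ofFn σ).filter (· ∉ B))

-- An arc of `R` determines the vertex after its tail, so a cyclic order through all arcs of `R`
-- is determined by the order of the vertices that are not the head of an arc of `R`.
lemma avoidingCode_injOn (R : Finset (V × V)) : Set.InjOn (avoidingCode (R.image Prod.snd))
    {σ : Fin n ≃ V | R ⊆ univ.image (cycleArc σ)} := by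
  intro σ hσ σ' hσ' hcode
  obtain ⟨hhead, hfilter⟩ := Prod.ext_iff.1 hcode
  have hzero : σ 0 = σ' 0 ∨ σ 0 ∉ R.image Prod.snd ∧ σ' 0 ∉ R.image Prod.snd := by
    simp only [avoidingCode] at hhead
    grind
  have hof : List.ofFn σ = List.ofFn σ' := by
    refine eq_of_isChain_of_filter_eq (r := FollowsIn R) (P := (· ∉ R.image Prod.snd)) ?_
      (isChain_followsIn_ofFn hσ) (isChain_followsIn_ofFn hσ') (by simp) ?_ hfilter
    · simpa using FollowsIn.eq_or_notMem (injOn_fst_of_subset_cycleArc hσ)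
    · obtain ⟨k, rfl⟩ := Nat.exists_eq_succ_of_ne_zero (NeZero.ne n)
      simpa using hzero
  exact DFunLike.coe_injective (List.ofFn_injective hof)

/-- The orientation of the edge `e` as an arc, in which exactly the edges outside of `D` are
reversed with respect to a fixed reference orientation. -/
noncomputable def orient (D : Finset (Sym2 V)) (e : Sym2 V) : V × V :=
  if e ∈ D then e.out else e.out.swap

lemma mk_orient (D : Finset (Sym2 V)) (e : Sym2 V) : s((orient D e).1, (orient D e).2) = e := by
  have hout : s(e.out.1, e.out.2) = e := Quot.out_eq e
  unfold orient
  split_ifs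
  · exact hout
  · rw [Sym2.eq_swap]; exact hout

lemma exists_image_orient_subset_cycleArc {σ : Fin n ≃ V} {E : Finset (Sym2 V)}
    (hE : E ⊆ univ.image (cycleEdge σ)) :
    ∃ D ⊆ E, E.image (orient D) ⊆ univ.image (cycleArc σ) := by
  refine ⟨{e ∈ E | e.out ∈ univ.image (cycleArc σ)}, filter_subset _ _, ?_⟩
  refine image_subset_iff.2 fun e he => ?_
  rw [orient]
  split_ifs with h
  · exact (mem_filter.1 h).2
  · obtain ⟨i, -, hi⟩ := mem_image.1 (hE he)
    have hout : s((cycleArc σ i).1, (cycleArc σ i).2) = s(e.out.1, e.out.2) :=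
      hi.trans (Quot.out_eq e).symm
    have harc : cycleArc σ i ∈ univ.image (cycleArc σ) := mem_image_of_mem _ (mem_univ i)
    obtain hsame | hswap := Sym2.mk_eq_mk_iff.1 hout
    · exact absurd (mem_filter.2 ⟨he, hsame ▸ harc⟩) h
    · rwa [← hswap]

variable [Fintype V]

lemma avoidingCode_mem (B : Finset V) (σ : Fin n ≃ V) :
    avoidingCode B σ ∈ B.insertNone ×ˢ Bᶜ.toList.permutations.toFinset := by
  refine mem_product.2 ⟨?_, ?_⟩
  · simp only [avoidingCode]
    split_ifs with h <;> simp [h]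
  · rw [List.mem_toFinset, List.mem_permutations]
    refine (List.perm_ext_iff_of_nodup ((List.nodup_ofFn.2 σ.injective).filter _)
      (nodup_toList _)).2 fun v => ?_
    simpa [List.mem_ofFn] using fun _ => σ.surjective v

lemma card_subset_cycleArc_le (R : Finset (V × V)) :
    #{σ : Fin n ≃ V | R ⊆ univ.image (cycleArc σ)} ≤
      (#R + 1) * (Fintype.card V - #R).factorial := by
  obtain hempty | ⟨σ₀, hσ₀⟩ :=
    (filter (fun σ : Fin n ≃ V => R ⊆ univ.image (cycleArc σ)) univ).eq_empty_or_nonempty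
  · rw [hempty, card_empty]
    exact Nat.zero_le _
  set B := R.image Prod.snd
  have hBR : #B = #R := card_image_of_injOn (injOn_snd_of_subset_cycleArc (mem_filter.1 hσ₀).2)
  calc #{σ : Fin n ≃ V | R ⊆ univ.image (cycleArc σ)}
      ≤ #(B.insertNone ×ˢ Bᶜ.toList.permutations.toFinset) :=
        card_le_card_of_injOn (avoidingCode B) (fun σ _ => avoidingCode_mem B σ)
          (by simpa using avoidingCode_injOn R)
    _ ≤ (#B + 1) * (Fintype.card V - #B).factorial := by
        rw [card_product, card_insertNone]
        gcongr
        refine (List.toFinset_card_le _).trans_eq ?_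
        rw [List.length_permutations, length_toList, card_compl]
    _ = (#R + 1) * (Fintype.card V - #R).factorial := by rw [hBR]

lemma card_subset_cycleEdge_le (E : Finset (Sym2 V)) :
    #{σ : Fin n ≃ V | E ⊆ univ.image (cycleEdge σ)} ≤
      2 ^ #E * ((#E + 1) * (Fintype.card V - #E).factorial) := by
  have hcard (D : Finset (Sym2 V)) : #(E.image (orient D)) = #E :=
    card_image_of_injective _ fun e e' h => by rw [← mk_orient D e, ← mk_orient D e', h]
  have hcover : ({σ : Fin n ≃ V | E ⊆ univ.image (cycleEdge σ)} : Finset _) ⊆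
      E.powerset.biUnion fun D => {σ | E.image (orient D) ⊆ univ.image (cycleArc σ)} := by
    intro σ hσ
    obtain ⟨D, hD, hDσ⟩ := exists_image_orient_subset_cycleArc (mem_filter.1 hσ).2
    simp only [mem_biUnion, mem_powerset, mem_filter_univ]
    exact ⟨D, hD, hDσ⟩
  rw [← card_powerset]
  refine (card_le_card hcover).trans (card_biUnion_le_card_mul _ _ _ fun D _ => ?_)
  rw [← hcard D]
  exact card_subset_cycleArc_le _

end CyclicOrders

section Embeddings

open Finset

variable {α β : Type*} [Fintype α] [Fintype β]

lemma card_equiv_prod_embedding {γ : Type*} [Fintype γ] [DecidableEq α] [DecidableEq γ]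
    (h : Fintype.card α = Fintype.card γ) :
    Fintype.card ((α ≃ γ) × (α ↪ β)) =
      (Fintype.card α).factorial * (Fintype.card β).descFactorial (Fintype.card α) := by
  rw [Fintype.card_prod, Fintype.card_embedding_eq,
    Fintype.card_equiv (Fintype.equivOfCardEq h)]

lemma card_embeddings_le_of_eqOn {S : Finset (α ↪ β)} {I : Finset α} {τ₀ : α ↪ β}
    (hS : ∀ τ ∈ S, ∀ i ∈ I, τ i = τ₀ i) :
    #S ≤ (Fintype.card β - #I).descFactorial (Fintype.card α - #I) := by
  classical
  have hmaps (τ : S) (x : α) (hx : x ∉ I) : τ.1 x ∉ I.map τ₀ := by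
    intro hτx
    obtain ⟨i, hi, hix⟩ := mem_map.1 hτx
    rw [← hS τ τ.2 i hi] at hix
    exact hx (τ.1.injective hix ▸ hi)
  let restrict (τ : S) : {x // x ∉ I} ↪ {y // y ∉ I.map τ₀} := τ.1.subtypeMap (hmaps τ)
  have hinj : Function.Injective restrict := by
    intro τ τ' h
    ext x
    by_cases hx : x ∈ I
    · rw [hS τ τ.2 x hx, hS τ' τ'.2 x hx]
    · exact congrArg Subtype.val (DFunLike.congr_fun h ⟨x, hx⟩)
  have hcard := Fintype.card_le_of_injective restrict hinj
  rwa [Fintype.card_coe, Fintype.card_embedding_eq, Fintype.card_subtype_compl,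
    Fintype.card_subtype_compl, Fintype.card_coe, Fintype.card_coe, card_map] at hcard

end Embeddings

section RainbowCycles

open Finset

lemma pow_mul_factorial_le {n s : ℕ} (hs : s ≤ n) :
    n ^ s * s.factorial ≤ s ^ s * n.descFactorial s := by
  have hterm : ∀ i ∈ range s, n * (s - i) ≤ s * (n - i) := by
    intro i hi
    have his : i < s := mem_range.1 hi
    zify [his.le, (his.le.trans hs)]
    nlinarith
  calc n ^ s * s.factorial = ∏ i ∈ range s, n * (s - i) := by
        rw [prod_mul_distrib, prod_const, card_range, ← Nat.descFactorial_eq_prod_range,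
          Nat.descFactorial_self]
    _ ≤ ∏ i ∈ range s, s * (n - i) := prod_le_prod' hterm
    _ = s ^ s * n.descFactorial s := by
        rw [prod_mul_distrib, prod_const, card_range, ← Nat.descFactorial_eq_prod_range]

lemma pow_le_three_pow_mul_descFactorial {n s : ℕ} (hs : s ≤ n) :
    (n : ℝ) ^ s ≤ 3 ^ s * n.descFactorial s := by
  have hfact : (0 : ℝ) < s.factorial := mod_cast s.factorial_pos
  have hexp : (s : ℝ) ^ s ≤ 3 ^ s * s.factorial :=
    calc (s : ℝ) ^ s ≤ Real.exp s * s.factorial :=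
          (div_le_iff₀ hfact).1 (Real.pow_div_factorial_le_exp s (by positivity) s)
      _ = Real.exp 1 ^ s * s.factorial := by rw [← Real.exp_nat_mul, mul_one]
      _ ≤ 3 ^ s * s.factorial := by gcongr; exact Real.exp_one_lt_three.le
  refine le_of_mul_le_mul_right ?_ hfact
  calc (n : ℝ) ^ s * s.factorial ≤ s ^ s * n.descFactorial s :=
        mod_cast pow_mul_factorial_le hs
    _ ≤ 3 ^ s * s.factorial * n.descFactorial s := by gcongr
    _ = 3 ^ s * n.descFactorial s * s.factorial := by ring

lemma descFactorial_sub_mul_pow_le {n m s : ℕ} (hs : s ≤ m) (hm : m ≤ n) :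
    ((n - s).descFactorial (m - s) : ℝ) * n ^ s ≤ 3 ^ s * n.descFactorial m := by
  calc ((n - s).descFactorial (m - s) : ℝ) * n ^ s
      ≤ (n - s).descFactorial (m - s) * (3 ^ s * n.descFactorial s) := by
        gcongr; exact pow_le_three_pow_mul_descFactorial (hs.trans hm)
    _ = 3 ^ s * ((n - s).descFactorial (m - s) * n.descFactorial s : ℕ) := by push_cast; ring
    _ = 3 ^ s * n.descFactorial m := by rw [Nat.descFactorial_mul_descFactorial hs]

variable {V C : Type*} [DecidableEq V] [DecidableEq C] {n : ℕ} [NeZero n]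

/-- The rainbow Hamilton cycle that visits the vertices in the cyclic order `x.1` and whose `i`-th
edge has color `x.2 i`, as a set of colored edges. -/
def rainbowCycle (x : (Fin n ≃ V) × (Fin n ↪ C)) : Finset (Sym2 V × C) :=
  univ.image fun i => (cycleEdge x.1 i, x.2 i)

lemma card_rainbowCycle_le (x : (Fin n ≃ V) × (Fin n ↪ C)) : #(rainbowCycle x) ≤ n :=
  card_image_le.trans_eq (card_fin n)

lemma injOn_fst_rainbowCycle (hn : 3 ≤ n) (x : (Fin n ≃ V) × (Fin n ↪ C)) :
    Set.InjOn Prod.fst (rainbowCycle x : Set (Sym2 V × C)) := by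
  intro g hg g' hg' h
  obtain ⟨i, -, rfl⟩ := mem_image.1 hg
  obtain ⟨j, -, rfl⟩ := mem_image.1 hg'
  rw [cycleEdge_injective hn x.1 h]

variable [Fintype C]

lemma card_colors_subset_rainbowCycle_le (hn : 3 ≤ n) (σ : Fin n ≃ V) (G : Finset (Sym2 V × C)) :
    #{τ : Fin n ↪ C | G ⊆ rainbowCycle (σ, τ)} ≤
      (Fintype.card C - #G).descFactorial (n - #G) := by
  obtain hempty | ⟨τ₀, hτ₀⟩ :=
    (filter (fun τ : Fin n ↪ C => G ⊆ rainbowCycle (σ, τ)) univ).eq_empty_or_nonempty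
  · rw [hempty, card_empty]
    exact Nat.zero_le _
  let I : Finset (Fin n) := {i | (cycleEdge σ i, τ₀ i) ∈ G}
  have hG : I.image (fun i => (cycleEdge σ i, τ₀ i)) = G := by
    refine subset_antisymm (image_subset_iff.2 fun i hi => (mem_filter.1 hi).2) fun g hg => ?_
    obtain ⟨i, -, rfl⟩ := mem_image.1 ((mem_filter.1 hτ₀).2 hg)
    exact mem_image_of_mem _ (mem_filter.2 ⟨mem_univ i, hg⟩)
  have hIG : #I = #G := by
    rw [← hG, card_image_of_injective _ fun i j h => τ₀.injective (congrArg Prod.snd h)]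
  have hagree : ∀ τ ∈ ({τ | G ⊆ rainbowCycle (σ, τ)} : Finset (Fin n ↪ C)), ∀ i ∈ I,
      τ i = τ₀ i := by
    intro τ hτ i hi
    obtain ⟨j, -, hj⟩ := mem_image.1 ((mem_filter.1 hτ).2 (mem_filter.1 hi).2)
    obtain ⟨hedge, hcolor⟩ := Prod.ext_iff.1 hj
    rwa [cycleEdge_injective hn σ hedge] at hcolor
  have hcard := card_embeddings_le_of_eqOn hagree
  rwa [hIG, Fintype.card_fin] at hcard

variable [Fintype V]

lemma card_subset_rainbowCycle_le (hn : 3 ≤ n) (G : Finset (Sym2 V × C)) :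
    #{x : (Fin n ≃ V) × (Fin n ↪ C) | G ⊆ rainbowCycle x} ≤
      (Fintype.card C - #G).descFactorial (n - #G) *
        (2 ^ #G * ((#G + 1) * (Fintype.card V - #G).factorial)) := by
  obtain hempty | ⟨x₀, hx₀⟩ := (filter (fun x : (Fin n ≃ V) × (Fin n ↪ C) =>
      G ⊆ rainbowCycle x) univ).eq_empty_or_nonempty
  · rw [hempty, card_empty]
    exact Nat.zero_le _
  have hcardG : #(G.image Prod.fst) = #G :=
    card_image_of_injOn ((injOn_fst_rainbowCycle hn x₀).mono (mod_cast (mem_filter.1 hx₀).2))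
  have himage : image Prod.fst {x : (Fin n ≃ V) × (Fin n ↪ C) | G ⊆ rainbowCycle x} ⊆
      ({σ | G.image Prod.fst ⊆ univ.image (cycleEdge σ)} : Finset (Fin n ≃ V)) := by
    refine image_subset_iff.2 fun x hx => mem_filter.2 ⟨mem_univ _, ?_⟩
    refine (image_subset_image (mem_filter.1 hx).2).trans (image_subset_iff.2 fun g hg => ?_)
    obtain ⟨i, -, rfl⟩ := mem_image.1 hg
    exact mem_image_of_mem _ (mem_univ i)
  have hfiber : ∀ σ ∈ image Prod.fst {x : (Fin n ≃ V) × (Fin n ↪ C) | G ⊆ rainbowCycle x},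
      #{x ∈ ({x | G ⊆ rainbowCycle x} : Finset ((Fin n ≃ V) × (Fin n ↪ C))) | x.1 = σ} ≤
        (Fintype.card C - #G).descFactorial (n - #G) := by
    refine fun σ _ => le_trans ?_ (card_colors_subset_rainbowCycle_le hn σ G)
    refine card_le_card_of_injOn Prod.snd ?_ ?_
    · rintro ⟨_, τ⟩ hx
      simpa using by grind
    · rintro ⟨_, τ⟩ hx ⟨_, τ'⟩ hx' h
      grind
  refine (card_le_mul_card_image _ _ hfiber).trans (Nat.mul_le_mul_left _ ?_)
  rw [← hcardG]
  exact (card_le_card himage).trans (card_subset_cycleEdge_le _)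

lemma isSpread_rainbowCycle (hn : 3 ≤ n) (hV : Fintype.card V = n) (hC : n ≤ Fintype.card C) :
    IsSpread (36 / (n * Fintype.card C))
      (rainbowCycle : (Fin n ≃ V) × (Fin n ↪ C) → Finset (Sym2 V × C)) := by
  intro G
  obtain hG | hG := lt_or_ge n #G
  · have hempty : filter (fun x : (Fin n ≃ V) × (Fin n ↪ C) => G ⊆ rainbowCycle x) univ = ∅ :=
      filter_eq_empty_iff.2 fun x _ hx =>
        (hG.trans_le ((card_le_card hx).trans (card_rainbowCycle_le x))).false
    rw [hempty, card_empty, Nat.cast_zero]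
    positivity
  set κ := Fintype.card C
  set s := #G
  have hpow : (s : ℝ) + 1 ≤ 2 ^ s := mod_cast Nat.lt_two_pow_self
  have hcycles : ((n - s).factorial : ℝ) * n ^ s ≤ 3 ^ s * n.factorial := by
    simpa [Nat.descFactorial_self] using descFactorial_sub_mul_pow_le hG le_rfl
  have hcolors := descFactorial_sub_mul_pow_le hG hC
  have hκ : 0 < κ := (NeZero.pos n).trans_le hC
  rw [card_equiv_prod_embedding (by simp [hV]), Fintype.card_fin, div_pow, div_mul_eq_mul_div,
    le_div_iff₀ (by positivity)]
  calc (#{x : (Fin n ≃ V) × (Fin n ↪ C) | G ⊆ rainbowCycle x} : ℝ) * ((n : ℝ) * κ) ^ s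
      ≤ ((κ - s).descFactorial (n - s) * (2 ^ s * ((s + 1) * (n - s).factorial))) *
          ((n : ℝ) * κ) ^ s := by
        gcongr
        exact_mod_cast hV ▸ card_subset_rainbowCycle_le hn G
    _ = 2 ^ s * (s + 1) * ((n - s).factorial * n ^ s) *
          ((κ - s).descFactorial (n - s) * κ ^ s) := by ring
    _ ≤ 2 ^ s * 2 ^ s * (3 ^ s * n.factorial) * (3 ^ s * κ.descFactorial n) := by gcongr
    _ = 36 ^ s * (n.factorial * κ.descFactorial n : ℕ) := by
        rw [show (36 : ℝ) = 2 * 2 * 3 * 3 by norm_num, mul_pow, mul_pow, mul_pow]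
        push_cast
        ring

end RainbowCycles

section OneColorModel

open Finset

lemma sum_prod_resample {ι Ω : Type*} [Fintype ι] [DecidableEq ι] [Fintype Ω] {μ : Ω → ℝ}
    (hμ : ∑ x, μ x = 1) (e : ι) (F : (ι → Ω) → ℝ) :
    ∑ η : ι → Ω, (∏ i, μ (η i)) * F η =
      ∑ x, μ x * ∑ η : ι → Ω, (∏ i, μ (η i)) * F (Function.update η e x) := by
  let swap : Equiv.Perm (Ω × (ι → Ω)) :=
    Function.Involutive.toPerm (fun z => (z.2 e, Function.update z.2 e z.1)) fun z => by simp
  have hweight (z : Ω × (ι → Ω)) :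
      μ (swap z).1 * ∏ i, μ ((swap z).2 i) = μ z.1 * ∏ i, μ (z.2 i) := by
    change μ (z.2 e) * ∏ i, μ (Function.update z.2 e z.1 i) = μ z.1 * ∏ i, μ (z.2 i)
    rw [← mul_prod_erase univ _ (mem_univ e), ← mul_prod_erase univ (fun i => μ (z.2 i))
      (mem_univ e), Function.update_self, mul_left_comm]
    congr! 3 with i hi
    rw [Function.update_of_ne (ne_of_mem_erase hi)]
  calc ∑ η : ι → Ω, (∏ i, μ (η i)) * F η
      = ∑ z : Ω × (ι → Ω), (μ z.1 * ∏ i, μ (z.2 i)) * F z.2 := by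
        simp only [Fintype.sum_prod_type, mul_assoc, ← mul_sum, ← sum_mul, hμ, one_mul]
    _ = ∑ z : Ω × (ι → Ω), (μ z.1 * ∏ i, μ (z.2 i)) * F (swap z).2 := by
        rw [← Equiv.sum_comp swap]
        simp only [hweight]
    _ = ∑ x, μ x * ∑ η : ι → Ω, (∏ i, μ (η i)) * F (Function.update η e x) := by
        simp only [Fintype.sum_prod_type, mul_assoc, mul_sum]
        rfl

variable {E C : Type*}

/-- The probability that a given pair of vertices has state `x` in the colored random graph:
`x.1` tells whether the edge is present and `x.2` is its color. -/
noncomputable def edgeWeight (C : Type*) [Fintype C] (p : ℝ) (x : Bool × C) : ℝ :=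
  (if x.1 then p else 1 - p) * (Fintype.card C : ℝ)⁻¹

lemma edgeWeight_nonneg [Fintype C] {p : ℝ} (hp0 : 0 ≤ p) (hp1 : p ≤ 1) (x : Bool × C) :
    0 ≤ edgeWeight C p x := by
  refine mul_nonneg ?_ (by positivity)
  split_ifs
  exacts [hp0, sub_nonneg.2 hp1]

lemma sum_edgeWeight [Fintype C] [Nonempty C] (p : ℝ) : ∑ x, edgeWeight C p x = 1 := by
  have hC : (Fintype.card C : ℝ) ≠ 0 := mod_cast Fintype.card_ne_zero
  simp only [Fintype.sum_prod_type, edgeWeight, Fintype.sum_bool, if_true, Bool.false_eq_true,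
    if_false, sum_const, card_univ, nsmul_eq_mul]
  field_simp
  ring

variable [DecidableEq E] [DecidableEq C]

/-- Adding several colored copies of one edge to `Y` increases `f` by at most the sum of the
increases due to each single copy. -/
def FiberSubadditive (f : Finset (E × C) → ℝ) : Prop :=
  ∀ (e : E) (Y V : Finset (E × C)), (∀ v ∈ V, v.1 = e) →
    f (Y ∪ V) ≤ f Y + ∑ v ∈ V, (f (insert v Y) - f Y)

lemma fiberSubadditive_upIndicator {H : Finset (Finset (E × C))}
    (hH : ∀ S ∈ H, Set.InjOn Prod.fst (S : Set (E × C))) : FiberSubadditive (upIndicator H) := by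
  intro e Y V hV
  have hincr : ∀ v ∈ V, 0 ≤ upIndicator H (insert v Y) - upIndicator H Y := fun v _ =>
    sub_nonneg.2 (upIndicator_monotone H (subset_insert v Y))
  by_cases hYV : ∃ S ∈ H, S ⊆ Y ∪ V
  · obtain ⟨S, hS, hSYV⟩ := hYV
    rw [upIndicator_eq_one hS hSYV]
    by_cases hSY : S ⊆ Y
    · rw [upIndicator_eq_one hS hSY] at hincr ⊢
      linarith [sum_nonneg hincr]
    · obtain ⟨v, hvS, hvY⟩ := not_subset.1 hSY
      have hvV : v ∈ V := (mem_union.1 (hSYV hvS)).resolve_left hvY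
      have hSv : S ⊆ insert v Y := by
        intro x hx
        obtain hxY | hxV := mem_union.1 (hSYV hx)
        · exact mem_insert_of_mem hxY
        · rw [hH S hS hx hvS ((hV x hxV).trans (hV v hvV).symm)]
          exact mem_insert_self v Y
      have hsingle := single_le_sum hincr hvV
      rw [upIndicator_eq_one hS hSv] at hsingle
      linarith
  · rw [show upIndicator H (Y ∪ V) = 0 from if_neg hYV]
    exact add_nonneg (upIndicator_nonneg H Y) (sum_nonneg hincr)

lemma FiberSubadditive.comp_insert {f : Finset (E × C) → ℝ} (hf : FiberSubadditive f)
    (x : E × C) : FiberSubadditive fun Y => f (insert x Y) := by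
  intro e Y V hV
  simpa only [insert_union, insert_comm x] using hf e (insert x Y) V hV

lemma FiberSubadditive.subsetExpect_fiber_le [Fintype C] {f : Finset (E × C) → ℝ}
    (hf : FiberSubadditive f) {w : ℝ} (hw0 : 0 ≤ w) (hw1 : w ≤ 1) (e : E) (W : Finset (E × C)) :
    subsetExpect ({e} ×ˢ univ) w (fun V => f (W ∪ V)) ≤
      (1 - w * Fintype.card C) * f W + ∑ c : C, w * f (insert (e, c) W) := by
  calc subsetExpect ({e} ×ˢ univ) w (fun V => f (W ∪ V))
      ≤ subsetExpect ({e} ×ˢ univ) w fun V => f W + ∑ v ∈ V, (f (insert v W) - f W) :=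
        subsetExpect_mono hw0 hw1 fun V hV => hf e W V fun v hv =>
          mem_singleton.1 (mem_product.1 (hV hv)).1
    _ = f W + w * ∑ c : C, (f (insert (e, c) W) - f W) := by
        rw [subsetExpect_add, subsetExpect_const, subsetExpect_sum_mem, sum_product,
          sum_singleton]
    _ = (1 - w * Fintype.card C) * f W + ∑ c : C, w * f (insert (e, c) W) := by
        rw [sum_sub_distrib, sum_const, card_univ, nsmul_eq_mul, ← mul_sum]
        ring

/-- The set of present edges in `s`, each with its color, when `η` gives presence and color. -/
def coloredEdges (s : Finset E) (η : E → Bool × C) : Finset (E × C) :=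
  {e ∈ s | (η e).1}.image fun e => (e, (η e).2)

lemma coloredEdges_congr {s : Finset E} {η η' : E → Bool × C} (h : ∀ e ∈ s, η e = η' e) :
    coloredEdges s η = coloredEdges s η' := by
  unfold coloredEdges
  rw [filter_congr fun e he => by rw [h e he]]
  exact image_congr fun e he => by simp only [h e (mem_filter.1 he).1]

lemma coloredEdges_insert_update {e : E} {s : Finset E} (he : e ∉ s) (η : E → Bool × C)
    (x : Bool × C) : coloredEdges (insert e s) (Function.update η e x) =
      if x.1 then insert (e, x.2) (coloredEdges s η) else coloredEdges s η := by
  have hs : coloredEdges s (Function.update η e x) = coloredEdges s η :=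
    coloredEdges_congr fun i hi => Function.update_of_ne (ne_of_mem_of_not_mem hi he) _ _
  rw [← hs]
  unfold coloredEdges
  rw [filter_insert, Function.update_self]
  split_ifs
  · rw [image_insert, Function.update_self]
  · rfl

variable [Fintype E] [Fintype C]

/-- The expectation of `f` at the random set of colored edges in which each edge of `s` is present
independently with probability `p`, in one uniformly random color. -/
noncomputable def oneColorExpect (s : Finset E) (p : ℝ) (f : Finset (E × C) → ℝ) : ℝ :=
  ∑ η : E → Bool × C, (∏ e, edgeWeight C p (η e)) * f (coloredEdges s η)

lemma oneColorExpect_empty [Nonempty C] (p : ℝ) (f : Finset (E × C) → ℝ) :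
    oneColorExpect ∅ p f = f ∅ := by
  have htotal : ∑ η : E → Bool × C, ∏ e, edgeWeight C p (η e) = 1 := by
    rw [← Fintype.prod_sum]
    simp only [sum_edgeWeight, prod_const_one]
  simp only [oneColorExpect, coloredEdges, filter_empty, image_empty, ← sum_mul, htotal, one_mul]

lemma oneColorExpect_insert [Nonempty C] {e : E} {s : Finset E} (he : e ∉ s) (p : ℝ)
    (f : Finset (E × C) → ℝ) :
    oneColorExpect (insert e s) p f = (1 - p) * oneColorExpect s p f +
      ∑ c : C, p / Fintype.card C * oneColorExpect s p fun Y => f (insert (e, c) Y) := by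
  have hC : (Fintype.card C : ℝ) ≠ 0 := mod_cast Fintype.card_ne_zero
  rw [oneColorExpect, sum_prod_resample (sum_edgeWeight p) e, Fintype.sum_prod_type,
    Fintype.sum_bool, add_comm]
  simp only [coloredEdges_insert_update he, if_true, Bool.false_eq_true, if_false]
  congr 1
  · simp only [edgeWeight, Bool.false_eq_true, if_false, sum_const, card_univ, nsmul_eq_mul,
      oneColorExpect]
    field_simp

-- McDiarmid's coupling: replace, one edge at a time, the independent presence of the colored
-- copies of the edge by the presence of at most one copy.
theorem FiberSubadditive.subsetExpect_le_oneColorExpect [Nonempty C] (s : Finset E) {p : ℝ}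
    (hp0 : 0 ≤ p) (hp1 : p ≤ 1) {f : Finset (E × C) → ℝ} (hf : FiberSubadditive f) :
    subsetExpect (s ×ˢ univ) (p / Fintype.card C) f ≤ oneColorExpect s p f := by
  have hC : (1 : ℝ) ≤ Fintype.card C := mod_cast Fintype.card_pos
  set w := p / Fintype.card C
  have hw0 : 0 ≤ w := by positivity
  have hw1 : w ≤ 1 := (div_le_one (by positivity)).2 (hp1.trans hC)
  have hwC : w * Fintype.card C = p := div_mul_cancel₀ p (by positivity)
  induction s using Finset.induction_on generalizing f with
  | empty => rw [empty_product, subsetExpect_empty, oneColorExpect_empty]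
  | insert e s he ih =>
    have hdisj : Disjoint ({e} ×ˢ (univ : Finset C)) (s ×ˢ univ) :=
      disjoint_product.2 (.inl (disjoint_singleton_left.2 he))
    rw [insert_eq, union_product, subsetExpect_disjoint_union hdisj, ← insert_eq,
      oneColorExpect_insert he]
    calc subsetExpect (s ×ˢ univ) w (fun W => subsetExpect ({e} ×ˢ univ) w fun V => f (W ∪ V))
        ≤ subsetExpect (s ×ˢ univ) w fun W => (1 - p) * f W + ∑ c : C, w * f (insert (e, c) W) :=
          subsetExpect_mono hw0 hw1 fun W _ => hwC ▸ hf.subsetExpect_fiber_le hw0 hw1 e W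
      _ = (1 - p) * subsetExpect (s ×ˢ univ) w f +
            ∑ c : C, w * subsetExpect (s ×ˢ univ) w fun W => f (insert (e, c) W) := by
          simp only [subsetExpect_add, subsetExpect_const_mul, subsetExpect_sum]
      _ ≤ (1 - p) * oneColorExpect s p f +
            ∑ c : C, w * oneColorExpect s p fun W => f (insert (e, c) W) := by
          have := sub_nonneg.2 hp1
          gcongr with c
          · exact ih hf
          · exact ih (hf.comp_insert (e, c))

-- The rainbow cycles are `q`-spread for `q = 36 / (n * |C|)`, and `9 * k * q ≤ p / |C|`.
theorem le_oneColorExpect_upIndicator_rainbowCycle {V : Type*} [Fintype V] [DecidableEq V] {n : ℕ}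
    [NeZero n] (hn : 3 ≤ n) (hV : Fintype.card V = n) (hC : n ≤ Fintype.card C) {p : ℝ}
    (hp1 : p ≤ 1) {k m : ℕ} (hk : 0 < k) (hm : n ≤ m * 2 ^ k) (hp : 324 * k ≤ n * p) :
    1 - ((1 + 1 / (k : ℝ)) ^ m - 1 + k * (1 / 2) ^ m) ≤ oneColorExpect univ p
      (upIndicator (univ.image (rainbowCycle : (Fin n ≃ V) × (Fin n ↪ C) → _))) := by
  have hn0 : (0 : ℝ) < n := mod_cast NeZero.pos n
  have hp0 : 0 ≤ p := nonneg_of_mul_nonneg_right (le_trans (by positivity) hp) hn0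
  have hcard : 0 < Fintype.card C := (NeZero.pos n).trans_le hC
  have : Nonempty C := Fintype.card_pos_iff.1 hcard
  have hspread := isSpread_rainbowCycle hn hV hC
  set H : Finset (Finset (Sym2 V × C)) := univ.image (rainbowCycle (n := n))
  set q : ℝ := 36 / (n * Fintype.card C)
  have hpC : p / Fintype.card C ≤ 1 :=
    div_le_one_of_le₀ (hp1.trans (mod_cast hcard)) (by positivity)
  have hkq : k * q + 8 * k * q ≤ p / Fintype.card C := by
    have hq : k * q + 8 * k * q = 324 * k / n / Fintype.card C := by
      simp only [q]
      field_simp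
      norm_num
    rw [hq]
    gcongr
    rwa [div_le_iff₀' hn0]
  have hcaptures : CapturesBounded (Sym2 V × C) q (m * 2 ^ k) (p / Fintype.card C)
      ((1 + 1 / (k : ℝ)) ^ m - 1 + k * (1 / 2) ^ m) :=
    (CapturesBounded.iterate (by positivity) hk m k (hkq.trans hpC)).mono (by positivity) hkq hpC
      le_rfl
  have : Nonempty ((Fin n ≃ V) × (Fin n ↪ C)) :=
    ⟨(Fintype.equivFinOfCardEq hV).symm, (Function.Embedding.nonempty_of_card_le (by simpa)).some⟩
  have hbound : ∀ S ∈ H, #S ≤ m * 2 ^ k :=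
    forall_mem_image.2 fun x _ => (card_rainbowCycle_le x).trans hm
  have hinj : ∀ S ∈ H, Set.InjOn Prod.fst (S : Set (Sym2 V × C)) :=
    forall_mem_image.2 fun x _ => injOn_fst_rainbowCycle hn x
  calc 1 - ((1 + 1 / (k : ℝ)) ^ m - 1 + k * (1 / 2) ^ m)
      ≤ subsetExpect (univ ×ˢ univ) (p / Fintype.card C) (upIndicator H) := by
        rw [univ_product_univ]
        exact hcaptures H hbound 1 hspread.coverCostAtLeast_one
    _ ≤ oneColorExpect univ p (upIndicator H) :=
        (fiberSubadditive_upIndicator hinj).subsetExpect_le_oneColorExpect univ hp0 hp1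

end OneColorModel

section ColoredGnp

open Finset

instance {α : Type*} [Fintype α] [Nonempty α] [MeasurableSpace α] :
    IsProbabilityMeasure (uniformOn (univ : Finset α)) := by
  rw [uniformOn, dif_pos univ_nonempty]
  infer_instance

lemma uniformOn_singleton {α : Type*} [MeasurableSpace α] [MeasurableSingletonClass α]
    {s : Finset α} {a : α} (ha : a ∈ s) :
    uniformOn s {a} = ENNReal.ofReal (#s : ℝ)⁻¹ := by
  have hs : s.Nonempty := ⟨a, ha⟩
  rw [uniformOn, dif_pos hs, PMF.toMeasure_apply_singleton _ _ (.singleton a),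
    PMF.uniformOfFinset_apply_of_mem _ ha, ENNReal.ofReal_inv_of_pos (mod_cast hs.card_pos),
    ENNReal.ofReal_natCast]

lemma bernoulliM_singleton {p : ℝ} (hp0 : 0 ≤ p) (hp1 : p ≤ 1) (b : Bool) :
    bernoulliM p {b} = ENNReal.ofReal (if b then p else 1 - p) := by
  have hmin : min p.toNNReal 1 = p.toNNReal := min_eq_left (Real.toNNReal_le_one.2 hp1)
  rw [bernoulliM, PMF.toMeasure_apply_singleton _ _ (.singleton b)]
  cases b
  · change 1 - ((min p.toNNReal 1 : NNReal) : ENNReal) = ENNReal.ofReal (1 - p)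
    rw [hmin, ENNReal.ofReal_sub 1 hp0, ENNReal.ofReal_one, ENNReal.ofReal]
  · change ((min p.toNNReal 1 : NNReal) : ENNReal) = ENNReal.ofReal p
    rw [hmin, ENNReal.ofReal]

variable {n κ : ℕ} {p : ℝ}

instance [NeZero κ] : IsProbabilityMeasure (coloredGnp n κ p) := by
  unfold coloredGnp gnp colorM
  infer_instance

lemma coloredGnp_singleton (hp0 : 0 ≤ p) (hp1 : p ≤ 1)
    (x : (Sym2 (Fin n) → Bool) × (Sym2 (Fin n) → Fin κ)) :
    coloredGnp n κ p {x} = ENNReal.ofReal (∏ e, edgeWeight (Fin κ) p (x.1 e, x.2 e)) := by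
  have hedge (e : Sym2 (Fin n)) : bernoulliM p {x.1 e} * uniformOn univ {x.2 e} =
      ENNReal.ofReal (edgeWeight (Fin κ) p (x.1 e, x.2 e)) := by
    rw [bernoulliM_singleton hp0 hp1, uniformOn_singleton (mem_univ _), mul_comm,
      ← ENNReal.ofReal_mul (by positivity), mul_comm, card_univ, edgeWeight]
  have hx : {x} = ({x.1} ×ˢ {x.2} : Set ((Sym2 (Fin n) → Bool) × (Sym2 (Fin n) → Fin κ))) := by
    simp
  rw [hx, coloredGnp, Measure.prod_prod, gnp, colorM, Measure.pi_singleton, Measure.pi_singleton,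
    ← prod_mul_distrib, ENNReal.ofReal_prod_of_nonneg fun e _ => edgeWeight_nonneg hp0 hp1 _]
  exact prod_congr rfl fun e _ => hedge e

lemma coloredGnp_exists_subset_coloredEdges (hp0 : 0 ≤ p) (hp1 : p ≤ 1)
    (H : Finset (Finset (Sym2 (Fin n) × Fin κ))) :
    coloredGnp n κ p {x | ∃ S ∈ H, S ⊆ coloredEdges univ fun e => (x.1 e, x.2 e)} =
      ENNReal.ofReal (oneColorExpect univ p (upIndicator H)) := by
  classical
  have hnonneg (η : Sym2 (Fin n) → Bool × Fin κ) :
      0 ≤ (∏ e, edgeWeight (Fin κ) p (η e)) * upIndicator H (coloredEdges univ η) :=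
    mul_nonneg (prod_nonneg fun e _ => edgeWeight_nonneg hp0 hp1 _) (upIndicator_nonneg H _)
  rw [oneColorExpect, ENNReal.ofReal_sum_of_nonneg fun η _ => hnonneg η,
    ← (Equiv.arrowProdEquivProdArrow (Sym2 (Fin n)) (fun _ => Bool)
      (fun _ => Fin κ)).symm.sum_comp, ← coe_filter_univ, ← sum_measure_singleton, sum_filter]
  refine sum_congr rfl fun x _ => ?_
  change _ = ENNReal.ofReal ((∏ e, edgeWeight (Fin κ) p (x.1 e, x.2 e)) *
    upIndicator H (coloredEdges univ fun e => (x.1 e, x.2 e)))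
  rw [coloredGnp_singleton hp0 hp1 x, upIndicator]
  split_ifs <;> simp

lemma isRainbowHamCycle_of_rainbowCycle_subset [NeZero n] {ω : Sym2 (Fin n) → Bool}
    {c : Sym2 (Fin n) → Fin κ} {x : (Fin n ≃ Fin n) × (Fin n ↪ Fin κ)}
    (hx : rainbowCycle x ⊆ coloredEdges univ fun e => (ω e, c e)) : IsRainbowHamCycle ω c := by
  have hcycle (i : Fin n) : ω (cycleEdge x.1 i) = true ∧ c (cycleEdge x.1 i) = x.2 i := by
    have hmem := hx (mem_image_of_mem _ (mem_univ i))
    simp only [coloredEdges, mem_image, mem_filter, mem_univ, true_and, Prod.mk.injEq] at hmem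
    obtain ⟨_, hω, rfl, hc⟩ := hmem
    exact ⟨hω, hc⟩
  obtain ⟨N, rfl⟩ := Nat.exists_eq_succ_of_ne_zero (NeZero.ne n)
  refine ⟨x.1, x.1.bijective, fun i => (hcycle i).1, fun i j hij => x.2.injective ?_⟩
  exact (hcycle i).2.symm.trans (hij.trans (hcycle j).2)

theorem le_coloredGnp_isRainbowHamCycle (hn : 3 ≤ n) (hκ : n ≤ κ) (hp1 : p ≤ 1) {k m : ℕ}
    (hk : 0 < k) (hm : n ≤ m * 2 ^ k) (hp : 324 * k ≤ n * p) :
    ENNReal.ofReal (1 - ((1 + 1 / k) ^ m - 1 + k * (1 / 2) ^ m)) ≤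
      coloredGnp n κ p {x | IsRainbowHamCycle x.1 x.2} := by
  have : NeZero n := ⟨by omega⟩
  have hp0 : 0 ≤ p := nonneg_of_mul_nonneg_right (le_trans (by positivity) hp)
    (mod_cast NeZero.pos n)
  set H : Finset (Finset (Sym2 (Fin n) × Fin κ)) := univ.image (rainbowCycle (n := n))
  calc ENNReal.ofReal (1 - ((1 + 1 / k) ^ m - 1 + k * (1 / 2) ^ m))
      ≤ ENNReal.ofReal (oneColorExpect univ p (upIndicator H)) :=
        ENNReal.ofReal_le_ofReal (le_oneColorExpect_upIndicator_rainbowCycle hn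
          (Fintype.card_fin n) (hκ.trans_eq (Fintype.card_fin κ).symm) hp1 hk hm hp)
    _ = coloredGnp n κ p {x | ∃ S ∈ H, S ⊆ coloredEdges univ fun e => (x.1 e, x.2 e)} :=
        (coloredGnp_exists_subset_coloredEdges hp0 hp1 H).symm
    _ ≤ coloredGnp n κ p {x | IsRainbowHamCycle x.1 x.2} := by
        refine measure_mono ?_
        rintro x ⟨S, hS, hSx⟩
        obtain ⟨y, -, rfl⟩ := mem_image.1 hS
        exact isRainbowHamCycle_of_rainbowCycle_subset hSx

end ColoredGnp

section Asymptotics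

lemma clog_two_le_three_mul_log {n : ℕ} (hn : 3 ≤ n) : (Nat.clog 2 n : ℝ) ≤ 3 * Real.log n := by
  have hlog : 1 ≤ Real.log n := by
    rw [Real.le_log_iff_exp_le (by positivity)]
    exact Real.exp_one_lt_three.le.trans (mod_cast hn)
  have hlogb : Real.logb 2 n ≤ 2 * Real.log n := by
    rw [Real.logb, div_le_iff₀ (Real.log_pos one_lt_two)]
    nlinarith [Real.log_two_gt_d9]
  have hceil : (Nat.clog 2 n : ℝ) < Real.logb 2 n + 1 := by
    rw [← Real.natCeil_logb_natCast]
    exact Nat.ceil_lt_add_one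
      (Real.logb_nonneg one_lt_two (by exact_mod_cast le_of_add_le_right hn))
  linarith

lemma tendsto_natSqrt_atTop : Tendsto Nat.sqrt atTop atTop :=
  tendsto_atTop_atTop_of_monotone (fun _ _ h => Nat.sqrt_le_sqrt h)
    fun k => ⟨k * k, (Nat.sqrt_eq k).ge⟩

lemma tendsto_clog_atTop {b : ℕ} (hb : 1 < b) : Tendsto (Nat.clog b) atTop atTop :=
  tendsto_atTop_atTop_of_monotone (fun _ _ h => Nat.clog_mono_right b h)
    fun k => ⟨b ^ k, (Nat.clog_pow b k hb).ge⟩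

lemma one_add_one_div_pow_sqrt_le_exp (k : ℕ) :
    (1 + 1 / (k : ℝ)) ^ k.sqrt ≤ Real.exp (1 / (k.sqrt : ℝ)) := by
  obtain rfl | hk := k.eq_zero_or_pos
  · simp
  have hsqrt : (0 : ℝ) < k.sqrt := mod_cast Nat.sqrt_pos.2 hk
  have hsq : (k.sqrt : ℝ) * k.sqrt ≤ k := mod_cast Nat.sqrt_le k
  calc (1 + 1 / (k : ℝ)) ^ k.sqrt ≤ Real.exp (1 / (k : ℝ)) ^ k.sqrt := by
        gcongr
        exact (add_comm _ _).trans_le (Real.add_one_le_exp _)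
    _ = Real.exp (k.sqrt / k) := by rw [← Real.exp_nat_mul, mul_one_div]
    _ ≤ Real.exp (1 / (k.sqrt : ℝ)) := by
        rw [Real.exp_le_exp]
        rwa [div_le_div_iff₀ (mod_cast hk) hsqrt, one_mul]

lemma tendsto_pow_sqrt_sub_one_add_mul_half_pow_sqrt :
    Tendsto (fun k : ℕ => (1 + 1 / (k : ℝ)) ^ k.sqrt - 1 + k * (1 / 2) ^ k.sqrt) atTop
      (nhds 0) := by
  have hexp : Tendsto (fun m : ℕ => Real.exp (1 / (m : ℝ)) - 1) atTop (nhds 0) := by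
    simpa using ((Real.continuous_exp.tendsto 0).comp
      (tendsto_one_div_atTop_nhds_zero_nat (𝕜 := ℝ))).sub_const 1
  have hpow : Tendsto (fun m : ℕ => ((m : ℝ) + 1) ^ 2 * (1 / 2) ^ m) atTop (nhds 0) := by
    have hterm (j : ℕ) : Tendsto (fun m : ℕ => (m : ℝ) ^ j * (1 / 2 : ℝ) ^ m) atTop (nhds 0) :=
      tendsto_pow_const_mul_const_pow_of_lt_one j (by norm_num) (by norm_num)
    have hsum := ((hterm 2).add ((hterm 1).const_mul 2)).add (hterm 0)
    simp only [mul_zero, add_zero] at hsum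
    exact hsum.congr fun m => by ring
  have hbound : Tendsto (fun k : ℕ => Real.exp (1 / (k.sqrt : ℝ)) - 1 +
      ((k.sqrt : ℝ) + 1) ^ 2 * (1 / 2) ^ k.sqrt) atTop (nhds 0) := by
    simpa [Function.comp_def] using (hexp.add hpow).comp tendsto_natSqrt_atTop
  refine squeeze_zero (fun k => ?_) (fun k => ?_) hbound
  · have : 1 ≤ (1 + 1 / (k : ℝ)) ^ k.sqrt := one_le_pow₀ (by simp)
    have : 0 ≤ (k : ℝ) * (1 / 2) ^ k.sqrt := by positivity
    linarith
  · gcongr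
    · exact one_add_one_div_pow_sqrt_le_exp k
    · rw [sq]
      exact_mod_cast (Nat.lt_succ_sqrt k).le

theorem rainbow_ham_n_colors_even_general :
    ∃ K : ℝ, 0 < K ∧ ∀ (p : ℕ → ℝ) (κ : ℕ → ℕ),
      (∀ᶠ n : ℕ in atTop, K * Real.log n / n < p n ∧ p n ≤ 1) → (∀ᶠ n in atTop, n ≤ κ n) →
      Tendsto (fun n : ℕ => coloredGnp n (κ n) (p n) {x | IsRainbowHamCycle x.1 x.2})
        atTop (nhds 1) := by
  refine ⟨972, by norm_num, fun p κ hp hκ => ?_⟩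
  have hlower : Tendsto (fun n => ENNReal.ofReal (1 - ((1 + 1 / (Nat.clog 2 n : ℝ)) ^
      (Nat.clog 2 n).sqrt - 1 + Nat.clog 2 n * (1 / 2) ^ (Nat.clog 2 n).sqrt))) atTop (nhds 1) := by
    simpa using ENNReal.tendsto_ofReal ((tendsto_pow_sqrt_sub_one_add_mul_half_pow_sqrt.comp
      (tendsto_clog_atTop one_lt_two)).const_sub 1)
  refine tendsto_of_tendsto_of_tendsto_of_le_of_le' hlower tendsto_const_nhds ?_ ?_
  · filter_upwards [hp, hκ, eventually_ge_atTop 3] with n ⟨hpn, hp1⟩ hκn hn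
    have hclog : 0 < Nat.clog 2 n := Nat.clog_pos one_lt_two (by omega)
    refine le_coloredGnp_isRainbowHamCycle hn hκn hp1 hclog ?_ ?_
    · exact (Nat.le_pow_clog one_lt_two n).trans
        (Nat.le_mul_of_pos_left _ (Nat.sqrt_pos.2 hclog))
    · rw [div_lt_iff₀' (by positivity)] at hpn
      linarith [clog_two_le_three_mul_log hn]
  · filter_upwards [hκ, eventually_ge_atTop 1] with n hκn hn
    have : NeZero (κ n) := ⟨by omega⟩
    exact prob_le_one

end Asymptotics

/-- There is an absolute constant `K` such that if `p = p(n) > K·log n / n`,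
then, as `n → ∞` through even integers, `G_{n,p,n}` (with exactly `n` colors) contains a
rainbow Hamilton cycle with high probability. -/
theorem rainbow_ham_n_colors_even :
    ∃ K : ℝ, 0 < K ∧ ∀ p : ℕ → ℝ,
      (∀ᶠ n : ℕ in atTop, K * Real.log n / n < p n ∧ p n ≤ 1) →
      Tendsto
        (fun m : ℕ =>
          coloredGnp (2 * m) (2 * m) (p (2 * m)) {x | IsRainbowHamCycle x.1 x.2})
        atTop (nhds 1) := by
  obtain ⟨K, hK, h⟩ := rainbow_ham_n_colors_even_general
  exact ⟨K, hK, fun p hp => (h p id hp (.of_forall fun _ => le_rfl)).comp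
    (tendsto_id.const_mul_atTop' two_pos)⟩
end

section
/- Let ε = ε(n) and θ = θ(n) satisfy 100/√(log log n) < ε, θ ≤ 1. Set p = (1+ε)·log(n)/n and κ = ⌈(1+θ)n⌉. Then G_{n,p,κ} contains a rainbow Hamilton cycle with high probability. -/
open MeasureTheory Filter

/-!
Lower the edge probability from `(1 + ε) log n / n` to `(1 + 50 / √(log log n)) log n / n` and give
each pair two independent *free flags* of probability `q = log n / (n log log n)`; a flagged
pair may be used irrespective of its presence and color. Passing back to the original model one pair
at a time does not decrease the probability of a Hamilton cycle that is rainbow on its unflagged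
edges: the other edges of the cycle leave `κ - n` colors admissible for the pair, so the increase in
edge probability outweighs the loss of the flags.

In the flagged model, with `m ≈ n / log log n`, the first flags join any two disjoint `m`-sets of
vertices, so they form a graph that expands outside an exceptional set `L` of at most `m` vertices.
The colored graph has enough edges to attach to every vertex of `L` two edges with distinct leaves
and distinct colors; this rainbow family of cherries repairs the expansion at `L`. The result is a
connected expander, which by Pósa rotations has `m ^ 2 / 2` boosters unless it is Hamiltonian. The
second flags hit such boosters again and again: a union bound over the set of at most `n` pairs
added so far shows that the process never gets stuck before a Hamilton cycle appears.
-/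

namespace RainbowHam

/-! ### Pósa rotations and boosters -/

section Rotation

open Finset SimpleGraph

variable {V : Type*} {G : SimpleGraph V} {u v : V}

/-- The walks obtained from `p₀` by Pósa rotations: if the end `y` of the current walk is adjacent
to an earlier vertex `x`, the edge `xz` leaving `x` is exchanged for `xy`, so that `z` becomes the
new end. The start of the walk never changes. -/
inductive IsRotation (p₀ : G.Walk u v) : ∀ {w : V}, G.Walk u w → Prop
  | refl : IsRotation p₀ p₀
  | rotate {x y z : V} (p : G.Walk u x) (hxz : G.Adj x z) (q : G.Walk z y) (hxy : G.Adj x y) :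
      IsRotation p₀ (p.append (.cons hxz q)) → IsRotation p₀ (p.append (.cons hxy q.reverse))

variable {p₀ : G.Walk u v}

theorem IsRotation.length_eq {w : V} {q : G.Walk u w} (hq : IsRotation p₀ q) :
    q.length = p₀.length := by
  induction hq with
  | refl => rfl
  | rotate p hxz q hxy _ ih => simpa using ih

theorem IsRotation.isPath {w : V} {q : G.Walk u w} (hq : IsRotation p₀ q) (hp₀ : p₀.IsPath) :
    q.IsPath := by
  induction hq with
  | refl => exact hp₀
  | rotate p hxz q hxy _ ih =>
    rw [Walk.isPath_def, Walk.support_append] at ih ⊢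
    refine (List.Perm.nodup_iff (List.Perm.append_left _ ?_)).1 ih
    simp

theorem exists_eq_append_cons {x y : V} {q : G.Walk u y} (hx : x ∈ q.support) (hxy : x ≠ y) :
    ∃ (z : V) (p : G.Walk u x) (h : G.Adj x z) (r : G.Walk z y), q = p.append (.cons h r) := by
  obtain ⟨p, r, rfl⟩ := Walk.mem_support_iff_exists_append.1 hx
  cases r with
  | nil => exact absurd rfl hxy
  | cons h r => exact ⟨_, p, h, r, rfl⟩

theorem IsRotation.mem_edges_of_forall_notMem {S : Set V}
    (hS : ∀ {w : V} {q : G.Walk u w}, IsRotation p₀ q → w ∈ S) {x : V} (hx : x ∉ S)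
    (hx₀ : ∀ z ∈ S, s(x, z) ∉ p₀.edges) {w : V} {q : G.Walk u w} (hq : IsRotation p₀ q) {z : V}
    (hz : s(x, z) ∈ q.edges) : s(x, z) ∈ p₀.edges := by
  induction hq generalizing z with
  | refl => exact hz
  | @rotate x' y' z' p hxz q hxy hpq ih =>
    have hxy' : x ≠ y' := fun h => hx (h ▸ hS hpq)
    have hxx' : x ≠ x' := by
      rintro rfl
      exact hx₀ z' (hS (hpq.rotate p hxz q hxy)) (ih (by simp))
    refine ih ?_
    simp only [Walk.edges_append, Walk.edges_cons, Walk.edges_reverse, List.mem_append,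
      List.mem_cons, List.mem_reverse, Sym2.eq_iff] at hz ⊢
    tauto

theorem IsRotation.exists_mem_edges_of_adj
    (hmax : ∀ {a b : V} (q : G.Walk a b), q.IsPath → q.length ≤ p₀.length) (hp₀ : p₀.IsPath)
    {S : Set V} (hS : ∀ {w : V} {q : G.Walk u w}, IsRotation p₀ q → w ∈ S)
    {w : V} {q : G.Walk u w} (hq : IsRotation p₀ q) {x : V} (hwx : G.Adj w x) (hx : x ∉ S) :
    ∃ z ∈ S, s(x, z) ∈ p₀.edges := by
  by_contra! hx₀
  have hxq : x ∈ q.support := by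
    by_contra hxq
    have hlen := hmax _ ((hq.isPath hp₀).concat hxq hwx)
    rw [Walk.length_concat, hq.length_eq] at hlen
    omega
  obtain ⟨z, p, hxz, r, rfl⟩ := exists_eq_append_cons hxq hwx.ne'
  exact hx₀ z (hS (hq.rotate p hxz r hwx.symm))
    (hq.mem_edges_of_forall_notMem hS hx hx₀ (by simp))

theorem ncard_neighborSet_toSubgraph_end_le_one {p : G.Walk u v} (hp : p.IsPath) :
    (p.toSubgraph.neighborSet v).ncard ≤ 1 := by
  by_cases hnil : p.Nil
  · cases hnil
    simp
  · rw [hp.neighborSet_toSubgraph_endpoint hnil, Set.ncard_singleton]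

theorem ncard_neighborSet_toSubgraph_le_two {p : G.Walk u v} (hp : p.IsPath) (w : V) :
    (p.toSubgraph.neighborSet w).ncard ≤ 2 := by
  by_cases hw : w ∈ p.support
  · obtain ⟨i, rfl, hi⟩ := Walk.mem_support_iff_exists_getVert.1 hw
    rcases Nat.eq_zero_or_pos i with rfl | hi0
    · have := ncard_neighborSet_toSubgraph_end_le_one hp.reverse
      simp only [Walk.toSubgraph_reverse, Walk.getVert_zero] at this ⊢
      omega
    rcases hi.eq_or_lt with rfl | hi
    · simpa using (ncard_neighborSet_toSubgraph_end_le_one hp).trans one_le_two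
    · exact (hp.ncard_neighborSet_toSubgraph_internal_eq_two hi0.ne' hi).le
  · have hempty : p.toSubgraph.neighborSet w = ∅ := by
      ext z
      simp only [Subgraph.mem_neighborSet, Set.mem_empty_iff_false, iff_false]
      exact fun h => hw (p.mem_verts_toSubgraph.1 h.fst_mem)
    simp [hempty]

/-- The end of a path has at most one neighbour along it, every other vertex at most two. -/
theorem card_biUnion_neighborSet_toSubgraph_lt [DecidableEq V] {p : G.Walk u v} (hp : p.IsPath)
    {S : Finset V} (hv : v ∈ S) :
    #(S.biUnion fun w => (p.finite_neighborSet_toSubgraph (w := w)).toFinset) < 2 * #S := by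
  have hbound : ∀ w ∈ S.erase v, #(p.finite_neighborSet_toSubgraph (w := w)).toFinset ≤ 2 :=
    fun w _ => (Set.ncard_eq_toFinset_card _ _).symm.trans_le
      (ncard_neighborSet_toSubgraph_le_two hp w)
  have hend : #(p.finite_neighborSet_toSubgraph (w := v)).toFinset ≤ 1 :=
    (Set.ncard_eq_toFinset_card _ _).symm.trans_le (ncard_neighborSet_toSubgraph_end_le_one hp)
  have hrest := card_biUnion_le_card_mul _ _ 2 hbound
  rw [card_erase_of_mem hv] at hrest
  have hpos : 0 < #S := card_pos.2 ⟨v, hv⟩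
  rw [← insert_erase hv, biUnion_insert, insert_erase hv]
  have := card_union_le (p.finite_neighborSet_toSubgraph (w := v)).toFinset
    ((S.erase v).biUnion fun w => (p.finite_neighborSet_toSubgraph (w := w)).toFinset)
  omega

end Rotation

section Expansion

open Finset SimpleGraph

variable {V : Type*} [Fintype V] {G H : SimpleGraph V} {u v : V} {m : ℕ}

open Classical in
/-- The external neighbourhood of `S`: the vertices outside `S` with a neighbour in `S`. -/
noncomputable def extNbhd (G : SimpleGraph V) (S : Finset V) : Finset V :=
  {v | v ∉ S ∧ ∃ u ∈ S, G.Adj u v}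

theorem mem_extNbhd {S : Finset V} {v : V} :
    v ∈ extNbhd G S ↔ v ∉ S ∧ ∃ u ∈ S, G.Adj u v := by
  simp [extNbhd]

theorem extNbhd_mono (hGH : G ≤ H) (S : Finset V) : extNbhd G S ⊆ extNbhd H S := by
  intro v
  simp only [mem_extNbhd]
  exact fun ⟨hv, u, hu, huv⟩ => ⟨hv, u, hu, hGH huv⟩

/-- Every set of at most `m` vertices has at least twice as many external neighbours. -/
def IsExpander (G : SimpleGraph V) (m : ℕ) : Prop :=
  ∀ S : Finset V, #S ≤ m → 2 * #S ≤ #(extNbhd G S)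

theorem IsExpander.mono (hG : IsExpander G m) (hGH : G ≤ H) : IsExpander H m :=
  fun S hS => (hG S hS).trans (card_le_card (extNbhd_mono hGH S))

theorem exists_card_gt_forall_isPath_of_longest (hG : IsExpander G m) {p : G.Walk u v}
    (hp : p.IsPath) (hmax : ∀ {a b : V} (q : G.Walk a b), q.IsPath → q.length ≤ p.length) :
    ∃ B : Finset V, m < #B ∧ ∀ w ∈ B, ∃ q : G.Walk u w, q.IsPath ∧ q.length = p.length := by
  classical
  let S : Finset V := {w | ∃ q : G.Walk u w, IsRotation p q}
  have hS {w : V} {q : G.Walk u w} (hq : IsRotation p q) : w ∈ (S : Set V) := by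
    simpa [S] using ⟨q, hq⟩
  refine ⟨S, ?_, fun w hw => ?_⟩
  · by_contra! hSm
    have hsub : extNbhd G S ⊆
        S.biUnion fun w => (p.finite_neighborSet_toSubgraph (w := w)).toFinset := by
      intro x hx
      obtain ⟨hxS, w, hw, hwx⟩ := mem_extNbhd.1 hx
      obtain ⟨q, hq⟩ := (mem_filter.1 hw).2
      obtain ⟨z, hz, hxz⟩ := hq.exists_mem_edges_of_adj hmax hp hS hwx (by simpa using hxS)
      refine mem_biUnion.2 ⟨z, mem_coe.1 hz, ?_⟩
      rw [Set.Finite.mem_toFinset, Subgraph.mem_neighborSet, ← Subgraph.mem_edgeSet,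
        Walk.mem_edges_toSubgraph, Sym2.eq_swap]
      exact hxz
    have := (hG S hSm).trans (card_le_card hsub)
    have := card_biUnion_neighborSet_toSubgraph_lt hp (mem_coe.1 (hS .refl))
    omega
  · obtain ⟨q, hq⟩ := (mem_filter.1 hw).2
    exact ⟨q, hq.isPath hp, hq.length_eq⟩

end Expansion

section Boosters

open Finset SimpleGraph

variable {V : Type*}

theorem card_le_two_mul_card_image_sym2 [DecidableEq V] (T : Finset (V × V)) :
    #T ≤ 2 * #(T.image fun z => s(z.1, z.2)) := by
  refine card_le_mul_card_image T 2 fun e _ => ?_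
  induction e with | _ a b => ?_
  refine (card_le_card fun z hz => ?_).trans (card_le_two (a := (a, b)) (b := (b, a)))
  simpa [Prod.ext_iff] using (mem_filter.1 hz).2

variable [Fintype V] {G : SimpleGraph V} {u v : V} {m : ℕ}

theorem IsExpander.exists_isPath_length_eq_two (hG : IsExpander G m) (hm : 0 < m) (v : V) :
    ∃ (a b : V) (p : G.Walk a b), p.IsPath ∧ p.length = 2 := by
  have hcard : 1 < #(extNbhd G {v}) := by
    simpa [Nat.succ_le_iff] using hG {v} (by rwa [card_singleton])
  obtain ⟨a, ha, b, hb, hab⟩ := one_lt_card.1 hcard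
  simp only [mem_extNbhd, mem_singleton, exists_eq_left] at ha hb
  refine ⟨a, b, .cons ha.2.symm (.cons hb.2 .nil), ?_, rfl⟩
  simp [Walk.cons_isPath_iff, ha.1, hab, Ne.symm hb.1]

theorem IsExpander.exists_pairs_forall_isPath_of_longest (hexp : IsExpander G m) {p : G.Walk u v}
    (hp : p.IsPath) (hmax : ∀ {a b : V} (q : G.Walk a b), q.IsPath → q.length ≤ p.length) :
    ∃ T : Finset (V × V), m * m ≤ #T ∧
      ∀ z ∈ T, ∃ q : G.Walk z.1 z.2, q.IsPath ∧ q.length = p.length := by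
  classical
  obtain ⟨A, hA, hpA⟩ := exists_card_gt_forall_isPath_of_longest hexp hp hmax
  have hends (a : V) (ha : a ∈ A) : ∃ B : Finset V, m < #B ∧
      ∀ b ∈ B, ∃ q : G.Walk a b, q.IsPath ∧ q.length = p.length := by
    obtain ⟨q, hq, hqp⟩ := hpA a ha
    rw [← hqp, ← q.length_reverse] at hmax ⊢
    exact exists_card_gt_forall_isPath_of_longest hexp hq.reverse hmax
  choose! B hB hpB using hends
  refine ⟨A.biUnion fun a => (B a).map ⟨Prod.mk a, Prod.mk_right_injective a⟩, ?_, ?_⟩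
  · rw [card_biUnion fun a _ a' _ haa' => by simp [Finset.disjoint_left, haa'.symm]]
    simp only [card_map]
    exact (Nat.mul_le_mul_right m hA.le).trans (card_nsmul_le_sum A _ m fun a ha => (hB a ha).le)
  · rintro ⟨a, b⟩ hab
    obtain ⟨ha, hb⟩ : a ∈ A ∧ b ∈ B a := by simpa using hab
    exact hpB a ha b hb

variable [DecidableEq V]

theorem isHamiltonian_or_exists_longer_isPath (hG : G.Connected) {p : G.Walk u v}
    (hp : p.IsPath) (hlen : 2 ≤ p.length) (hvu : G.Adj v u) :
    G.IsHamiltonian ∨ ∃ (a b : V) (q : G.Walk a b), q.IsPath ∧ p.length < q.length := by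
  have hcycle : (Walk.cons hvu p).IsCycle := by
    rw [Walk.cons_isCycle_iff]
    refine ⟨hp, fun hmem => ?_⟩
    have := hp.length_eq_one_of_mem_edges (Sym2.eq_swap ▸ hmem)
    omega
  by_cases hall : ∀ w, w ∈ p.support
  · exact .inl fun _ => ⟨v, _, hcycle,
      hcycle.isPath_tail.isHamiltonian_of_mem fun w => by simpa using hall w⟩
  · push Not at hall
    obtain ⟨w, hw⟩ := hall
    obtain ⟨r⟩ := hG.preconnected u w
    obtain ⟨d, -, hd₁, hd₂⟩ := r.exists_boundary_dart {x | x ∈ p.support} p.start_mem_support hw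
    have hsupp (x : V) : x ∈ (Walk.cons hvu p).support ↔ x ∈ p.support := by
      simpa using fun h : x = v => h ▸ p.end_mem_support
    have hmem : d.fst ∈ (Walk.cons hvu p).support := (hsupp _).2 hd₁
    have hrot := (Walk.isCycle_rotate hmem).2 hcycle
    refine .inr ⟨_, _, _, hrot.isPath_tail.concat (fun h => hd₂ ?_) d.adj, ?_⟩
    · rw [Walk.support_tail_of_not_nil _ hrot.not_nil] at h
      exact (hsupp _).1 ((Walk.mem_support_rotate_iff _ _ hmem).1 (List.mem_of_mem_tail h))
    · have := Walk.length_tail_add_one hrot.not_nil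
      simp only [Walk.length_rotate, Walk.length_cons] at this
      simp only [Walk.length_concat]
      omega

/-- A booster of `G`: a non-edge whose addition creates a Hamilton cycle or a path longer than all
paths of `G`. -/
def IsBooster (G : SimpleGraph V) (e : Sym2 V) : Prop :=
  e ∉ G.edgeSet ∧ ((G ⊔ fromEdgeSet {e}).IsHamiltonian ∨
    ∃ (a b : V) (q : (G ⊔ fromEdgeSet {e}).Walk a b), q.IsPath ∧
      ∀ {c d : V} (p : G.Walk c d), p.IsPath → p.length < q.length)

theorem isBooster_of_longest (hG : G.Connected) (hHam : ¬ G.IsHamiltonian) {p : G.Walk u v}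
    (hp : p.IsPath) (hlen : 2 ≤ p.length)
    (hmax : ∀ {a b : V} (q : G.Walk a b), q.IsPath → q.length ≤ p.length) :
    IsBooster G s(u, v) := by
  have huv : u ≠ v := by
    rintro rfl
    have := Walk.length_eq_zero_iff.2 (Walk.isPath_iff_nil.1 hp)
    omega
  have hle : G ≤ G ⊔ fromEdgeSet {s(u, v)} := le_sup_left
  refine ⟨fun hadj => ?_, ?_⟩
  · rcases isHamiltonian_or_exists_longer_isPath hG hp hlen (G.adj_symm hadj)
      with h | ⟨a, b, q, hq, hlt⟩
    · exact hHam h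
    · exact (hmax q hq).not_gt hlt
  · have hvu : (G ⊔ fromEdgeSet {s(u, v)}).Adj v u := by simp [huv.symm, Sym2.eq_swap]
    refine (isHamiltonian_or_exists_longer_isPath (hG.mono hle) (hp.mapLe hle) (by simpa using hlen)
      hvu).imp_right ?_
    rintro ⟨a, b, q, hq, hlt⟩
    exact ⟨a, b, q, hq, fun r hr => (hmax r hr).trans_lt (by simpa using hlt)⟩

theorem IsExpander.exists_boosters (hexp : IsExpander G m) (hconn : G.Connected)
    (hHam : ¬ G.IsHamiltonian) :
    ∃ B : Finset (Sym2 V), m * m ≤ 2 * #B ∧ ∀ e ∈ B, IsBooster G e := by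
  rcases Nat.eq_zero_or_pos m with rfl | hm
  · exact ⟨∅, by simp, by simp⟩
  have := hconn.nonempty
  obtain ⟨u, v, p, hp, hmax⟩ := Walk.exists_isPath_forall_isPath_length_le_length G
  have hlen : 2 ≤ p.length := by
    obtain ⟨a, b, q, hq, hq2⟩ := hexp.exists_isPath_length_eq_two hm u
    exact hq2 ▸ hmax a b q hq
  obtain ⟨T, hT, hpT⟩ := hexp.exists_pairs_forall_isPath_of_longest hp (hmax _ _ ·)
  refine ⟨T.image fun z => s(z.1, z.2), hT.trans (card_le_two_mul_card_image_sym2 T),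
    fun e he => ?_⟩
  obtain ⟨z, hz, rfl⟩ := mem_image.1 he
  obtain ⟨q, hq, hqp⟩ := hpT z hz
  exact isBooster_of_longest hconn hHam hq (by omega) (fun r hr => hqp ▸ hmax _ _ r hr)

theorem isHamiltonian_sup_fromEdgeSet_of_boosters [Nonempty V] (E : Finset (Sym2 V))
    (hE : ∀ Δ ⊆ E, #Δ ≤ Fintype.card V → ¬ (G ⊔ fromEdgeSet (Δ : Set (Sym2 V))).IsHamiltonian →
      ∃ e ∈ E, IsBooster (G ⊔ fromEdgeSet (Δ : Set (Sym2 V))) e) :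
    (G ⊔ fromEdgeSet (E : Set (Sym2 V))).IsHamiltonian := by
  by_contra hno
  have hnot {Δ : Finset (Sym2 V)} (hΔ : Δ ⊆ E) :
      ¬ (G ⊔ fromEdgeSet (Δ : Set (Sym2 V))).IsHamiltonian :=
    fun h => hno (h.mono (sup_le_sup_left (fromEdgeSet_mono (coe_subset.2 hΔ)) G))
  have hpath : ∀ j ≤ Fintype.card V, ∃ Δ ⊆ E, #Δ ≤ j ∧
      ∃ (a b : V) (p : (G ⊔ fromEdgeSet (Δ : Set (Sym2 V))).Walk a b), p.IsPath ∧ j ≤ p.length := by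
    intro j
    induction j with
    | zero =>
      exact fun _ => ⟨∅, empty_subset _, le_rfl, Classical.arbitrary V, _, .nil, .nil, le_rfl⟩
    | succ j ih =>
      intro hj
      obtain ⟨Δ, hΔ, hcard, a, b, p, hp, hlen⟩ := ih (by omega)
      obtain ⟨e, he, -, hboost⟩ := hE Δ hΔ (by omega) (hnot hΔ)
      have hsub : insert e Δ ⊆ E := insert_subset he hΔ
      rw [sup_assoc, ← fromEdgeSet_union, Set.union_singleton, ← coe_insert] at hboost
      obtain ⟨c, d, q, hq, hlt⟩ := hboost.resolve_left (hnot hsub)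
      exact ⟨insert e Δ, hsub, (card_insert_le _ _).trans (by omega), c, d, q, hq,
        hlen.trans_lt (hlt p hp)⟩
  obtain ⟨Δ, -, -, a, b, p, hp, hlen⟩ := hpath _ le_rfl
  exact hp.length_lt.not_ge hlen

end Boosters

/-! ### Repairing expansion with cherries -/

section Core

open Finset SimpleGraph

variable {V : Type*} {G H : SimpleGraph V} {m : ℕ}

/-- Any two disjoint sets of at least `m` vertices are joined by an edge. -/
def IsJoined (G : SimpleGraph V) (m : ℕ) : Prop :=
  ∀ A B : Finset V, Disjoint A B → m ≤ #A → m ≤ #B → ∃ a ∈ A, ∃ b ∈ B, G.Adj a b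

theorem IsJoined.mono (hG : IsJoined G m) (hGH : G ≤ H) : IsJoined H m := fun A B hAB hA hB =>
  let ⟨a, ha, b, hb, hab⟩ := hG A B hAB hA hB
  ⟨a, ha, b, hb, hGH hab⟩

variable [Fintype V]

theorem IsExpander.lt_card_of_extNbhd_eq_empty (hG : IsExpander G m) {S : Finset V}
    (hS : S.Nonempty) (hnbhd : extNbhd G S = ∅) : m < #S := by
  by_contra! hSm
  have hexp := hG S hSm
  rw [hnbhd, card_empty] at hexp
  have := hS.card_pos
  omega

theorem IsExpander.connected [Nonempty V] (hexp : IsExpander G m) (hjoin : IsJoined G m) :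
    G.Connected := by
  classical
  refine ⟨fun u w => ?_⟩
  by_contra huw
  let S : Finset V := {x | G.Reachable u x}
  have hS {x : V} : x ∈ S ↔ G.Reachable u x := by simp [S]
  have hclosed {x y : V} (hxy : G.Adj x y) : x ∈ S ↔ y ∈ S := by
    rw [hS, hS]
    exact ⟨fun h => h.trans hxy.reachable, fun h => h.trans hxy.symm.reachable⟩
  have hcardS : m < #S := by
    refine hexp.lt_card_of_extNbhd_eq_empty ⟨u, hS.2 .rfl⟩ (eq_empty_of_forall_notMem ?_)
    intro y hy
    obtain ⟨hyS, x, hx, hxy⟩ := mem_extNbhd.1 hy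
    exact hyS ((hclosed hxy).1 hx)
  have hcardS' : m < #Sᶜ := by
    refine hexp.lt_card_of_extNbhd_eq_empty ⟨w, mem_compl.2 (hS.not.2 huw)⟩
      (eq_empty_of_forall_notMem ?_)
    intro y hy
    obtain ⟨hyS, x, hx, hxy⟩ := mem_extNbhd.1 hy
    exact mem_compl.1 hx ((hclosed hxy).2 (by simpa using hyS))
  obtain ⟨a, ha, b, hb, hab⟩ := hjoin S Sᶜ disjoint_compl_right hcardS.le hcardS'.le
  exact mem_compl.1 hb ((hclosed hab).1 ha)

variable [DecidableEq V] {L R : Finset V}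

/-- Outside the exceptional set `L`, sets of at most `m` vertices expand threefold into `R \ L`. -/
def ExpandsOutside (G : SimpleGraph V) (m : ℕ) (R L : Finset V) : Prop :=
  ∀ S : Finset V, Disjoint S L → #S ≤ m → 3 * #S ≤ #((extNbhd G S ∩ R) \ L)

theorem extNbhd_union_inter_subset (G : SimpleGraph V) (R S T : Finset V) :
    extNbhd G (S ∪ T) ∩ R ⊆ (extNbhd G S ∩ R) ∪ ((extNbhd G T ∩ R) \ S) := by
  intro v
  simp only [mem_inter, mem_extNbhd, mem_union, Finset.mem_sdiff]
  rintro ⟨⟨hv, u, hu, huv⟩, hvR⟩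
  rcases hu with hu | hu
  · exact .inl ⟨⟨fun h => hv (.inl h), u, hu, huv⟩, hvR⟩
  · exact .inr ⟨⟨⟨fun h => hv (.inr h), u, hu, huv⟩, hvR⟩, fun h => hv (.inl h)⟩

theorem IsJoined.lt_card_extNbhd_inter (hG : IsJoined G m) (hR : 9 * m ≤ #R) {S : Finset V}
    (hmS : m ≤ #S) (hS : #S ≤ 2 * m) : 3 * #S < #(extNbhd G S ∩ R) := by
  by_contra! hsmall
  have hrest : m ≤ #(R \ (S ∪ (extNbhd G S ∩ R))) := by
    have := le_card_sdiff (S ∪ (extNbhd G S ∩ R)) R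
    have := card_union_le S (extNbhd G S ∩ R)
    omega
  obtain ⟨a, ha, b, hb, hab⟩ := hG S _
    (disjoint_sdiff.mono_left subset_union_left) hmS hrest
  simp only [Finset.mem_sdiff, mem_union, mem_inter, not_or] at hb
  exact hb.2.2 ⟨mem_extNbhd.2 ⟨hb.2.1, a, ha, hab⟩, hb.1⟩

theorem IsJoined.exists_expandsOutside (hG : IsJoined G m) (hR : 9 * m ≤ #R) :
    ∃ L : Finset V, #L ≤ m ∧ ExpandsOutside G m R L := by
  -- A largest poorly expanding set of size at most `m`: no set disjoint from it expands poorly.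
  obtain ⟨L, hL, hmax⟩ := exists_max_image
    ({X | #X ≤ m ∧ #(extNbhd G X ∩ R) ≤ 3 * #X} : Finset (Finset V)) card
    ⟨∅, mem_filter.2 ⟨mem_univ _, by simp [extNbhd]⟩⟩
  simp only [mem_filter, mem_univ, true_and] at hL hmax
  refine ⟨L, hL.1, fun S hSL hSm => ?_⟩
  by_contra! hlt
  have hcard : #(L ∪ S) = #L + #S := card_union_of_disjoint hSL.symm
  have hnbhd : #(extNbhd G (L ∪ S) ∩ R) ≤ 3 * #(L ∪ S) := by
    have := (card_le_card (extNbhd_union_inter_subset G R L S)).trans (card_union_le _ _)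
    omega
  have hlarge : m < #(L ∪ S) := by
    by_contra! hle
    have := hmax (L ∪ S) ⟨hle, hnbhd⟩
    omega
  exact (hG.lt_card_extNbhd_inter hR hlarge.le (by omega)).not_ge hnbhd

end Core

section Cherries

open Finset SimpleGraph

variable {V : Type*}

/-- The cherries with centres `b ∈ L` and leaves `y b true`, `y b false`, as a set of edges. -/
def cherries (L : Finset V) (y : V → Bool → V) : Set (Sym2 V) :=
  {e | ∃ b ∈ L, ∃ i, e = s(b, y b i)}

variable [DecidableEq V] {L : Finset V} {y : V → Bool → V}

theorem card_image_leaves (hinj : Set.InjOn (fun z : V × Bool => y z.1 z.2) (L ×ˢ Set.univ))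
    {S : Finset V} (hS : S ⊆ L) :
    #((S ×ˢ (univ : Finset Bool)).image fun z => y z.1 z.2) = 2 * #S := by
  rw [card_image_of_injOn (hinj.mono ?_), card_product, card_univ, Fintype.card_bool, mul_comm]
  rintro ⟨b, i⟩ hb
  simp only [coe_product, Set.mem_prod, mem_coe] at hb ⊢
  exact ⟨hS hb.1, Set.mem_univ i⟩

variable [Fintype V] {G : SimpleGraph V} {m : ℕ} {R : Finset V}

theorem image_leaves_sdiff_subset_extNbhd (hy : ∀ b ∈ L, ∀ i, y b i ∉ L) (S : Finset V) :
    ((S ∩ L) ×ˢ (univ : Finset Bool)).image (fun z => y z.1 z.2) \ (S \ L) ⊆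
      extNbhd (fromEdgeSet (cherries L y)) S := by
  intro v hv
  obtain ⟨hvl, hvS⟩ := Finset.mem_sdiff.1 hv
  obtain ⟨⟨b, i⟩, hb, rfl⟩ := mem_image.1 hvl
  obtain ⟨hbS, hbL⟩ := mem_inter.1 (mem_product.1 hb).1
  refine mem_extNbhd.2 ⟨fun h => hvS (Finset.mem_sdiff.2 ⟨h, hy b hbL i⟩), b, hbS, ?_⟩
  exact (fromEdgeSet_adj _).2 ⟨⟨b, hbL, i, rfl⟩, fun h => hy b hbL i (h ▸ hbL)⟩

theorem extNbhd_sdiff_sdiff_subset (G : SimpleGraph V) (S L : Finset V) :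
    extNbhd G (S \ L) \ L ⊆ extNbhd G S := by
  intro v
  simp only [Finset.mem_sdiff, mem_extNbhd]
  rintro ⟨⟨hvS, u, hu, huv⟩, hvL⟩
  exact ⟨fun h => hvS ⟨h, hvL⟩, u, hu.1, huv⟩

theorem ExpandsOutside.isExpander_sup_cherries (hL : ExpandsOutside G m R L)
    (hy : ∀ b ∈ L, ∀ i, y b i ∉ R ∪ L)
    (hinj : Set.InjOn (fun z : V × Bool => y z.1 z.2) (L ×ˢ Set.univ)) :
    IsExpander (G ⊔ fromEdgeSet (cherries L y)) m := by
  intro S hSm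
  set leaves := ((S ∩ L) ×ˢ (univ : Finset Bool)).image fun z => y z.1 z.2
  set outer := (extNbhd G (S \ L) ∩ R) \ L
  have hcardS : #(S ∩ L) + #(S \ L) = #S := card_inter_add_card_sdiff S L
  have hleaves : #leaves = 2 * #(S ∩ L) := card_image_leaves hinj inter_subset_right
  have houter : 3 * #(S \ L) ≤ #outer := hL _ sdiff_disjoint (by omega)
  have hdisj : Disjoint (leaves \ (S \ L)) outer := by
    refine disjoint_of_subset_left sdiff_subset (Finset.disjoint_left.2 fun v hv hvo => ?_)
    obtain ⟨⟨b, i⟩, hb, rfl⟩ := mem_image.1 hv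
    exact hy b (mem_inter.1 (mem_product.1 hb).1).2 i
      (mem_union_left _ (mem_inter.1 (Finset.mem_sdiff.1 hvo).1).2)
  have hsub : (leaves \ (S \ L)) ∪ outer ⊆ extNbhd (G ⊔ fromEdgeSet (cherries L y)) S :=
    union_subset
      ((image_leaves_sdiff_subset_extNbhd
        (fun b hb i h => hy b hb i (mem_union_right _ h)) S).trans (extNbhd_mono le_sup_right S))
      ((sdiff_subset_sdiff inter_subset_left le_rfl).trans
        ((extNbhd_sdiff_sdiff_subset G S L).trans (extNbhd_mono le_sup_left S)))
  have hcard := card_le_card hsub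
  rw [card_union_of_disjoint hdisj] at hcard
  have := le_card_sdiff (S \ L) leaves
  omega

end Cherries

/-! ### Product measures and random graphs -/

section ProductMeasure

open Function

variable {ι : Type*} [Fintype ι] {α : ι → Type*} [∀ i, MeasurableSpace (α i)]

theorem pi_real_pi_finset (μ : ∀ i, Measure (α i)) [∀ i, IsProbabilityMeasure (μ i)]
    (S : Finset ι) (s : ∀ i, Set (α i)) :
    (Measure.pi μ).real ((S : Set ι).pi s) = ∏ i ∈ S, (μ i).real (s i) := by
  simp only [measureReal_def, Measure.pi_pi_finset, ENNReal.toReal_prod]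

theorem measurePreserving_piecewise [DecidableEq ι] (μ : ∀ i, Measure (α i))
    [∀ i, IsProbabilityMeasure (μ i)] (T : Finset ι) :
    MeasurePreserving (fun x : (∀ i, α i) × (∀ i, α i) => T.piecewise x.2 x.1)
      ((Measure.pi μ).prod (Measure.pi μ)) (Measure.pi μ) := by
  have hmeas : Measurable fun x : (∀ i, α i) × (∀ i, α i) => T.piecewise x.2 x.1 := by
    refine measurable_pi_lambda _ fun i => ?_
    by_cases hi : i ∈ T <;> simp only [Finset.piecewise, hi, if_true, if_false] <;> fun_prop
  refine ⟨hmeas, (Measure.pi_eq fun s hs => ?_).symm⟩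
  have hpre : (fun x : (∀ i, α i) × (∀ i, α i) => T.piecewise x.2 x.1) ⁻¹' Set.univ.pi s =
      ((Tᶜ : Finset ι) : Set ι).pi s ×ˢ (T : Set ι).pi s := by
    ext x
    simp only [Set.mem_preimage, Set.mem_pi, Set.mem_prod, Set.mem_univ, true_imp_iff,
      Finset.mem_coe, Finset.mem_compl]
    refine ⟨fun h => ⟨fun i hi => by simpa [hi] using h i, fun i hi => by simpa [hi] using h i⟩,
      fun h i => ?_⟩
    by_cases hi : i ∈ T
    · simpa [hi] using h.2 i hi
    · simpa [hi] using h.1 i hi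
  rw [Measure.map_apply hmeas (.univ_pi hs), hpre, Measure.prod_prod, Measure.pi_pi_finset,
    Measure.pi_pi_finset, mul_comm, Finset.prod_mul_prod_compl]

theorem pi_real_le_of_forall_piecewise [DecidableEq ι] (μ : ∀ i, Measure (α i))
    [∀ i, IsProbabilityMeasure (μ i)] (T : Finset ι) {Q : Set (∀ i, α i)} (hQ : MeasurableSet Q)
    {β : ℝ} (h : ∀ f, (Measure.pi μ).real {g | T.piecewise g f ∈ Q} ≤ β) :
    (Measure.pi μ).real Q ≤ β := by
  have hpres := measurePreserving_piecewise μ T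
  obtain ⟨f₀⟩ := nonempty_of_isProbabilityMeasure (Measure.pi μ)
  have hβ : 0 ≤ β := measureReal_nonneg.trans (h f₀)
  refine ENNReal.toReal_le_of_le_ofReal hβ ?_
  rw [← hpres.measure_preimage hQ.nullMeasurableSet, Measure.prod_apply (hpres.measurable hQ)]
  calc _ ≤ ∫⁻ _, ENNReal.ofReal β ∂Measure.pi μ := lintegral_mono fun f =>
        (ENNReal.le_ofReal_iff_toReal_le (measure_ne_top _ _) hβ).2 (h f)
    _ = _ := by simp

theorem prod_real_le_add {Ω Ω' : Type*} [MeasurableSpace Ω] [MeasurableSpace Ω'] {μ : Measure Ω}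
    {ν : Measure Ω'} [IsProbabilityMeasure μ] [IsProbabilityMeasure ν] {Q : Set (Ω × Ω')}
    {S : Set Ω} (hQ : MeasurableSet Q) (hS : MeasurableSet S) {r : ℝ} (hr : 0 ≤ r)
    (h : ∀ x ∉ S, ν.real (Prod.mk x ⁻¹' Q) ≤ r) :
    (μ.prod ν).real Q ≤ μ.real S + r := by
  refine ENNReal.toReal_le_of_le_ofReal (by positivity) ?_
  rw [Measure.prod_apply hQ, ENNReal.ofReal_add measureReal_nonneg hr, ofReal_measureReal]
  calc ∫⁻ x, ν (Prod.mk x ⁻¹' Q) ∂μ ≤ ∫⁻ x, S.indicator 1 x + ENNReal.ofReal r ∂μ := by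
        refine lintegral_mono fun x => ?_
        by_cases hx : x ∈ S
        · simpa [hx] using prob_le_one.trans le_self_add
        · simpa [hx] using (ENNReal.le_ofReal_iff_toReal_le (measure_ne_top _ _) hr).2 (h x hx)
    _ = μ S + ENNReal.ofReal r := by
        rw [lintegral_add_right _ measurable_const, lintegral_indicator_one hS]
        simp

theorem pi_prod_real_le_add {Ω Ω' : Type*} [MeasurableSpace Ω] [MeasurableSpace Ω']
    {μ : ι → Measure Ω} {ν : ι → Measure Ω'} [∀ i, IsProbabilityMeasure (μ i)]
    [∀ i, IsProbabilityMeasure (ν i)] {Q : Set (ι → Ω × Ω')} {S : Set (ι → Ω)}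
    (hQ : MeasurableSet Q) (hS : MeasurableSet S) {r : ℝ} (hr : 0 ≤ r)
    (h : ∀ x ∉ S, (Measure.pi ν).real {y | (fun i => (x i, y i)) ∈ Q} ≤ r) :
    (Measure.pi fun i => (μ i).prod (ν i)).real Q ≤ (Measure.pi μ).real S + r := by
  have hpres := (measurePreserving_arrowProdEquivProdArrow Ω Ω' ι μ ν).symm
  rw [measureReal_def, ← hpres.measure_preimage hQ.nullMeasurableSet]
  exact prod_real_le_add (hpres.measurable hQ) hS hr h

theorem pi_eq_lmarginal_erase [DecidableEq ι] (μ : ∀ i, Measure (α i)) [∀ i, SigmaFinite (μ i)]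
    {Q : Set (∀ i, α i)} (hQ : MeasurableSet Q) (i : ι) (x : ∀ i, α i) :
    Measure.pi μ Q =
      lmarginal μ (Finset.univ.erase i) (fun f => μ i {a | update f i a ∈ Q}) x := by
  have hslice (f : ∀ i, α i) :
      ∫⁻ a, Q.indicator 1 (update f i a) ∂μ i = μ i {a | update f i a ∈ Q} :=
    lintegral_indicator_one (measurable_update f hQ)
  rw [← lintegral_indicator_one hQ, lintegral_eq_lmarginal_univ x,
    lmarginal_erase' _ (measurable_one.indicator hQ) (Finset.mem_univ i)]
  simp_rw [hslice]

theorem pi_le_pi_of_eq_of_ne [DecidableEq ι] {μ ν : ∀ i, Measure (α i)}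
    [∀ i, SigmaFinite (μ i)] [∀ i, SigmaFinite (ν i)] {Q : Set (∀ i, α i)} (hQ : MeasurableSet Q)
    {i : ι} (hne : ∀ j ≠ i, μ j = ν j)
    (hi : ∀ f, μ i {a | update f i a ∈ Q} ≤ ν i {a | update f i a ∈ Q}) :
    Measure.pi μ Q ≤ Measure.pi ν Q := by
  rcases Q.eq_empty_or_nonempty with rfl | ⟨x, -⟩
  · simp
  rw [pi_eq_lmarginal_erase μ hQ i x, pi_eq_lmarginal_erase ν hQ i x]
  have hfamily : (fun j : Finset.univ.erase i => μ j) = fun j : Finset.univ.erase i => ν j :=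
    funext fun j => hne j (Finset.ne_of_mem_erase j.2)
  rw [lmarginal, lmarginal, hfamily]
  exact lintegral_mono fun y => hi _

theorem pi_le_pi_of_forall_update [DecidableEq ι] (μ ν : ∀ i, Measure (α i))
    [∀ i, SigmaFinite (μ i)] [∀ i, SigmaFinite (ν i)] {Q : Set (∀ i, α i)} (hQ : MeasurableSet Q)
    (h : ∀ i f, μ i {a | update f i a ∈ Q} ≤ ν i {a | update f i a ∈ Q}) :
    Measure.pi μ Q ≤ Measure.pi ν Q := by
  have hσ (s : Finset ι) (i : ι) : SigmaFinite (s.piecewise ν μ i) := by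
    by_cases hi : i ∈ s <;> simp only [hi, Finset.piecewise_eq_of_mem,
      Finset.piecewise_eq_of_notMem, not_false_eq_true] <;> infer_instance
  suffices key : ∀ s : Finset ι, Measure.pi μ Q ≤ Measure.pi (s.piecewise ν μ) Q by
    simpa using key Finset.univ
  intro s
  induction s using Finset.induction_on with
  | empty => simp
  | insert i s his ih =>
    refine ih.trans (pi_le_pi_of_eq_of_ne hQ (i := i) (fun j hj => ?_) fun f => ?_)
    · simp [hj]
    · simpa [his] using h i f

end ProductMeasure

section EdgeMeasure

variable {p : ℝ}

theorem bernoulliM_singleton (p : ℝ) (b : Bool) :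
    bernoulliM p {b} = bif b then (min p.toNNReal 1 : ENNReal) else 1 - min p.toNNReal 1 := by
  rw [bernoulliM, PMF.toMeasure_apply_singleton _ b (MeasurableSet.singleton b)]
  cases b <;> rfl

theorem bernoulliM_real_true (h0 : 0 ≤ p) (h1 : p ≤ 1) : (bernoulliM p).real {true} = p := by
  simp [measureReal_def, bernoulliM_singleton, h0, h1]

theorem bernoulliM_real_false (h0 : 0 ≤ p) (h1 : p ≤ 1) :
    (bernoulliM p).real {false} = 1 - p := by
  have hcompl : ({true} : Set Bool)ᶜ = {false} := by ext b; simp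
  rw [← hcompl, probReal_compl_eq_one_sub (MeasurableSet.singleton _), bernoulliM_real_true h0 h1]

theorem bernoulliM_zero : bernoulliM 0 = Measure.dirac false := by
  refine Measure.ext_of_singleton fun b => ?_
  cases b <;> simp [bernoulliM_singleton]

variable {κ : ℕ}

instance isProbabilityMeasure_uniformOn_univ [NeZero κ] :
    IsProbabilityMeasure (uniformOn (Finset.univ : Finset (Fin κ))) := by
  rw [uniformOn, dif_pos Finset.univ_nonempty]
  infer_instance

theorem uniformOn_real [NeZero κ] (C : Finset (Fin κ)) :
    (uniformOn (Finset.univ : Finset (Fin κ))).real C = C.card / κ := by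
  rw [measureReal_def, uniformOn, dif_pos Finset.univ_nonempty,
    PMF.toMeasure_uniformOfFinset_apply _ _ C.measurableSet]
  simp

end EdgeMeasure

section RandomSet

open Finset

variable {ι : Type*} [Fintype ι] {q : ℝ}

theorem pi_bernoulliM_real_cylinder (h0 : 0 ≤ q) (h1 : q ≤ 1) {Δ B : Finset ι}
    (hΔB : Disjoint Δ B) :
    (Measure.pi fun _ : ι => bernoulliM q).real
      {h | (∀ e ∈ Δ, h e = true) ∧ ∀ e ∈ B, h e = false} = q ^ #Δ * (1 - q) ^ #B := by
  classical
  have hcyl : {h : ι → Bool | (∀ e ∈ Δ, h e = true) ∧ ∀ e ∈ B, h e = false} =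
      ((Δ ∪ B : Finset ι) : Set ι).pi fun e => {decide (e ∈ Δ)} := by
    ext h
    simp only [Set.mem_ofPred_eq, Set.mem_pi, mem_coe, mem_union, Set.mem_singleton_iff]
    have := Finset.disjoint_right.1 hΔB
    grind
  have htrue : ∏ e ∈ Δ, (bernoulliM q).real {decide (e ∈ Δ)} = q ^ #Δ :=
    prod_eq_pow_card fun e he => by rw [decide_eq_true he, bernoulliM_real_true h0 h1]
  have hfalse : ∏ e ∈ B, (bernoulliM q).real {decide (e ∈ Δ)} = (1 - q) ^ #B :=
    prod_eq_pow_card fun e he => by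
      rw [decide_eq_false (Finset.disjoint_right.1 hΔB he), bernoulliM_real_false h0 h1]
  rw [hcyl, pi_real_pi_finset, prod_union hΔB, htrue, hfalse]

theorem sum_pow_card_le_exp (ι : Type*) [Fintype ι] {x : ℝ} (hx : 0 ≤ x) :
    ∑ Δ : Finset ι, x ^ #Δ ≤ Real.exp (x * Fintype.card ι) :=
  calc ∑ Δ : Finset ι, x ^ #Δ = (x + 1) ^ Fintype.card ι := by
        simpa using (Fintype.sum_pow_mul_eq_add_pow ι x 1)
    _ ≤ Real.exp x ^ Fintype.card ι := by
        gcongr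
        exact Real.add_one_le_exp x
    _ = Real.exp (x * Fintype.card ι) := by rw [mul_comm, Real.exp_nat_mul]

/-- Union bound over small sets `Δ`, where `x ^ #Δ` is summable over all `Δ` and `D ^ N` is the
price of replacing `(D * x) ^ #Δ` by it. -/
theorem pi_bernoulliM_real_exists_le {D x : ℝ} (hD : 1 ≤ D) (hx : 0 ≤ x) (hDx : D * x ≤ 1)
    (N M : ℕ) (B : Finset ι → Finset ι) :
    (Measure.pi fun _ : ι => bernoulliM (D * x)).real
      {h | ∃ Δ : Finset ι, (#Δ ≤ N ∧ Disjoint Δ (B Δ) ∧ M ≤ #(B Δ)) ∧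
        (∀ e ∈ Δ, h e = true) ∧ ∀ e ∈ B Δ, h e = false} ≤
      D ^ N * Real.exp (x * Fintype.card ι) * (1 - D * x) ^ M := by
  classical
  have hq : 0 ≤ D * x := by positivity
  set I : Finset (Finset ι) := {Δ | #Δ ≤ N ∧ Disjoint Δ (B Δ) ∧ M ≤ #(B Δ)} with hI
  have hunion : {h : ι → Bool | ∃ Δ : Finset ι, (#Δ ≤ N ∧ Disjoint Δ (B Δ) ∧ M ≤ #(B Δ)) ∧
        (∀ e ∈ Δ, h e = true) ∧ ∀ e ∈ B Δ, h e = false} =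
      ⋃ Δ ∈ I, {h | (∀ e ∈ Δ, h e = true) ∧ ∀ e ∈ B Δ, h e = false} := by
    ext h
    simp only [hI, Set.mem_iUnion, mem_filter, mem_univ, true_and, exists_prop,
      Set.mem_ofPred_eq]
  have hterm : ∀ Δ ∈ I, (Measure.pi fun _ : ι => bernoulliM (D * x)).real
      {h | (∀ e ∈ Δ, h e = true) ∧ ∀ e ∈ B Δ, h e = false} ≤
      D ^ N * (1 - D * x) ^ M * x ^ #Δ := by
    intro Δ hΔ
    obtain ⟨hN, hdisj, hM⟩ := (mem_filter.1 hΔ).2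
    rw [pi_bernoulliM_real_cylinder hq hDx hdisj, mul_pow, mul_right_comm]
    have := pow_le_pow_right₀ hD hN
    have := pow_le_pow_of_le_one (sub_nonneg.2 hDx) (sub_le_self 1 hq) hM
    have := pow_nonneg (sub_nonneg.2 hDx) #(B Δ)
    gcongr
  calc _ ≤ ∑ Δ ∈ I, D ^ N * (1 - D * x) ^ M * x ^ #Δ :=
        (hunion ▸ measureReal_biUnion_finset_le _ _).trans (sum_le_sum hterm)
    _ ≤ ∑ Δ : Finset ι, D ^ N * (1 - D * x) ^ M * x ^ #Δ :=
        sum_le_univ_sum_of_nonneg fun Δ => by have := sub_nonneg.2 hDx; positivity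
    _ ≤ D ^ N * (1 - D * x) ^ M * Real.exp (x * Fintype.card ι) := by
        rw [← mul_sum]
        have := sub_nonneg.2 hDx
        gcongr
        exact sum_pow_card_le_exp ι hx
    _ = _ := mul_right_comm _ _ _

end RandomSet

section RandomGraph

open Finset SimpleGraph

/-- The graph whose edges are the pairs selected by `h`; diagonal pairs are ignored. -/
def selectedGraph {V : Type*} (h : Sym2 V → Bool) : SimpleGraph V := fromEdgeSet {e | h e = true}

variable {V : Type*}

theorem card_image_sym2_product [DecidableEq V] {A B : Finset V} (hAB : Disjoint A B) :
    #((A ×ˢ B).image fun z => s(z.1, z.2)) = #A * #B := by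
  rw [← card_product]
  refine card_image_of_injOn ?_
  rintro ⟨a, b⟩ hab ⟨a', b'⟩ hab' heq
  have := Finset.disjoint_left.1 hAB
  simp only [coe_product, Set.mem_prod, mem_coe] at hab hab'
  grind [Sym2.eq_iff]

theorem pi_bernoulliM_real_not_isJoined_le [Fintype V] {q : ℝ} (h0 : 0 ≤ q) (h1 : q ≤ 1) (m : ℕ) :
    (Measure.pi fun _ : Sym2 V => bernoulliM q).real {h | ¬IsJoined (selectedGraph h) m} ≤
      4 ^ Fintype.card V * (1 - q) ^ (m * m) := by
  classical
  set I : Finset (Finset V × Finset V) := {z | Disjoint z.1 z.2 ∧ m ≤ #z.1 ∧ m ≤ #z.2}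
  set cut : Finset V × Finset V → Finset (Sym2 V) :=
    fun z => (z.1 ×ˢ z.2).image fun x => s(x.1, x.2)
  have hsub : {h : Sym2 V → Bool | ¬IsJoined (selectedGraph h) m} ⊆
      ⋃ z ∈ I, {h | (∀ e ∈ (∅ : Finset (Sym2 V)), h e = true) ∧ ∀ e ∈ cut z, h e = false} := by
    intro h hh
    simp only [IsJoined, Set.mem_ofPred_eq, not_forall, not_exists, not_and] at hh
    obtain ⟨A, B, hAB, hA, hB, hno⟩ := hh
    simp only [Set.mem_iUnion]
    refine ⟨(A, B), mem_filter.2 ⟨mem_univ _, hAB, hA, hB⟩, by simp, fun e he => ?_⟩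
    obtain ⟨⟨a, b⟩, hab, rfl⟩ := mem_image.1 he
    obtain ⟨ha, hb⟩ := mem_product.1 hab
    have hne : a ≠ b := fun hab => Finset.disjoint_left.1 hAB ha (hab ▸ hb)
    simpa [selectedGraph, hne] using hno a ha b hb
  have hterm : ∀ z ∈ I, (Measure.pi fun _ : Sym2 V => bernoulliM q).real
      {h | (∀ e ∈ (∅ : Finset (Sym2 V)), h e = true) ∧ ∀ e ∈ cut z, h e = false} ≤
      (1 - q) ^ (m * m) := by
    intro z hz
    obtain ⟨hdisj, hA, hB⟩ := (mem_filter.1 hz).2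
    rw [pi_bernoulliM_real_cylinder h0 h1 (disjoint_empty_left _), card_empty, pow_zero, one_mul,
      card_image_sym2_product hdisj]
    exact pow_le_pow_of_le_one (sub_nonneg.2 h1) (sub_le_self 1 h0) (Nat.mul_le_mul hA hB)
  have hI : #I ≤ 4 ^ Fintype.card V := by
    refine (card_filter_le _ _).trans_eq ?_
    rw [card_univ, Fintype.card_prod, Fintype.card_finset, ← mul_pow]
    norm_num
  calc _ ≤ ∑ z ∈ I, (1 - q) ^ (m * m) := (measureReal_mono hsub (measure_ne_top _ _)).trans
        ((measureReal_biUnion_finset_le _ _).trans (sum_le_sum hterm))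
    _ ≤ 4 ^ Fintype.card V * (1 - q) ^ (m * m) := by
        rw [sum_const, nsmul_eq_mul]
        have := sub_nonneg.2 h1
        gcongr
        exact_mod_cast hI

end RandomGraph

/-! ### Rainbow cherries -/

section FreshPairs

open Finset

variable {κ : ℕ} {p : ℝ}

/-- The law of the state `(presence, color)` of a single pair: the pair is present with probability
`p` and, independently, carries a uniform color. Absent pairs have a color too. -/
noncomputable def coloredEdgeM (κ : ℕ) (p : ℝ) : Measure (Bool × Fin κ) :=
  (bernoulliM p).prod (uniformOn univ)

/-- The states of a pair that is present with a color outside `C`. -/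
def freshStates (C : Finset (Fin κ)) : Set (Bool × Fin κ) := {true} ×ˢ (Cᶜ : Finset (Fin κ))

theorem mem_freshStates {C : Finset (Fin κ)} {a : Bool × Fin κ} :
    a ∈ freshStates C ↔ a.1 = true ∧ a.2 ∉ C := by
  simp [freshStates]

theorem one_sub_mul_one_sub_div_mem_Icc {p : ℝ} (h0 : 0 ≤ p) (h1 : p ≤ 1) {K κ : ℕ} (hK : K ≤ κ) :
    1 - p * (1 - (K : ℝ) / κ) ∈ Set.Icc (0 : ℝ) 1 := by
  have hle : (K : ℝ) / κ ≤ 1 := div_le_one_of_le₀ (by exact_mod_cast hK) (by positivity)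
  have hge : (0 : ℝ) ≤ K / κ := by positivity
  constructor <;> nlinarith

variable [NeZero κ]

instance isProbabilityMeasure_coloredEdgeM : IsProbabilityMeasure (coloredEdgeM κ p) :=
  inferInstanceAs (IsProbabilityMeasure ((bernoulliM p).prod (uniformOn univ)))

theorem coloredEdgeM_real_true_prod (h0 : 0 ≤ p) (h1 : p ≤ 1) (C : Finset (Fin κ)) :
    (coloredEdgeM κ p).real ({true} ×ˢ C) = p * (#C / κ) := by
  rw [coloredEdgeM, measureReal_prod_prod, bernoulliM_real_true h0 h1, uniformOn_real]

theorem coloredEdgeM_real_compl_freshStates_le (h0 : 0 ≤ p) (h1 : p ≤ 1) {C : Finset (Fin κ)}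
    {K : ℕ} (hC : #C ≤ K) :
    (coloredEdgeM κ p).real (freshStates C)ᶜ ≤ 1 - p * (1 - K / κ) := by
  have hκ : (κ : ℝ) ≠ 0 := NeZero.ne _
  have hcompl : ((#Cᶜ : ℕ) : ℝ) / κ = 1 - #C / κ := by
    rw [card_compl, Fintype.card_fin, Nat.cast_sub (by simpa using card_le_univ C)]
    field_simp
  rw [probReal_compl_eq_one_sub .of_discrete, freshStates, coloredEdgeM_real_true_prod h0 h1,
    hcompl]
  gcongr

variable {ι : Type*} [Fintype ι]

theorem pi_coloredEdgeM_real_cylinder_le (h0 : 0 ≤ p) (h1 : p ≤ 1) {S : Finset ι} {i : ι}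
    (hi : i ∈ S) (c : Fin κ) {C : Finset (Fin κ)} {K : ℕ} (hC : #C < K) :
    (Measure.pi fun _ : ι => coloredEdgeM κ p).real
      {k | k i = (true, c) ∧ ∀ j ∈ S, j ≠ i → k j ∉ freshStates (insert c C)} ≤
      p / κ * (1 - p * (1 - K / κ)) ^ (#S - 1) := by
  classical
  have hcyl : {k : ι → Bool × Fin κ | k i = (true, c) ∧
        ∀ j ∈ S, j ≠ i → k j ∉ freshStates (insert c C)} =
      (S : Set ι).pi fun j =>
        if j = i then {true} ×ˢ ({c} : Finset (Fin κ)) else (freshStates (insert c C))ᶜ := by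
    ext k
    simp only [Set.mem_ofPred_eq, Set.mem_pi, mem_coe]
    refine ⟨fun h j hj => ?_, fun h => ⟨?_, fun j hj hji => ?_⟩⟩
    · split_ifs with hji
      · simp [hji, h.1]
      · exact h.2 j hj hji
    · simpa [Prod.ext_iff] using h i hi
    · simpa [hji] using h j hj
  rw [hcyl, pi_real_pi_finset, ← mul_prod_erase S _ hi, if_pos rfl,
    coloredEdgeM_real_true_prod h0 h1, card_singleton, Nat.cast_one, mul_one_div,
    ← card_erase_of_mem hi]
  gcongr
  refine (prod_le_prod (fun j _ => measureReal_nonneg) fun j hj => ?_).trans_eq (prod_const _)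
  rw [if_neg (ne_of_mem_erase hj)]
  exact coloredEdgeM_real_compl_freshStates_le h0 h1 ((card_insert_le _ _).trans hC)

theorem pi_coloredEdgeM_real_no_fresh_pair_le (h0 : 0 ≤ p) (h1 : p ≤ 1) (S : Finset ι)
    {C : Finset (Fin κ)} {K : ℕ} (hC : #C < K) (hK : K ≤ κ) :
    (Measure.pi fun _ : ι => coloredEdgeM κ p).real
      {k | ¬∃ i ∈ S, ∃ j ∈ S, k i ∈ freshStates C ∧ k j ∈ freshStates C ∧ (k i).2 ≠ (k j).2} ≤
      (1 + #S * p) * (1 - p * (1 - K / κ)) ^ (#S - 1) := by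
  have hρ := one_sub_mul_one_sub_div_mem_Icc h0 h1 hK
  set ρ : ℝ := 1 - p * (1 - K / κ)
  have hsub : {k : ι → Bool × Fin κ | ¬∃ i ∈ S, ∃ j ∈ S,
        k i ∈ freshStates C ∧ k j ∈ freshStates C ∧ (k i).2 ≠ (k j).2} ⊆
      (S : Set ι).pi (fun _ => (freshStates C)ᶜ) ∪ ⋃ z ∈ S ×ˢ (univ : Finset (Fin κ)),
        {k | k z.1 = (true, z.2) ∧ ∀ j ∈ S, j ≠ z.1 → k j ∉ freshStates (insert z.2 C)} := by
    intro k hk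
    rw [Set.mem_union, or_iff_not_imp_left]
    intro hsome
    obtain ⟨i, hi, hfresh⟩ : ∃ i ∈ S, k i ∈ freshStates C := by simpa [Set.mem_pi] using hsome
    simp only [Set.mem_iUnion]
    refine ⟨(i, (k i).2), by simp [hi], Prod.ext (mem_freshStates.1 hfresh).1 rfl,
      fun j hj _ hj' => hk ⟨i, hi, j, hj, hfresh, ?_⟩⟩
    simp only [mem_freshStates, mem_insert, not_or] at hj' ⊢
    exact ⟨⟨hj'.1, hj'.2.2⟩, Ne.symm hj'.2.1⟩
  have hnone : (Measure.pi fun _ : ι => coloredEdgeM κ p).real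
      ((S : Set ι).pi fun _ => (freshStates C)ᶜ) ≤ ρ ^ (#S - 1) := by
    rw [pi_real_pi_finset, prod_const]
    exact (pow_le_pow_left₀ measureReal_nonneg
      (coloredEdgeM_real_compl_freshStates_le h0 h1 hC.le) _).trans
      (pow_le_pow_of_le_one hρ.1 hρ.2 (Nat.sub_le _ _))
  calc _ ≤ ρ ^ (#S - 1) + ∑ _z ∈ S ×ˢ (univ : Finset (Fin κ)), p / κ * ρ ^ (#S - 1) :=
        (measureReal_mono hsub (measure_ne_top _ _)).trans <| (measureReal_union_le _ _).trans <|
          add_le_add hnone <| (measureReal_biUnion_finset_le _ _).trans <| sum_le_sum fun z hz =>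
            pi_coloredEdgeM_real_cylinder_le h0 h1 (mem_product.1 hz).1 z.2 hC
    _ = (1 + #S * p) * ρ ^ (#S - 1) := by
        have hκ : (κ : ℝ) ≠ 0 := NeZero.ne _
        rw [sum_const, card_product, card_univ, Fintype.card_fin, nsmul_eq_mul, Nat.cast_mul]
        field_simp

end FreshPairs

section RainbowCherries

open Finset Function

variable {V : Type*} {κ : ℕ}

/-- `y` attaches to every `b ∈ L` two present pairs `s(b, y b i)` with `y b i ∈ A`, such that all
the leaves `y b i` are distinct and all these pairs have distinct colors. -/
structure IsRainbowCherries (k : Sym2 V → Bool × Fin κ) (L A : Finset V) (y : V → Bool → V) :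
    Prop where
  mem : ∀ b ∈ L, ∀ i, y b i ∈ A
  present : ∀ b ∈ L, ∀ i, (k s(b, y b i)).1 = true
  injOn_leaf : Set.InjOn (fun z : V × Bool => y z.1 z.2) (L ×ˢ Set.univ)
  injOn_color : Set.InjOn (fun z : V × Bool => (k s(z.1, y z.1 z.2)).2) (L ×ˢ Set.univ)

variable {k k' : Sym2 V → Bool × Fin κ} {L A : Finset V} {y : V → Bool → V} {b : V}

theorem IsRainbowCherries.congr (hy : IsRainbowCherries k L A y)
    (h : ∀ b ∈ L, ∀ a ∈ A, k s(b, a) = k' s(b, a)) : IsRainbowCherries k' L A y where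
  mem := hy.mem
  present b hb i := h b hb _ (hy.mem b hb i) ▸ hy.present b hb i
  injOn_leaf := hy.injOn_leaf
  injOn_color := hy.injOn_color.congr fun z hz => by
    simp only [h z.1 hz.1 _ (hy.mem z.1 hz.1 z.2)]

section InsertVertex

variable [DecidableEq V]

theorem injOn_insert_prod {β : Type*} {g : V × Bool → β}
    (hL : Set.InjOn g (L ×ˢ Set.univ)) (hb : Injective fun i => g (b, i))
    (hne : ∀ b' ∈ L, ∀ i i', g (b, i) ≠ g (b', i')) :
    Set.InjOn g ((insert b L : Finset V) ×ˢ Set.univ) := by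
  rintro ⟨b₁, i₁⟩ h₁ ⟨b₂, i₂⟩ h₂ heq
  simp only [Set.mem_prod, mem_coe, mem_insert, Set.mem_univ, and_true] at h₁ h₂
  rcases h₁ with rfl | h₁ <;> rcases h₂ with rfl | h₂
  · rw [hb heq]
  · exact absurd heq (hne _ h₂ _ _)
  · exact absurd heq.symm (hne _ h₁ _ _)
  · exact hL ⟨h₁, trivial⟩ ⟨h₂, trivial⟩ heq

theorem IsRainbowCherries.insert_update (hy : IsRainbowCherries k L A y) (hb : b ∉ L)
    {U : Finset V} {C : Finset (Fin κ)} (hU : ∀ b' ∈ L, ∀ i, y b' i ∈ U)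
    (hC : ∀ b' ∈ L, ∀ i, (k s(b', y b' i)).2 ∈ C) {z : Bool → V} (hz : ∀ i, z i ∈ A \ U)
    (hfresh : ∀ i, k s(b, z i) ∈ freshStates C) (hinj : Injective fun i => (k s(b, z i)).2) :
    IsRainbowCherries k (insert b L) A (update y b z) := by
  have hold : ∀ b' ∈ L, update y b z b' = y b' := fun b' hb' =>
    update_of_ne (fun h : b' = b => hb (h ▸ hb')) _ _
  have hz i := mem_sdiff.1 (hz i)
  have hfresh i := mem_freshStates.1 (hfresh i)
  refine ⟨fun b' hb' i => ?_, fun b' hb' i => ?_, injOn_insert_prod ?_ ?_ ?_,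
    injOn_insert_prod ?_ ?_ ?_⟩
  · rcases mem_insert.1 hb' with rfl | hb'
    · simpa using (hz i).1
    · simpa [hold b' hb'] using hy.mem b' hb' i
  · rcases mem_insert.1 hb' with rfl | hb'
    · simpa using (hfresh i).1
    · simpa [hold b' hb'] using hy.present b' hb' i
  · exact hy.injOn_leaf.congr fun z hz => by simp only [hold z.1 hz.1]
  · exact fun i i' h => hinj (by simp_all)
  · intro b' hb' i i'
    simpa [hold b' hb'] using ne_of_mem_of_not_mem (hU b' hb' i') (hz i).2 |>.symm
  · exact hy.injOn_color.congr fun z hz => by simp only [hold z.1 hz.1]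
  · simpa using hinj
  · intro b' hb' i i'
    simpa [hold b' hb'] using ne_of_mem_of_not_mem (hC b' hb' i') (hfresh i).2 |>.symm

theorem piecewise_star_of_mem (hbA : b ∉ A) (hb : b ∉ L) (g f : Sym2 V → Bool × Fin κ) :
    ∀ b' ∈ L, ∀ a ∈ A, (A.image fun a => s(b, a)).piecewise g f s(b', a) = f s(b', a) := by
  refine fun b' hb' a ha => piecewise_eq_of_notMem _ _ _ fun hmem => ?_
  obtain ⟨a', -, heq⟩ := mem_image.1 hmem
  rcases Sym2.eq_iff.1 heq with ⟨rfl, -⟩ | ⟨rfl, -⟩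
  · exact hb hb'
  · exact hbA ha

theorem IsRainbowCherries.exists_insert_piecewise {f g : Sym2 V → Bool × Fin κ}
    (hy : IsRainbowCherries f L A y) (hb : b ∉ L) (hbA : b ∉ A) {U : Finset V}
    {C : Finset (Fin κ)} (hU : ∀ b' ∈ L, ∀ i, y b' i ∈ U)
    (hC : ∀ b' ∈ L, ∀ i, (f s(b', y b' i)).2 ∈ C)
    (hpair : ∃ i ∈ (A \ U).image fun a => s(b, a), ∃ j ∈ (A \ U).image fun a => s(b, a),
      g i ∈ freshStates C ∧ g j ∈ freshStates C ∧ (g i).2 ≠ (g j).2) :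
    ∃ y', IsRainbowCherries ((A.image fun a => s(b, a)).piecewise g f) (insert b L) A y' := by
  obtain ⟨i, hi, j, hj, hgi, hgj, hne⟩ := hpair
  obtain ⟨a, ha, rfl⟩ := mem_image.1 hi
  obtain ⟨a', ha', rfl⟩ := mem_image.1 hj
  have hrest := piecewise_star_of_mem hbA hb g f
  have hstar : ∀ a ∈ A \ U, (A.image fun a => s(b, a)).piecewise g f s(b, a) = g s(b, a) :=
    fun a ha => piecewise_eq_of_mem _ _ _ (mem_image_of_mem _ (mem_sdiff.1 ha).1)
  have hcongr := hy.congr fun b' hb' a ha => (hrest b' hb' a ha).symm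
  refine ⟨_, hcongr.insert_update hb hU (C := C) (fun b' hb' i => ?_)
    (z := fun i => bif i then a else a') ?_ ?_ ?_⟩
  · exact (hrest b' hb' _ (hy.mem b' hb' i)).symm ▸ hC b' hb' i
  · exact Bool.forall_bool.2 ⟨ha', ha⟩
  · exact Bool.forall_bool.2 ⟨(hstar a' ha').symm ▸ hgj, (hstar a ha).symm ▸ hgi⟩
  · rintro (_ | _) (_ | _) <;> simp [hstar a ha, hstar a' ha', hne, hne.symm]

/-- The old leaves and colors are fixed by the states outside the star at `b`, so only the star has
to provide two fresh pairs. -/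
theorem pi_coloredEdgeM_real_not_extend_le [Fintype V] [NeZero κ] {p : ℝ}
    (h0 : 0 ≤ p) (h1 : p ≤ 1) {f : Sym2 V → Bool × Fin κ} (hy : IsRainbowCherries f L A y)
    (hb : b ∉ L) (hbA : b ∉ A) {N K : ℕ} (hA : N + 2 * #L ≤ #A) (hLK : 2 * #L < K) (hK : K ≤ κ) :
    (Measure.pi fun _ : Sym2 V => coloredEdgeM κ p).real
      {g | ¬∃ y', IsRainbowCherries ((A.image fun a => s(b, a)).piecewise g f) (insert b L) A y'} ≤
      (1 + Fintype.card V * p) * (1 - p * (1 - K / κ)) ^ (N - 1) := by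
  set T := A.image fun a => s(b, a)
  set U := (L ×ˢ (univ : Finset Bool)).image fun z => y z.1 z.2
  set C := (L ×ˢ (univ : Finset Bool)).image fun z => (f s(z.1, y z.1 z.2)).2
  set S := (A \ U).image fun a => s(b, a)
  have hcard : #(L ×ˢ (univ : Finset Bool)) = 2 * #L := by simp [card_product, mul_comm]
  have hUL : #U ≤ 2 * #L := card_image_le.trans_eq hcard
  have hCL : #C ≤ 2 * #L := card_image_le.trans_eq hcard
  have hScard : #S = #(A \ U) := card_image_of_injective _ fun a a' h => Sym2.congr_right.1 h
  have hSN : N ≤ #S := by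
    have := le_card_sdiff U A
    omega
  have hused : ∀ b' ∈ L, ∀ i, (b', i) ∈ L ×ˢ (univ : Finset Bool) := fun b' hb' i => by simp [hb']
  have hSV : #S ≤ Fintype.card V := hScard ▸ card_le_univ _
  have hsub : {g : Sym2 V → Bool × Fin κ |
        ¬∃ y', IsRainbowCherries (T.piecewise g f) (insert b L) A y'} ⊆
      {g | ¬∃ i ∈ S, ∃ j ∈ S, g i ∈ freshStates C ∧ g j ∈ freshStates C ∧ (g i).2 ≠ (g j).2} := by
    exact fun g hg hpair => hg (hy.exists_insert_piecewise hb hbA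
      (fun b' hb' i => mem_image_of_mem (fun z => y z.1 z.2) (hused b' hb' i))
      (fun b' hb' i => mem_image_of_mem (fun z => (f s(z.1, y z.1 z.2)).2) (hused b' hb' i)) hpair)
  have hρ := one_sub_mul_one_sub_div_mem_Icc h0 h1 hK
  calc _ ≤ (1 + #S * p) * (1 - p * (1 - K / κ)) ^ (#S - 1) :=
        (measureReal_mono hsub (measure_ne_top _ _)).trans
          (pi_coloredEdgeM_real_no_fresh_pair_le h0 h1 S (hCL.trans_lt hLK) hK)
    _ ≤ _ := by
        have := hρ.1
        have := pow_le_pow_of_le_one hρ.1 hρ.2 (Nat.sub_le_sub_right hSN 1)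
        gcongr

end InsertVertex

theorem pi_coloredEdgeM_real_not_exists_isRainbowCherries_le [Fintype V] [NeZero κ]
    {p : ℝ} (h0 : 0 ≤ p) (h1 : p ≤ 1) (hLA : Disjoint L A) {N K : ℕ} (hA : N + 2 * #L ≤ #A)
    (hLK : 2 * #L ≤ K) (hK : K ≤ κ) :
    (Measure.pi fun _ : Sym2 V => coloredEdgeM κ p).real {k | ¬∃ y, IsRainbowCherries k L A y} ≤
      #L * ((1 + Fintype.card V * p) * (1 - p * (1 - K / κ)) ^ (N - 1)) := by
  classical
  have hρ := (one_sub_mul_one_sub_div_mem_Icc h0 h1 hK).1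
  induction L using Finset.induction_on with
  | empty =>
    have hempty : {k : Sym2 V → Bool × Fin κ | ¬∃ y, IsRainbowCherries k ∅ A y} = ∅ :=
      Set.eq_empty_of_forall_notMem fun k hk =>
        hk ⟨fun b _ => b, by simp, by simp, by simp, by simp⟩
    rw [hempty]
    simp
  | insert b L hb ih =>
    rw [card_insert_of_notMem hb] at hA hLK
    obtain ⟨hbA, hLA⟩ := disjoint_insert_left.1 hLA
    set Q : Set (Sym2 V → Bool × Fin κ) := {k | (∃ y, IsRainbowCherries k L A y) ∧
      ¬∃ y, IsRainbowCherries k (insert b L) A y}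
    have hsub : {k : Sym2 V → Bool × Fin κ | ¬∃ y, IsRainbowCherries k (insert b L) A y} ⊆
        {k | ¬∃ y, IsRainbowCherries k L A y} ∪ Q := fun k hk =>
      (em (∃ y, IsRainbowCherries k L A y)).elim (fun h => .inr ⟨h, hk⟩) .inl
    have hQ : (Measure.pi fun _ : Sym2 V => coloredEdgeM κ p).real Q ≤
        (1 + Fintype.card V * p) * (1 - p * (1 - K / κ)) ^ (N - 1) := by
      refine pi_real_le_of_forall_piecewise _ (A.image fun a => s(b, a)) .of_discrete fun f => ?_
      by_cases hf : ∃ y, IsRainbowCherries f L A y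
      · obtain ⟨y, hy⟩ := hf
        exact (measureReal_mono (fun g hg => hg.2) (measure_ne_top _ _)).trans
          (pi_coloredEdgeM_real_not_extend_le h0 h1 hy hb hbA (by omega) (by omega) hK)
      · have hempty : {g | (A.image fun a => s(b, a)).piecewise g f ∈ Q} = ∅ :=
          Set.eq_empty_of_forall_notMem fun g hg => hf <|
            hg.1.imp fun y hy => hy.congr (piecewise_star_of_mem hbA hb g f)
        rw [hempty, measureReal_empty]
        positivity
    rw [card_insert_of_notMem hb, Nat.cast_succ, add_one_mul]
    exact (measureReal_mono hsub (measure_ne_top _ _)).trans <| (measureReal_union_le _ _).trans <|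
      add_le_add (ih hLA (by omega) (by omega)) hQ

end RainbowCherries

/-! ### Exchanging free flags for edge probability -/

section FreeEdges

open Finset Function

/-- The state of an edge in the auxiliary model: a first free flag, its presence and color in the
colored graph, and a second free flag. -/
abbrev EdgeState (κ : ℕ) : Type := Bool × (Bool × Fin κ) × Bool

variable {p p' q : ℝ} {κ : ℕ}

/-- An edge with a free flag is present and exempt from the rainbow condition. -/
def IsFree (a : EdgeState κ) : Prop := a.1 = true ∨ a.2.2 = true

/-- The law of an `EdgeState`: each free flag has probability `q`, and the colored edge is present
with probability `p`. -/
noncomputable def flaggedEdgeM (κ : ℕ) (q p : ℝ) : Measure (EdgeState κ) :=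
  (bernoulliM q).prod ((coloredEdgeM κ p).prod (bernoulliM q))

instance isProbabilityMeasure_flaggedEdgeM [NeZero κ] :
    IsProbabilityMeasure (flaggedEdgeM κ q p) :=
  inferInstanceAs (IsProbabilityMeasure ((bernoulliM q).prod _))

theorem flaggedEdgeM_real_le [NeZero κ] (hq0 : 0 ≤ q) (hq1 : q ≤ 1) (hp0 : 0 ≤ p) (hp1 : p ≤ 1)
    {Q : Set (EdgeState κ)} (hQ : ∀ a ∈ Q, IsFree a ∨ a.2.1.1 = true) {C : Finset (Fin κ)}
    (hC : ∀ c, c ∈ C ↔ (false, (true, c), false) ∈ Q) :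
    (flaggedEdgeM κ q p).real Q ≤ q + (p * (#C / κ) + q) := by
  have hsub : Q ⊆ {true} ×ˢ Set.univ ∪
      (Set.univ ×ˢ ({true} ×ˢ (C : Set (Fin κ))) ×ˢ Set.univ ∪
        Set.univ ×ˢ Set.univ ×ˢ {true}) := by
    rintro ⟨_ | _, ⟨_ | _, c⟩, _ | _⟩ ha <;> simp_all [IsFree]
  refine (measureReal_mono hsub).trans <| (measureReal_union_le _ _).trans <|
    add_le_add ?_ <| (measureReal_union_le _ _).trans <| add_le_add ?_ ?_
  all_goals simp only [flaggedEdgeM, measureReal_prod_prod, bernoulliM_real_true hq0 hq1,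
    coloredEdgeM_real_true_prod hp0 hp1, probReal_univ, one_mul, mul_one, le_refl]

theorem flaggedEdgeM_zero [NeZero κ] (p : ℝ) :
    flaggedEdgeM κ 0 p = (coloredEdgeM κ p).map fun a => (false, a, false) := by
  rw [flaggedEdgeM, bernoulliM_zero, Measure.prod_dirac, Measure.dirac_prod,
    Measure.map_map (by fun_prop) (by fun_prop)]
  rfl

theorem le_flaggedEdgeM_zero_real [NeZero κ] (hp0 : 0 ≤ p) (hp1 : p ≤ 1)
    {Q : Set (EdgeState κ)} {C : Finset (Fin κ)} (hC : ∀ c ∈ C, (false, (true, c), false) ∈ Q) :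
    p * (#C / κ) ≤ (flaggedEdgeM κ 0 p).real Q := by
  rw [flaggedEdgeM_zero, map_measureReal_apply (by fun_prop) .of_discrete,
    ← coloredEdgeM_real_true_prod hp0 hp1]
  refine measureReal_mono ?_
  rintro ⟨b, c⟩ ⟨rfl, hc⟩
  exact hC c hc

/-- Giving up the two flags costs at most `2 * q`, and raising `p` to `p'` gains at least `p' - p`
times the proportion `t / κ` of admissible colors. -/
theorem flaggedEdgeM_le_flaggedEdgeM_zero [NeZero κ] (hq0 : 0 ≤ q) (hq1 : q ≤ 1) (hp0 : 0 ≤ p)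
    (hpp' : p ≤ p') (hp'1 : p' ≤ 1) {t : ℕ} (hqt : 2 * q ≤ (p' - p) * (t / κ))
    {Q : Set (EdgeState κ)} (hQ : ∀ a ∈ Q, IsFree a ∨ a.2.1.1 = true) {C : Finset (Fin κ)}
    (ht : t ≤ #C) (hC : ∀ c ∈ C, (false, (true, c), false) ∈ Q) :
    flaggedEdgeM κ q p Q ≤ flaggedEdgeM κ 0 p' Q := by
  classical
  set C' : Finset (Fin κ) := {c | (false, (true, c), false) ∈ Q} with hC'
  have htC' : (t : ℝ) ≤ #C' := by
    exact_mod_cast ht.trans (card_le_card fun c hc => mem_filter.2 ⟨mem_univ c, hC c hc⟩)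
  have hmem : ∀ c, c ∈ C' ↔ (false, (true, c), false) ∈ Q := by simp [hC']
  have hgain : (p' - p) * (t / κ) ≤ (p' - p) * (#C' / κ) := by
    have := sub_nonneg.2 hpp'
    gcongr
  refine (ENNReal.toReal_le_toReal (measure_ne_top _ _) (measure_ne_top _ _)).1 ?_
  calc (flaggedEdgeM κ q p).real Q ≤ q + (p * (#C' / κ) + q) :=
        flaggedEdgeM_real_le hq0 hq1 hp0 (hpp'.trans hp'1) hQ hmem
    _ ≤ p' * (#C' / κ) := by linarith
    _ ≤ (flaggedEdgeM κ 0 p').real Q :=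
        le_flaggedEdgeM_zero_real (hp0.trans hpp') hp'1 fun c => (hmem c).1

variable {ι : Type*}

/-- All edges of `F` are present or free, and the colors of its non-free edges are distinct. -/
structure IsRainbowModFree (f : ι → EdgeState κ) (F : Finset ι) : Prop where
  usable : ∀ e ∈ F, IsFree (f e) ∨ (f e).2.1.1 = true
  injOn : Set.InjOn (fun e => (f e).2.1.2) {e | e ∈ F ∧ ¬IsFree (f e)}

variable {f g : ι → EdgeState κ} {F : Finset ι}

theorem IsRainbowModFree.congr (hf : IsRainbowModFree f F) (h : ∀ e ∈ F, f e = g e) :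
    IsRainbowModFree g F where
  usable e he := h e he ▸ hf.usable e he
  injOn e₁ h₁ e₂ h₂ heq := hf.injOn ⟨h₁.1, (h e₁ h₁.1).symm ▸ h₁.2⟩
    ⟨h₂.1, (h e₂ h₂.1).symm ▸ h₂.2⟩ (by simpa only [h e₁ h₁.1, h e₂ h₂.1] using heq)

theorem IsRainbowModFree.update_of_color_notMem [DecidableEq ι] {e : ι} {a : EdgeState κ}
    (hf : IsRainbowModFree (update f e a) F) {c : Fin κ} (hc : c ∉ F.image fun e => (f e).2.1.2) :
    IsRainbowModFree (update f e (false, (true, c), false)) F where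
  usable e' he' := by
    by_cases h : e' = e
    · simp [h]
    · simpa [h] using hf.usable e' he'
  injOn := by
    have hne : ∀ e' ∈ F, (f e').2.1.2 ≠ c := fun e' he' h => hc (mem_image.2 ⟨e', he', h⟩)
    rintro e₁ ⟨h₁, hfree₁⟩ e₂ ⟨h₂, hfree₂⟩ heq
    by_cases he₁ : e₁ = e <;> by_cases he₂ : e₂ = e
    · rw [he₁, he₂]
    · exact absurd (by simpa [he₁, he₂] using heq.symm) (hne e₂ h₂)
    · exact absurd (by simpa [he₁, he₂] using heq) (hne e₁ h₁)
    · refine hf.injOn ⟨h₁, ?_⟩ ⟨h₂, ?_⟩ ?_ <;> simp_all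

variable [Fintype ι] [NeZero κ]

/-- Exchange of free flags for edge probability, one edge at a time: an edge state relevant for some
`F ∈ 𝓗` keeps at least `t` admissible colors, since the other edges of `F` use fewer than `#F`. -/
theorem pi_flaggedEdgeM_le_pi_flaggedEdgeM_zero (hq0 : 0 ≤ q) (hq1 : q ≤ 1) (hp0 : 0 ≤ p)
    (hpp' : p ≤ p') (hp'1 : p' ≤ 1) {t : ℕ} (hqt : 2 * q ≤ (p' - p) * (t / κ))
    {𝓗 : Set (Finset ι)} (h𝓗 : ∀ F ∈ 𝓗, #F + t ≤ κ) :
    Measure.pi (fun _ : ι => flaggedEdgeM κ q p) {f | ∃ F ∈ 𝓗, IsRainbowModFree f F} ≤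
      Measure.pi (fun _ : ι => flaggedEdgeM κ 0 p') {f | ∃ F ∈ 𝓗, IsRainbowModFree f F} := by
  classical
  refine pi_le_pi_of_forall_update _ _ .of_discrete fun e f => ?_
  set Q : Set (EdgeState κ) := {a | update f e a ∈ {f | ∃ F ∈ 𝓗, IsRainbowModFree f F}}
  by_cases hfixed : ∃ F ∈ 𝓗, e ∉ F ∧ IsRainbowModFree f F
  · obtain ⟨F, hF, heF, hf⟩ := hfixed
    have hQ : Q = Set.univ := Set.eq_univ_of_forall fun a => ⟨F, hF, hf.congr fun e' he' =>
      (update_of_ne (ne_of_mem_of_not_mem he' heF) _ _).symm⟩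
    simp [hQ]
  have hmem : ∀ a, ∀ F ∈ 𝓗, IsRainbowModFree (update f e a) F → e ∈ F := by
    intro a F hF hf
    by_contra heF
    exact hfixed ⟨F, hF, heF, hf.congr fun e' he' =>
      update_of_ne (ne_of_mem_of_not_mem he' heF) _ _⟩
  rcases Q.eq_empty_or_nonempty with hQ | ⟨a, F, hF, hf⟩
  · simp [hQ]
  refine flaggedEdgeM_le_flaggedEdgeM_zero hq0 hq1 hp0 hpp' hp'1 hqt (fun a ha => ?_)
    (C := (F.image fun e => (f e).2.1.2)ᶜ) ?_ fun c hc =>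
      ⟨F, hF, hf.update_of_color_notMem (mem_compl.1 hc)⟩
  · obtain ⟨F, hF, hf⟩ := ha
    simpa using hf.usable e (hmem a F hF hf)
  · have := h𝓗 F hF
    have := card_image_le (s := F) (f := fun e => (f e).2.1.2)
    rw [card_compl, Fintype.card_fin]
    omega

theorem pi_flaggedEdgeM_zero_apply (p : ℝ) (Q : Set (ι → EdgeState κ)) :
    Measure.pi (fun _ : ι => flaggedEdgeM κ 0 p) Q =
      Measure.pi (fun _ : ι => coloredEdgeM κ p) {k | (fun e => (false, k e, false)) ∈ Q} := by
  simp_rw [flaggedEdgeM_zero]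
  rw [← Measure.pi_map_pi (fun _ => by fun_prop),
    Measure.map_apply (by fun_prop) .of_discrete]
  rfl

end FreeEdges

/-! ### Hamilton cycles in the flagged model -/

section HamiltonCycles

open Finset SimpleGraph Function

variable {V : Type*} {n : ℕ}

/-- The edge sets of the Hamilton cycles of the complete graph on `V`, a cyclic order being a
bijection from `ZMod n`. -/
def hamCycleEdgeSets (n : ℕ) (V : Type*) : Set (Finset (Sym2 V)) :=
  {F | ∃ f : ZMod n → V, Bijective f ∧ (F : Set (Sym2 V)) = Set.range fun i => s(f i, f (i + 1))}

theorem card_le_of_mem_hamCycleEdgeSets [NeZero n] {F : Finset (Sym2 V)}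
    (hF : F ∈ hamCycleEdgeSets n V) : #F ≤ n := by
  classical
  obtain ⟨f, -, hF⟩ := hF
  have hF : F = univ.image fun i => s(f i, f (i + 1)) := by
    simpa [← coe_inj] using hF
  rw [hF]
  exact card_image_le.trans_eq (by simp [ZMod.card])

theorem injective_cycle_edge (hn : 3 ≤ n) {f : ZMod n → V} (hf : Injective f) :
    Injective fun i => s(f i, f (i + 1)) := by
  intro i j h
  rcases Sym2.eq_iff.1 h with ⟨hij, -⟩ | ⟨hij, hji⟩
  · exact hf hij
  · have htwo : ((2 : ℕ) : ZMod n) = 0 := by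
      have := hf hij ▸ hf hji
      push_cast
      linear_combination this
    have := Nat.le_of_dvd two_pos ((ZMod.natCast_eq_zero_iff _ _).1 htwo)
    omega

variable [Fintype V] [DecidableEq V] {G : SimpleGraph V}

theorem exists_bijective_adj_of_isHamiltonian [Nontrivial V] (hG : G.IsHamiltonian)
    (hV : Fintype.card V = n) :
    ∃ f : ZMod n → V, Bijective f ∧ ∀ i, G.Adj (f i) (f (i + 1)) := by
  obtain ⟨v⟩ := (inferInstance : Nonempty V)
  obtain ⟨p, hp⟩ := hG.exists_isHamiltonianCycle v
  have hlen : p.length = n := hp.length_eq.trans hV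
  have : NeZero n := ⟨hlen ▸ (hp.isCycle.three_le_length.trans_lt' (by norm_num)).ne'⟩
  have hclose (j : ℕ) (hj : j ≤ n) : p.getVert (j : ZMod n).val = p.getVert j := by
    rcases hj.lt_or_eq with hj | rfl
    · rw [ZMod.val_natCast_of_lt hj]
    · simp [← hlen]
  refine ⟨fun i => p.getVert i.val, (Fintype.bijective_iff_injective_and_card _).2 ⟨?_, ?_⟩, ?_⟩
  · intro i j hij
    have hi := i.val_lt
    have hj := j.val_lt
    exact ZMod.val_injective n (hp.isCycle.getVert_injOn' (by grind) (by grind) hij)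
  · rw [ZMod.card, hV]
  · intro i
    have hsucc := hclose (i.val + 1) i.val_lt
    rw [Nat.cast_succ, ZMod.natCast_rightInverse] at hsucc
    simp only [hsucc]
    exact p.adj_getVert_succ (hlen ▸ i.val_lt)

theorem exists_mem_hamCycleEdgeSets_of_isHamiltonian [Nontrivial V] (hG : G.IsHamiltonian)
    (hV : Fintype.card V = n) : ∃ F ∈ hamCycleEdgeSets n V, (F : Set (Sym2 V)) ⊆ G.edgeSet := by
  obtain ⟨f, hf, hadj⟩ := exists_bijective_adj_of_isHamiltonian hG hV
  have : NeZero n := ⟨hV ▸ Fintype.card_ne_zero⟩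
  refine ⟨univ.image fun i => s(f i, f (i + 1)), ⟨f, hf, by simp⟩, ?_⟩
  rw [coe_image, coe_univ, Set.image_univ]
  exact Set.range_subset_iff.2 hadj

end HamiltonCycles

section FreeModel

open Finset SimpleGraph Function

variable {V : Type*} {n κ m : ℕ}

theorem IsRainbowCherries.isRainbowModFree {k : Sym2 V → Bool × Fin κ} {L A : Finset V}
    {y : V → Bool → V} (hy : IsRainbowCherries k L A y) {h₁ h₂ : Sym2 V → Bool}
    {F : Finset (Sym2 V)} (hF : (F : Set (Sym2 V)) ⊆
      (selectedGraph h₁ ⊔ fromEdgeSet (cherries L y) ⊔ selectedGraph h₂).edgeSet) :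
    IsRainbowModFree (fun e => (h₁ e, k e, h₂ e)) F := by
  have hcherry : ∀ e ∈ F, ¬IsFree (κ := κ) (h₁ e, k e, h₂ e) → e ∈ cherries L y := by
    intro e he hfree
    have := hF he
    simp_all [selectedGraph, IsFree]
  constructor
  · refine fun e he => or_iff_not_imp_left.2 fun hfree => ?_
    obtain ⟨b, hb, i, rfl⟩ := hcherry e he hfree
    exact hy.present b hb i
  · rintro e ⟨he, hfree⟩ e' ⟨he', hfree'⟩ heq
    obtain ⟨b, hb, i, rfl⟩ := hcherry e he hfree
    obtain ⟨b', hb', i', rfl⟩ := hcherry e' he' hfree'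
    have := hy.injOn_color (x₁ := (b, i)) (x₂ := (b', i')) ⟨hb, trivial⟩ ⟨hb', trivial⟩ heq
    simp_all

theorem card_sym2_le_mul_self (V : Type*) [Fintype V] :
    Fintype.card (Sym2 V) ≤ Fintype.card V * Fintype.card V := by
  rw [← Fintype.card_prod]
  exact Fintype.card_le_of_surjective _ Sym2.mk_surjective

variable [Fintype V]

theorem isHamiltonian_sup_selectedGraph_of_boosters [DecidableEq V] [Nonempty V] {G : SimpleGraph V}
    {h : Sym2 V → Bool}
    (hboost : ∀ Δ : Finset (Sym2 V), #Δ ≤ Fintype.card V → (∀ e ∈ Δ, h e = true) →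
      ¬(G ⊔ fromEdgeSet (Δ : Set (Sym2 V))).IsHamiltonian →
      ∃ e, h e = true ∧ IsBooster (G ⊔ fromEdgeSet (Δ : Set (Sym2 V))) e) :
    (G ⊔ selectedGraph h).IsHamiltonian := by
  have := isHamiltonian_sup_fromEdgeSet_of_boosters (G := G) {e : Sym2 V | h e = true}.toFinset
    fun Δ hΔ hcard hHam => by
      obtain ⟨e, he, hbooster⟩ := hboost Δ hcard (fun e he => by simpa using hΔ he) hHam
      exact ⟨e, by simpa using he, hbooster⟩
  simpa [selectedGraph] using this

/-- If sprinkling fails, then for some set `Δ` of at most `n` sprinkled pairs all the boosters of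
`G ⊔ Δ` are missed; the bound is a union bound over `Δ`. -/
theorem pi_bernoulliM_real_not_isHamiltonian_le [DecidableEq V] [Nonempty V]
    {G : SimpleGraph V} (hexp : IsExpander G m) (hconn : G.Connected) {D : ℝ} (hD : 1 ≤ D)
    (hV : Fintype.card V = n) (hDn : D / n ≤ 1) :
    (Measure.pi fun _ : Sym2 V => bernoulliM (D / n)).real
      {h | ¬(G ⊔ selectedGraph h).IsHamiltonian} ≤
      D ^ n * Real.exp n * (1 - D / n) ^ (m * m / 2) := by
  have hboost : ∀ Δ : Finset (Sym2 V), ∃ B : Finset (Sym2 V),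
      ¬(G ⊔ fromEdgeSet (Δ : Set (Sym2 V))).IsHamiltonian →
        m * m ≤ 2 * #B ∧ ∀ e ∈ B, IsBooster (G ⊔ fromEdgeSet (Δ : Set (Sym2 V))) e := by
    intro Δ
    by_cases hHam : (G ⊔ fromEdgeSet (Δ : Set (Sym2 V))).IsHamiltonian
    · exact ⟨∅, fun h => absurd hHam h⟩
    · obtain ⟨B, hB⟩ := (hexp.mono le_sup_left).exists_boosters (hconn.mono le_sup_left) hHam
      exact ⟨B, fun _ => hB⟩
  choose B hB using hboost
  have hsub : {h : Sym2 V → Bool | ¬(G ⊔ selectedGraph h).IsHamiltonian} ⊆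
      {h | ∃ Δ : Finset (Sym2 V), (#Δ ≤ n ∧ Disjoint Δ (B Δ) ∧ m * m / 2 ≤ #(B Δ)) ∧
        (∀ e ∈ Δ, h e = true) ∧ ∀ e ∈ B Δ, h e = false} := by
    intro h hh
    by_contra hmissed
    refine hh (isHamiltonian_sup_selectedGraph_of_boosters fun Δ hcard hΔ hHam => ?_)
    obtain ⟨hBcard, hBoost⟩ := hB Δ hHam
    by_contra! hno
    refine hmissed ⟨Δ, ⟨hV ▸ hcard, ?_, by omega⟩, hΔ, fun e he => ?_⟩
    · exact Finset.disjoint_left.2 fun e he he' => hno e (hΔ e he) (hBoost e he')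
    · exact Bool.eq_false_of_not_eq_true fun hsel => hno e hsel (hBoost e he)
  have hcard : (Fintype.card (Sym2 V) : ℝ) ≤ n * n := by
    exact_mod_cast hV ▸ card_sym2_le_mul_self V
  have hn : (0 : ℝ) < n := by exact_mod_cast hV ▸ Fintype.card_pos
  have hexp_le : Real.exp (1 / n * Fintype.card (Sym2 V)) ≤ Real.exp n := by
    gcongr
    rw [one_div_mul_eq_div]
    exact div_le_of_le_mul₀ hn.le hn.le hcard
  have hunion := pi_bernoulliM_real_exists_le hD (x := 1 / n) (by positivity)
    (by rwa [mul_one_div]) n (m * m / 2) B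
  rw [mul_one_div] at hunion
  refine (measureReal_mono hsub (measure_ne_top _ _)).trans (hunion.trans ?_)
  have := sub_nonneg.2 hDn
  gcongr

theorem pi_prod_real_not_exists_isRainbowModFree_le [Nontrivial V] [NeZero κ]
    (hV : Fintype.card V = n) {D p : ℝ} (hD : 1 ≤ D) (hDn : D / n ≤ 1) (hp0 : 0 ≤ p) (hp1 : p ≤ 1)
    (hm : 12 * m ≤ n) (hnκ : n ≤ κ) {h₁ : Sym2 V → Bool} (hjoin : IsJoined (selectedGraph h₁) m) :
    (Measure.pi fun _ : Sym2 V => (coloredEdgeM κ p).prod (bernoulliM (D / n))).real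
      {g | ¬∃ F ∈ hamCycleEdgeSets n V, IsRainbowModFree (fun e => (h₁ e, g e)) F} ≤
      n * ((1 + n * p) * (1 - p * (1 - (2 * m : ℕ) / κ)) ^ (n - 12 * m - 1)) +
        D ^ n * Real.exp n * (1 - D / n) ^ (m * m / 2) := by
  classical
  have hρ := one_sub_mul_one_sub_div_mem_Icc hp0 hp1 (show 2 * m ≤ κ by omega)
  obtain ⟨R, -, hR⟩ := exists_subset_card_eq (s := (univ : Finset V)) (n := 9 * m)
    (by rw [card_univ]; omega)
  obtain ⟨L, hLm, hL⟩ := hjoin.exists_expandsOutside hR.ge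
  set A : Finset V := (R ∪ L)ᶜ with hA
  have hAcard : n - 12 * m + 2 * #L ≤ #A := by
    have := card_union_le R L
    rw [hA, card_compl]
    omega
  have hLA : Disjoint L A := disjoint_compl_right.mono_left subset_union_right
  have hcherries : (Measure.pi fun _ : Sym2 V => coloredEdgeM κ p).real
      {k | ¬∃ y, IsRainbowCherries k L A y} ≤
      n * ((1 + n * p) * (1 - p * (1 - (2 * m : ℕ) / κ)) ^ (n - 12 * m - 1)) := by
    refine (pi_coloredEdgeM_real_not_exists_isRainbowCherries_le hp0 hp1 hLA hAcard
      (Nat.mul_le_mul_left 2 hLm) (by omega)).trans ?_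
    have := hρ.1
    have : (#L : ℝ) ≤ n := by exact_mod_cast (by omega : #L ≤ n)
    rw [hV]
    gcongr
  refine (pi_prod_real_le_add .of_discrete .of_discrete ?_ fun k hk => ?_).trans
    (add_le_add_left hcherries _)
  · have := sub_nonneg.2 hDn
    positivity
  obtain ⟨y, hy⟩ := not_not.1 hk
  have hexp := hL.isExpander_sup_cherries (fun b hb i => mem_compl.1 (hy.mem b hb i)) hy.injOn_leaf
  have hsub : {h₂ | ¬∃ F ∈ hamCycleEdgeSets n V, IsRainbowModFree (fun e => (h₁ e, k e, h₂ e)) F} ⊆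
      {h₂ | ¬(selectedGraph h₁ ⊔ fromEdgeSet (cherries L y) ⊔ selectedGraph h₂).IsHamiltonian} := by
    intro h₂ hfail hHam
    obtain ⟨F, hF, hFE⟩ := exists_mem_hamCycleEdgeSets_of_isHamiltonian hHam hV
    exact hfail ⟨F, hF, hy.isRainbowModFree hFE⟩
  exact (measureReal_mono hsub (measure_ne_top _ _)).trans
    (pi_bernoulliM_real_not_isHamiltonian_le hexp (hexp.connected (hjoin.mono le_sup_left)) hD hV
      hDn)

theorem pi_flaggedEdgeM_real_not_exists_isRainbowModFree_le [Nontrivial V] [NeZero κ]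
    (hV : Fintype.card V = n) {D p : ℝ} (hD : 1 ≤ D) (hDn : D / n ≤ 1) (hp0 : 0 ≤ p) (hp1 : p ≤ 1)
    (hm : 12 * m ≤ n) (hnκ : n ≤ κ) :
    (Measure.pi fun _ : Sym2 V => flaggedEdgeM κ (D / n) p).real
      {f | ¬∃ F ∈ hamCycleEdgeSets n V, IsRainbowModFree f F} ≤
      4 ^ n * (1 - D / n) ^ (m * m) +
      (n * ((1 + n * p) * (1 - p * (1 - (2 * m : ℕ) / κ)) ^ (n - 12 * m - 1)) +
        D ^ n * Real.exp n * (1 - D / n) ^ (m * m / 2)) := by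
  have hρ := (one_sub_mul_one_sub_div_mem_Icc hp0 hp1 (show 2 * m ≤ κ by omega)).1
  have := sub_nonneg.2 hDn
  have hjoin := pi_bernoulliM_real_not_isJoined_le (V := V) (q := D / n) (by positivity) hDn m
  rw [hV] at hjoin
  exact (pi_prod_real_le_add .of_discrete .of_discrete (by positivity) fun h₁ hh₁ =>
    pi_prod_real_not_exists_isRainbowModFree_le hV hD hDn hp0 hp1 hm hnκ (not_not.1 hh₁)).trans
    (add_le_add_left hjoin _)

end FreeModel

section ColoredGnp

variable {n κ : ℕ}

theorem isRainbowHamCycle_of_isRainbowModFree (hn : 3 ≤ n) {ω : Sym2 (Fin n) → Bool}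
    {c : Sym2 (Fin n) → Fin κ} {F : Finset (Sym2 (Fin n))} (hF : F ∈ hamCycleEdgeSets n (Fin n))
    (h : IsRainbowModFree (fun e => (false, (ω e, c e), false)) F) : IsRainbowHamCycle ω c := by
  obtain ⟨f, hf, hFf⟩ := hF
  have hmem (i) : s(f i, f (i + 1)) ∈ F := by
    rw [← Finset.mem_coe, hFf]
    exact Set.mem_range_self i
  have hfree (a : Bool × Fin κ) : ¬IsFree (false, a, false) := by simp [IsFree]
  exact ⟨f, hf, fun i => (h.usable _ (hmem i)).resolve_left (hfree _), fun i j hij =>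
    injective_cycle_edge hn hf.1 (h.injOn ⟨hmem i, hfree _⟩ ⟨hmem j, hfree _⟩ hij)⟩

variable [NeZero κ]

theorem pi_flaggedEdgeM_zero_le_coloredGnp (hn : 3 ≤ n) (p : ℝ) :
    Measure.pi (fun _ => flaggedEdgeM κ 0 p)
        {f | ∃ F ∈ hamCycleEdgeSets n (Fin n), IsRainbowModFree f F} ≤
      coloredGnp n κ p {x | IsRainbowHamCycle x.1 x.2} := by
  rw [pi_flaggedEdgeM_zero_apply, coloredGnp, gnp, colorM,
    ← (measurePreserving_arrowProdEquivProdArrow Bool (Fin κ) (Sym2 (Fin n))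
      (fun _ => bernoulliM p) (fun _ => uniformOn Finset.univ)).measure_preimage
      (MeasurableSet.of_discrete).nullMeasurableSet]
  refine measure_mono ?_
  rintro k ⟨F, hF, hk⟩
  exact isRainbowHamCycle_of_isRainbowModFree hn hF hk

instance isProbabilityMeasure_coloredGnp (p : ℝ) : IsProbabilityMeasure (coloredGnp n κ p) := by
  unfold coloredGnp gnp colorM
  infer_instance

theorem one_sub_le_coloredGnp_real (hn : 3 ≤ n) {D p p' : ℝ} (hD : 1 ≤ D) (hDn : D / n ≤ 1)
    (hp0 : 0 ≤ p) (hpp' : p ≤ p') (hp'1 : p' ≤ 1) {m : ℕ} (hm : 12 * m ≤ n) (hnκ : n ≤ κ)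
    (hq : 2 * (D / n) ≤ (p' - p) * ((κ - n : ℕ) / κ)) :
    1 - (4 ^ n * (1 - D / n) ^ (m * m) +
      (n * ((1 + n * p) * (1 - p * (1 - (2 * m : ℕ) / κ)) ^ (n - 12 * m - 1)) +
        D ^ n * Real.exp n * (1 - D / n) ^ (m * m / 2))) ≤
      (coloredGnp n κ p').real {x | IsRainbowHamCycle x.1 x.2} := by
  have : NeZero n := ⟨by omega⟩
  have : Nontrivial (Fin n) := Fin.nontrivial_iff_two_le.2 (by omega)
  have hfail := pi_flaggedEdgeM_real_not_exists_isRainbowModFree_le (Fintype.card_fin n) hD hDn hp0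
    (hpp'.trans hp'1) hm hnκ
  have hcompare := pi_flaggedEdgeM_le_pi_flaggedEdgeM_zero (q := D / n) (by positivity) hDn hp0
    hpp' hp'1 hq (𝓗 := hamCycleEdgeSets n (Fin n)) fun F hF => by
      have := card_le_of_mem_hamCycleEdgeSets hF
      omega
  have hle := ENNReal.toReal_mono (measure_ne_top (coloredGnp n κ p') _)
    (hcompare.trans (pi_flaggedEdgeM_zero_le_coloredGnp hn p'))
  have hcompl := probReal_compl_eq_one_sub (μ := Measure.pi fun _ => flaggedEdgeM κ (D / n) p)
    (s := {f | ∃ F ∈ hamCycleEdgeSets n (Fin n), IsRainbowModFree f F}) .of_discrete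
  simp only [← measureReal_def, Set.compl_ofPred] at hle hcompl
  linarith

end ColoredGnp

/-! ### Asymptotics -/

section Asymptotics

open Real

-- Here `n = exp (exp l)` and `l = s ^ 2`, i.e. `l = log (log n)` and `s = √(log (log n))`.
variable {n m κ : ℕ} {l s : ℝ}

theorem one_sub_pow_le_exp_neg_mul {q : ℝ} (hq : q ≤ 1) (k : ℕ) :
    (1 - q) ^ k ≤ exp (-(q * k)) := by
  calc (1 - q) ^ k ≤ exp (-q) ^ k := pow_le_pow_left₀ (sub_nonneg.2 hq) (one_sub_le_exp_neg q) k
    _ = exp (-(q * k)) := by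
      rw [← exp_nat_mul]
      ring_nf

theorem pow_five_le_exp (hl : 100 ≤ l) : l ^ 5 ≤ exp l := by
  have hexp := pow_div_factorial_le_exp l (by positivity) 8
  have hcube : (100 : ℝ) ^ 3 ≤ l ^ 3 := by gcongr
  calc l ^ 5 = l ^ 5 * Nat.factorial 8 / Nat.factorial 8 := by field_simp
    _ ≤ l ^ 5 * l ^ 3 / Nat.factorial 8 := by
      gcongr
      norm_num [Nat.factorial] at hcube ⊢
      linarith
    _ ≤ exp l := by rwa [← pow_add]

theorem mul_le_exp_of_hundred_le (hl : 100 ≤ l) : 100 * l ≤ exp l := by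
  have hpow : (100 : ℝ) ^ 4 ≤ l ^ 4 := by gcongr
  calc 100 * l ≤ l ^ 4 * l := by gcongr; linarith
    _ = l ^ 5 := by ring
    _ ≤ exp l := pow_five_le_exp hl

/-- The number of missed boosters compensates both for the choice of `Δ` and for the `exp n` lost
in the union bound. -/
theorem mul_add_two_le_booster_exponent (hl : 100 ≤ l) (hn : (n : ℝ) = exp (exp l))
    (hm : n / l ≤ m) : n * (l + 2) ≤ exp l / l / n * (m * m / 2 : ℕ) := by
  have hn1 : 1 ≤ (n : ℝ) := hn ▸ one_le_exp (exp_pos l).le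
  have hhalf : ((m : ℝ) * m - 1) / 2 ≤ (m * m / 2 : ℕ) := by
    have : ((m * m : ℕ) : ℝ) ≤ (2 * (m * m / 2) + 1 : ℕ) := by exact_mod_cast (by omega)
    push_cast at this
    linarith
  have hgrowth : 2 * l + 5 ≤ exp l / l ^ 3 := by
    rw [le_div_iff₀ (by positivity)]
    calc (2 * l + 5) * l ^ 3 ≤ l ^ 2 * l ^ 3 := by gcongr; nlinarith
      _ = l ^ 5 := by ring
      _ ≤ exp l := pow_five_le_exp hl
  have hq1 : exp l / l / n ≤ 1 := by
    refine div_le_one_of_le₀ ?_ (by positivity)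
    calc exp l / l ≤ exp l := div_le_self (exp_pos l).le (by linarith)
      _ ≤ n := hn ▸ (le_add_of_nonneg_right zero_le_one).trans (add_one_le_exp _)
  calc n * (l + 2) ≤ (n * (exp l / l ^ 3) - 1) / 2 := by
        nlinarith [mul_le_mul_of_nonneg_left hgrowth (zero_le_one.trans hn1)]
    _ ≤ (n * (exp l / l ^ 3) - exp l / l / n) / 2 := by gcongr
    _ = exp l / l / n * ((n / l * (n / l) - 1) / 2) := by field_simp
    _ ≤ exp l / l / n * ((m * m - 1) / 2) := by gcongr
    _ ≤ exp l / l / n * (m * m / 2 : ℕ) := by gcongr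

theorem booster_bound_le_exp_neg (hl : 100 ≤ l) (hn : (n : ℝ) = exp (exp l)) (hm : n / l ≤ m)
    (hDn : exp l / l / n ≤ 1) :
    (exp l / l) ^ n * exp n * (1 - exp l / l / n) ^ (m * m / 2) ≤ exp (-n) := by
  have hD : exp l / l ≤ exp l := div_le_self (exp_pos l).le (by linarith)
  calc (exp l / l) ^ n * exp n * (1 - exp l / l / n) ^ (m * m / 2)
      ≤ exp l ^ n * exp n * exp (-(exp l / l / n * (m * m / 2 : ℕ))) := by
        gcongr
        exact one_sub_pow_le_exp_neg_mul hDn _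
    _ = exp (n * l + n - exp l / l / n * (m * m / 2 : ℕ)) := by
        rw [← exp_nat_mul, ← exp_add, ← exp_add, ← sub_eq_add_neg]
    _ ≤ exp (-n) := exp_le_exp.2 (by linarith [mul_add_two_le_booster_exponent hl hn hm])

theorem joined_bound_le_exp_neg (hl : 100 ≤ l) (hn : (n : ℝ) = exp (exp l)) (hm : n / l ≤ m)
    (hDn : exp l / l / n ≤ 1) :
    4 ^ n * (1 - exp l / l / n) ^ (m * m) ≤ exp (-n) := by
  have hD : 4 ≤ exp l / l := by
    rw [le_div_iff₀ (by positivity)]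
    linarith [mul_le_exp_of_hundred_le hl]
  refine le_trans ?_ (booster_bound_le_exp_neg hl hn hm hDn)
  have hq0 := sub_nonneg.2 hDn
  have hq1 : 1 - exp l / l / n ≤ 1 := sub_le_self _ (by positivity)
  have hpow : (1 - exp l / l / n) ^ (m * m) ≤ (1 - exp l / l / n) ^ (m * m / 2) :=
    pow_le_pow_of_le_one hq0 hq1 (Nat.div_le_self _ _)
  calc 4 ^ n * (1 - exp l / l / n) ^ (m * m)
      ≤ (exp l / l) ^ n * (1 - exp l / l / n) ^ (m * m / 2) := by gcongr
    _ ≤ (exp l / l) ^ n * exp n * (1 - exp l / l / n) ^ (m * m / 2) := by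
        gcongr
        exact le_mul_of_one_le_right (by positivity) (one_le_exp (by positivity))

theorem one_add_le_mul_one_sub_sq {u : ℝ} (hu0 : 0 ≤ u) (hu : u ≤ 1 / 10) :
    1 + u ≤ (1 + 50 * u) * ((1 - 3 * u ^ 2) * (1 - 13 * u ^ 2)) := by
  have hu2 : u ^ 2 ≤ (1 / 10) ^ 2 := by gcongr
  calc 1 + u ≤ (1 + 50 * u) * (1 - 16 * u ^ 2) := by
        nlinarith [mul_nonneg hu0 (by linarith : 0 ≤ 49 - 16 * u - 800 * u ^ 2)]
    _ ≤ (1 + 50 * u) * ((1 - 3 * u ^ 2) * (1 - 13 * u ^ 2)) := by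
        gcongr
        nlinarith [sq_nonneg (u ^ 2)]

theorem two_mul_div_le_three_div (hl : 0 < l) (hln : 2 * l ≤ n) (hm : m ≤ n / l + 1)
    (hnκ : n ≤ κ) : ((2 * m : ℕ) : ℝ) / κ ≤ 3 / l := by
  have hn0 : (0 : ℝ) < n := by linarith
  calc ((2 * m : ℕ) : ℝ) / κ ≤ (2 * m : ℕ) / n := by gcongr
    _ ≤ (2 * (n / l + 1)) / n := by push_cast; gcongr
    _ = 2 / l + 2 / n := by field_simp
    _ ≤ 2 / l + 2 / (2 * l) := by gcongr
    _ = 3 / l := by field_simp; norm_num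

theorem mul_one_sub_div_le_sub (hl : 0 < l) (hln : 13 * l ≤ n) (hm : m ≤ n / l + 1) :
    n * (1 - 13 / l) ≤ (n - 12 * m - 1 : ℕ) := by
  have hsub : (n : ℝ) ≤ (n - 12 * m - 1 : ℕ) + 12 * m + 1 := by exact_mod_cast (by omega)
  have hdiv : 13 ≤ n / l := (le_div_iff₀ hl).2 hln
  calc n * (1 - 13 / l) = n - 13 * (n / l) := by ring
    _ ≤ (n - 12 * m - 1 : ℕ) := by linarith

theorem add_two_mul_sq_le_cherry_exponent (hs : 10 ≤ s) (hn : (n : ℝ) = exp (exp (s ^ 2)))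
    (hm : m ≤ n / s ^ 2 + 1) (hnκ : n ≤ κ) :
    exp (s ^ 2) + 2 * s ^ 2 ≤
      (1 + 50 / s) * exp (s ^ 2) / n * (1 - (2 * m : ℕ) / κ) * (n - 12 * m - 1 : ℕ) := by
  have hl : 100 ≤ s ^ 2 := by nlinarith
  have hsn : 13 * s ^ 2 ≤ n := by
    rw [hn]
    linarith [mul_le_exp_of_hundred_le hl, add_one_le_exp (exp (s ^ 2))]
  have hn0 : (0 : ℝ) < n := by rw [hn]; positivity
  have hcolors := two_mul_div_le_three_div (by positivity) (by linarith) hm hnκ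
  have hvertices := mul_one_sub_div_le_sub (by positivity) hsn hm
  have hthirteen : 13 / s ^ 2 ≤ 13 / 100 := by gcongr
  have hthree : 3 / s ^ 2 ≤ 3 / 100 := by gcongr
  have hslack : 2 * s ^ 2 ≤ exp (s ^ 2) * (1 / s) := by
    rw [mul_one_div, le_div_iff₀ (by positivity)]
    calc 2 * s ^ 2 * s ≤ s ^ 7 * s ^ 2 * s := by
          gcongr
          exact le_trans (by norm_num) (pow_le_pow_left₀ (by norm_num) hs 7)
      _ = (s ^ 2) ^ 5 := by ring
      _ ≤ exp (s ^ 2) := pow_five_le_exp hl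
  calc exp (s ^ 2) + 2 * s ^ 2 ≤ exp (s ^ 2) * (1 + 1 / s) := by linarith
    _ ≤ exp (s ^ 2) *
        ((1 + 50 * (1 / s)) * ((1 - 3 * (1 / s) ^ 2) * (1 - 13 * (1 / s) ^ 2))) := by
      gcongr
      exact one_add_le_mul_one_sub_sq (by positivity)
        (one_div_le_one_div_of_le (by norm_num) hs)
    _ = (1 + 50 / s) * exp (s ^ 2) / n * (1 - 3 / s ^ 2) * (n * (1 - 13 / s ^ 2)) := by
      field_simp
    _ ≤ _ := by
      gcongr ?_ * (1 - ?_) * ?_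
      · exact mul_nonneg (by positivity) (by linarith)
      · exact mul_nonneg (by positivity) (by linarith)

theorem cherry_bound_le_div (hs : 10 ≤ s) (hn : (n : ℝ) = exp (exp (s ^ 2)))
    (hm : m ≤ n / s ^ 2 + 1) (hnκ : n ≤ κ) (hp : (1 + 50 / s) * exp (s ^ 2) / n ≤ 1) :
    n * ((1 + n * ((1 + 50 / s) * exp (s ^ 2) / n)) *
      (1 - (1 + 50 / s) * exp (s ^ 2) / n * (1 - (2 * m : ℕ) / κ)) ^ (n - 12 * m - 1)) ≤
      52 / exp (s ^ 2) := by
  have hn0 : (0 : ℝ) < n := by rw [hn]; positivity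
  have hρ1 : (1 + 50 / s) * exp (s ^ 2) / n * (1 - (2 * m : ℕ) / κ) ≤ 1 :=
    (mul_le_of_le_one_right (by positivity) (sub_le_self _ (by positivity))).trans hp
  have hpow := one_sub_pow_le_exp_neg_mul hρ1 (n - 12 * m - 1)
  have hdegree : 1 + n * ((1 + 50 / s) * exp (s ^ 2) / n) ≤ 52 * exp (s ^ 2) := by
    have hfifty : 50 / s ≤ 50 / 10 := by gcongr
    have hexp1 : 1 ≤ exp (s ^ 2) := one_le_exp (by positivity)
    rw [mul_div_cancel₀ _ hn0.ne']
    nlinarith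
  calc _ ≤ n * (52 * exp (s ^ 2) * exp (-(exp (s ^ 2) + 2 * s ^ 2))) := by
        gcongr
        refine hpow.trans (exp_le_exp.2 (neg_le_neg ?_))
        exact add_two_mul_sq_le_cherry_exponent hs hn hm hnκ
    _ = 52 / exp (s ^ 2) := by
        rw [exp_neg, exp_add, ← hn, two_mul, exp_add]
        field_simp

theorem div_two_le_ceil_sub_div {θ : ℝ} (hn : 0 < n) (hθ0 : 0 ≤ θ) (hθ1 : θ ≤ 1) :
    θ / 2 ≤ (⌈(1 + θ) * n⌉₊ - n : ℕ) / ⌈(1 + θ) * n⌉₊ := by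
  have hn' : (0 : ℝ) < n := by exact_mod_cast hn
  have hceil : (1 + θ) * n ≤ ⌈(1 + θ) * n⌉₊ := Nat.le_ceil _
  have hsub : (⌈(1 + θ) * n⌉₊ : ℝ) ≤ (⌈(1 + θ) * n⌉₊ - n : ℕ) + n := by exact_mod_cast (by omega)
  rw [div_le_div_iff₀ two_pos (hceil.trans_lt' (mul_pos (by linarith) hn'))]
  nlinarith

theorem two_mul_le_exchange_gain {ε θ x : ℝ} (hn : 0 < n) (hs : 0 < s) (hx : 0 ≤ x)
    (hε : 100 / s ≤ ε) (hθ : 100 / s ≤ θ) (hθ1 : θ ≤ 1) :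
    2 * (x / s ^ 2 / n) ≤ ((1 + ε) * x / n - (1 + 50 / s) * x / n) *
      ((⌈(1 + θ) * n⌉₊ - n : ℕ) / ⌈(1 + θ) * n⌉₊) := by
  have hθ0 : 0 ≤ θ := le_trans (by positivity) hθ
  have hfifty : 50 / s ≤ ε - 50 / s := by linarith [(by ring : 100 / s = 50 / s + 50 / s)]
  calc 2 * (x / s ^ 2 / n) ≤ 2500 * (x / s ^ 2 / n) := by gcongr; norm_num
    _ = 50 / s * x / n * (100 / s / 2) := by ring
    _ ≤ (ε - 50 / s) * x / n * (θ / 2) := by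
      have : 0 ≤ ε - 50 / s := le_trans (by positivity) hfifty
      gcongr
    _ = ((1 + ε) * x / n - (1 + 50 / s) * x / n) * (θ / 2) := by ring
    _ ≤ _ := by
      refine mul_le_mul_of_nonneg_left (div_two_le_ceil_sub_div hn hθ0 hθ1) (sub_nonneg.2 ?_)
      gcongr
      linarith [(by positivity : 0 ≤ 50 / s)]

theorem failure_bound_le_div (hs : 10 ≤ s) (hn : (n : ℝ) = exp (exp (s ^ 2)))
    (hm : n / s ^ 2 ≤ m) (hm' : m ≤ n / s ^ 2 + 1) (hnκ : n ≤ κ)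
    (hDn : exp (s ^ 2) / s ^ 2 / n ≤ 1) (hp : (1 + 50 / s) * exp (s ^ 2) / n ≤ 1) :
    4 ^ n * (1 - exp (s ^ 2) / s ^ 2 / n) ^ (m * m) +
      (n * ((1 + n * ((1 + 50 / s) * exp (s ^ 2) / n)) *
        (1 - (1 + 50 / s) * exp (s ^ 2) / n * (1 - (2 * m : ℕ) / κ)) ^ (n - 12 * m - 1)) +
      (exp (s ^ 2) / s ^ 2) ^ n * exp n * (1 - exp (s ^ 2) / s ^ 2 / n) ^ (m * m / 2)) ≤
      54 / exp (s ^ 2) := by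
  have hl : 100 ≤ s ^ 2 := by nlinarith
  have hexp_neg : exp (-n) ≤ 1 / exp (s ^ 2) := by
    rw [exp_neg, ← one_div]
    gcongr
    rw [hn]
    linarith [add_one_le_exp (s ^ 2), add_one_le_exp (exp (s ^ 2))]
  have hsum : 54 / exp (s ^ 2) = 1 / exp (s ^ 2) + (52 / exp (s ^ 2) + 1 / exp (s ^ 2)) := by ring
  linarith [joined_bound_le_exp_neg hl hn hm hDn, booster_bound_le_exp_neg hl hn hm hDn,
    cherry_bound_le_div hs hn hm' hnκ hp]

theorem le_ceil_one_add_mul {θ : ℝ} (hθ : 0 ≤ θ) : n ≤ ⌈(1 + θ) * n⌉₊ :=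
  Nat.cast_le.1 ((le_mul_of_one_le_left n.cast_nonneg (by linarith)).trans (Nat.le_ceil _))

theorem one_sub_div_exp_sq_le_coloredGnp_real (hs : 10 ≤ s) (hn : (n : ℝ) = exp (exp (s ^ 2)))
    {ε θ : ℝ} (hε : 100 / s ≤ ε) (hε1 : ε ≤ 1) (hθ : 100 / s ≤ θ) (hθ1 : θ ≤ 1) :
    1 - 54 / exp (s ^ 2) ≤ (coloredGnp n ⌈(1 + θ) * n⌉₊ ((1 + ε) * exp (s ^ 2) / n)).real
      {x | IsRainbowHamCycle x.1 x.2} := by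
  have hl : 100 ≤ s ^ 2 := by nlinarith
  have hexp : 100 * s ^ 2 ≤ exp (s ^ 2) := mul_le_exp_of_hundred_le hl
  have hxn : 100 * exp (s ^ 2) ≤ n := hn ▸ mul_le_exp_of_hundred_le (by linarith)
  have hn0 : (0 : ℝ) < n := by linarith
  have hn3 : 3 ≤ n := by exact_mod_cast (by linarith : (3 : ℝ) ≤ n)
  have hnκ : n ≤ ⌈(1 + θ) * n⌉₊ := le_ceil_one_add_mul (le_trans (by positivity) hθ)
  have : NeZero ⌈(1 + θ) * n⌉₊ := ⟨by omega⟩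
  have hD : 1 ≤ exp (s ^ 2) / s ^ 2 := by
    rw [one_le_div (by positivity)]
    linarith
  have hDn : exp (s ^ 2) / s ^ 2 / n ≤ 1 := by
    rw [div_div, div_le_one (by positivity)]
    nlinarith
  have hpp' : (1 + 50 / s) * exp (s ^ 2) / n ≤ (1 + ε) * exp (s ^ 2) / n := by
    gcongr
    exact le_trans (by gcongr; norm_num) hε
  have hp'1 : (1 + ε) * exp (s ^ 2) / n ≤ 1 := by
    rw [div_le_one hn0]
    nlinarith
  have hm : (n : ℝ) / s ^ 2 ≤ ⌈(n : ℝ) / s ^ 2⌉₊ := Nat.le_ceil _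
  have hm' : (⌈(n : ℝ) / s ^ 2⌉₊ : ℝ) ≤ n / s ^ 2 + 1 :=
    (Nat.ceil_lt_add_one (by positivity)).le
  have hm12 : 12 * ⌈(n : ℝ) / s ^ 2⌉₊ ≤ n := by
    have : (n : ℝ) / s ^ 2 ≤ n / 100 := by gcongr
    exact_mod_cast (by linarith : 12 * (⌈(n : ℝ) / s ^ 2⌉₊ : ℝ) ≤ n)
  have hgain := two_mul_le_exchange_gain (n := n) (by omega) (by positivity) (exp_pos (s ^ 2)).le
    hε hθ hθ1
  exact (sub_le_sub_left (failure_bound_le_div hs hn hm hm' hnκ hDn (hpp'.trans hp'1)) 1).trans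
    (one_sub_le_coloredGnp_real hn3 hD hDn (by positivity) hpp' hp'1 hm12 hnκ hgain)

theorem ofReal_one_sub_le_coloredGnp {ε θ : ℝ} (hn : 100 ≤ log (log n))
    (hε : 100 / √(log (log n)) ≤ ε) (hε1 : ε ≤ 1) (hθ : 100 / √(log (log n)) ≤ θ) (hθ1 : θ ≤ 1) :
    ENNReal.ofReal (1 - 54 / log n) ≤
      coloredGnp n ⌈(1 + θ) * n⌉₊ ((1 + ε) * log n / n) {x | IsRainbowHamCycle x.1 x.2} := by
  have hlog0 : 0 < log n := (log_natCast_nonneg n).lt_of_ne' fun h => by norm_num [h] at hn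
  have hn0 : (0 : ℝ) < n := n.cast_nonneg.lt_of_ne' fun h => by simp [h] at hlog0
  have hsq : exp (√(log (log n)) ^ 2) = log n := by
    rw [sq_sqrt (by linarith), exp_log hlog0]
  have hs : 10 ≤ √(log (log n)) := le_sqrt_of_sq_le (by linarith)
  have hbound := one_sub_div_exp_sq_le_coloredGnp_real hs (by rw [hsq, exp_log hn0]) hε hε1 hθ hθ1
  rw [hsq] at hbound
  exact ENNReal.ofReal_le_of_le_toReal hbound

end Asymptotics

end RainbowHam

/-- If `100/√(log log n) < ε, θ ≤ 1`, `p = (1+ε)·log n / n` and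
`κ = ⌈(1+θ)n⌉`, then `G_{n,p,κ}` contains a rainbow Hamilton cycle whp. -/
theorem rainbow_ham_first_order (ε θ : ℕ → ℝ)
    (hε : ∀ᶠ n : ℕ in atTop,
      100 / Real.sqrt (Real.log (Real.log n)) < ε n ∧ ε n ≤ 1)
    (hθ : ∀ᶠ n : ℕ in atTop,
      100 / Real.sqrt (Real.log (Real.log n)) < θ n ∧ θ n ≤ 1) :
    Tendsto
      (fun n : ℕ =>
        coloredGnp n ⌈(1 + θ n) * n⌉₊ ((1 + ε n) * Real.log n / n)
          {x | IsRainbowHamCycle x.1 x.2})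
      atTop (nhds 1) := by
  have hlog : Tendsto (fun n : ℕ => Real.log n) atTop atTop :=
    Real.tendsto_log_atTop.comp tendsto_natCast_atTop_atTop
  have hloglog := Real.tendsto_log_atTop.comp hlog
  have hlim : Tendsto (fun n : ℕ => ENNReal.ofReal (1 - 54 / Real.log n)) atTop (nhds 1) := by
    simpa using ENNReal.tendsto_ofReal ((hlog.const_div_atTop 54).const_sub 1)
  refine tendsto_of_tendsto_of_tendsto_of_le_of_le' hlim tendsto_const_nhds ?lower ?upper
  case lower =>
    filter_upwards [hε, hθ, hloglog.eventually_ge_atTop 100] with n hε hθ hn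
    exact RainbowHam.ofReal_one_sub_le_coloredGnp hn hε.1.le hε.2 hθ.1.le hθ.2
  case upper =>
    filter_upwards [hθ, eventually_gt_atTop 0] with n hθ hn
    have hκ := RainbowHam.le_ceil_one_add_mul (n := n) (le_trans (by positivity) hθ.1.le)
    have : NeZero ⌈(1 + θ n) * n⌉₊ := ⟨by omega⟩
    exact prob_le_one
end
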